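/- arXiv:1312.0843 — 4 statements merged into one kernel-verified Lean document; each statement's English description precedes it below -/
import Mathlib

section
/- Let σ and w be Radon measures on ℝ with finite Muckenhoupt–Poisson constants [σ,w]_{A₂}* and [w,σ]_{A₂}*, and suppose sup_{ε>0} |B_ε(1_I, 1_I)| < ∞ for every finite interval I. Then there exists a bilinear form B : 𝓕 × 𝓕 → ℝ such that B(f,g) = ∬ (x−y)⁻¹ f(y) g(x) dσ(y) dw(x) for all disjointly supported f, g ∈ 𝓕. If, in addition, there is a constant C such that sup_{ε>0} ‖1_I H_ε(1_I dσ)‖_{L²(w)} ≤ C σ(I)^{1/2} and sup_{ε>0} ‖1_I H_ε(1_I dw)‖_{L²(σ)} ≤ C w(I)^{1/2} for all finite intervals I, then B satisfies the local testing conditions |B(1_I, 1_I g)| ≤ C σ(I)^{1/2} ‖g‖_{L²(w)} and |B(1_I f, 1_I)| ≤ C ‖f‖_{L²(σ)} w(I)^{1/2} for all f, g ∈ 𝓕 and all finite intervals I. -/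
/-!
The form `B` is the limit of the truncated pairings `B_ε` along an ultrafilter refining `ε → 0⁺`.
Each `B_ε` is bilinear, so `B` is bilinear as soon as `B_ε(f,g)` is bounded in `ε` for all
`f, g ∈ 𝓕`, and every bound uniform in `ε` passes to `B`.

*Separated supports.* If `f` lives to the left of `b` and `g` to the right, the untruncated double
integral converges absolutely (`lintegral_kernel_lt_top`); dominated convergence then gives both
the bound on `B_ε(f,g)` and the identity `B(f,g) = ∬ (x-y)⁻¹ f(y) g(x) dσ(y) dw(x)`. For the
absolute convergence, fix `y < b` and put `S(y) = σ([y,b))`. The `A₂` condition on `[y,b)` gives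
`S(y) ∫_{x ≥ b} (x-y)⁻² dw(x) ≤ A²`, whence `∫_{[b,c]} (x-y)⁻¹ dw(x) = O(S(y)^{-1/2})`
by the arithmetic-geometric mean inequality (`lintegral_kernel_le`). Moreover
`∫_{[a,b)} S^{-1/2} dσ` is finite because `σ{S < u} ≤ u`
(`measure_small_tail_le`, `lintegral_tail_rpow_lt_top`). An atom of `σ` at `b` is handled by the
`A₂` condition on `{b}`.

*General pairs in `𝓕`.* By `1_[a,b) = 1_[n,b) - 1_[n,a)` it suffices to pair intervals with a common
left endpoint. Such a pair splits into a diagonal pair, bounded by hypothesis, and a pair of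
adjacent intervals (`unifBdd_of_InF`).

*Testing.* `B_ε(1_I, 1_I g) = ∫ 1_I H_ε(1_I dσ) g dw` is bounded by Cauchy–Schwarz, and the dual
condition follows from the antisymmetry `B_ε^{σ,w}(f,g) = -B_ε^{w,σ}(g,f)`, i.e. Fubini.
-/

open MeasureTheory Set
open scoped ENNReal

noncomputable section

/-- `𝓕`: finite linear combinations of indicator functions of finite half-open intervals. -/
def InF (f : ℝ → ℝ) : Prop :=
  f ∈ Submodule.span ℝ {g : ℝ → ℝ | ∃ a b : ℝ, g = (Set.Ico a b).indicator 1}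

/-- The `L²(μ)` norm of a function. -/
def l2norm (μ : Measure ℝ) (f : ℝ → ℝ) : ℝ :=
  Real.sqrt (∫ x, f x ^ 2 ∂μ)

/-- The iterated-integral Hilbert pairing `∬ f(y) g(x) (x-y)⁻¹ dσ(y) dw(x)`. -/
def hilbertPairing (σ w : Measure ℝ) (f g : ℝ → ℝ) : ℝ :=
  ∫ x, (∫ y, f y * (x - y)⁻¹ ∂σ) * g x ∂w

/-- `f` and `g` are supported on disjoint intervals. -/
def DisjointlySupported (f g : ℝ → ℝ) : Prop :=
  ∃ I J : Set ℝ, I.OrdConnected ∧ J.OrdConnected ∧ Disjoint I J ∧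
    Function.support f ⊆ I ∧ Function.support g ⊆ J

/-- `B` is bilinear on `𝓕`. -/
def BilinearOnF (B : (ℝ → ℝ) → (ℝ → ℝ) → ℝ) : Prop :=
  (∀ f f' g, InF f → InF f' → InF g → B (f + f') g = B f g + B f' g) ∧
  (∀ (c : ℝ) (f g : ℝ → ℝ), InF f → InF g → B (c • f) g = c * B f g) ∧
  (∀ f g g', InF f → InF g → InF g' → B f (g + g') = B f g + B f g') ∧
  (∀ (c : ℝ) (f g : ℝ → ℝ), InF f → InF g → B f (c • g) = c * B f g)

/-- Local (Sawyer-type) testing conditions with constants `H`, `H'`. -/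
def LocalTesting (σ w : Measure ℝ) (B : (ℝ → ℝ) → (ℝ → ℝ) → ℝ) (H H' : ℝ) : Prop :=
  (∀ (a b : ℝ) (g : ℝ → ℝ), a < b → InF g →
    |B ((Set.Ico a b).indicator 1) ((Set.Ico a b).indicator g)| ≤
      H * Real.sqrt (σ (Set.Ico a b)).toReal * l2norm w g) ∧
  (∀ (a b : ℝ) (f : ℝ → ℝ), a < b → InF f →
    |B ((Set.Ico a b).indicator f) ((Set.Ico a b).indicator 1)| ≤
      H' * l2norm σ f * Real.sqrt (w (Set.Ico a b)).toReal)

/-- The truncated Hilbert pairing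
`B_ε(f,g) = ∬_{|x-y|>ε} (x-y)⁻¹ f(y) g(x) dσ(y) dw(x)`. -/
def truncPairing (σ w : Measure ℝ) (f g : ℝ → ℝ) (ε : ℝ) : ℝ :=
  ∫ x, (∫ y, (if ε < |x - y| then (x - y)⁻¹ * f y else 0) ∂σ) * g x ∂w

/-- The truncated Hilbert transform `H_ε(f dμ)(x) = ∫_{|x-y|>ε} (x-y)⁻¹ f(y) dμ(y)`. -/
def truncHilbert (μ : Measure ℝ) (f : ℝ → ℝ) (ε : ℝ) (x : ℝ) : ℝ :=
  ∫ y, (if ε < |x - y| then (x - y)⁻¹ * f y else 0) ∂μ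

/-- The Muckenhoupt–Poisson `A₂` condition `[σ,w]_{A₂}* ≤ A`: for every finite interval `I`
with center `c_I`, `σ(I) ∫_{Iᶜ} (x - c_I)⁻² dw(x) ≤ A²`. -/
def A2star (σ w : Measure ℝ) (A : ℝ) : Prop :=
  ∀ I : Set ℝ, I.OrdConnected → Bornology.IsBounded I →
    σ I * ∫⁻ x in Iᶜ, ENNReal.ofReal (((x - (sInf I + sSup I) / 2) ^ 2)⁻¹) ∂w ≤
      ENNReal.ofReal (A ^ 2)

/-! ### Integrability of the Hilbert kernel across a point -/

/-- The mass of `σ` on the points of `[a,b)` that see little `σ`-mass between themselves and `b`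
is itself little. These points form an interval ending at `b`; inner regularity replaces it by a
compact set, whose least element bounds the mass. -/
lemma measure_small_tail_le (σ : Measure ℝ) [IsLocallyFiniteMeasure σ] (a b : ℝ) (u : ℝ≥0∞) :
    σ ({y | σ (Ico y b) < u} ∩ Ico a b) ≤ u := by
  have hmeas : Measurable fun y => σ (Ico y b) :=
    Antitone.measurable fun _ _ h => measure_mono (Ico_subset_Ico_left h)
  by_contra! hlt
  obtain ⟨K, hKE, hK, huK⟩ :=
    ((measurableSet_lt hmeas measurable_const).inter measurableSet_Ico).exists_lt_isCompact hlt
  have hne : K.Nonempty := by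
    rw [nonempty_iff_ne_empty]
    rintro rfl
    simp at huK
  obtain ⟨y, hyK, hy⟩ := hK.exists_isLeast hne
  have : σ K ≤ σ (Ico y b) := measure_mono fun z hz => ⟨hy hz, (hKE hz).2.2⟩
  exact absurd (huK.trans_le this) (not_lt.2 (hKE hyK).1.le)

/-- `∫_{[a,b)} σ([y,b))^{-1/2} dσ(y) < ∞`, by summing over the dyadic level sets of the
integrand. -/
lemma lintegral_tail_rpow_lt_top (σ : Measure ℝ) [IsLocallyFiniteMeasure σ] (a b : ℝ) :
    ∫⁻ y in Ico a b, ((σ (Ico y b)) ^ (1 / 2 : ℝ))⁻¹ ∂σ < ∞ := by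
  have hmeas : Measurable fun y => σ (Ico y b) :=
    Antitone.measurable fun _ _ h => measure_mono (Ico_subset_Ico_left h)
  set E : ℕ → Set ℝ := fun n => {y | σ (Ico y b) < ((2⁻¹ : ℝ≥0∞) ^ n) ^ 2} with hE
  have hEm : ∀ n, MeasurableSet (E n) := fun n => measurableSet_lt hmeas measurable_const
  have hpt : ∀ y, ((σ (Ico y b)) ^ (1 / 2 : ℝ))⁻¹ ≤
      1 + ∑' n, (E n).indicator (fun _ => (2 : ℝ≥0∞) ^ (n + 1)) y := by
    intro y
    set S := σ (Ico y b) with hS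
    have hsq : (S ^ (1 / 2 : ℝ)) ^ 2 = S := by
      rw [← ENNReal.rpow_natCast, ← ENNReal.rpow_mul]; norm_num
    by_cases hex : ∃ n : ℕ, ((2⁻¹ : ℝ≥0∞) ^ n) ^ 2 ≤ S
    · classical
      have hN := Nat.find_spec hex
      have hmin := fun m => @Nat.find_min _ _ hex m
      set N := Nat.find hex
      have hq : (S ^ (1 / 2 : ℝ))⁻¹ ≤ 2 ^ N := by
        rw [ENNReal.inv_le_iff_inv_le, ENNReal.inv_pow]
        rw [← hsq] at hN
        exact (ENNReal.pow_le_pow_left_iff two_ne_zero).1 hN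
      rcases Nat.eq_zero_or_pos N with h0 | hpos
      · rw [h0, pow_zero] at hq
        exact hq.trans le_self_add
      · have hmem : y ∈ E (N - 1) := not_le.1 (hmin (N - 1) (by omega))
        refine hq.trans (le_trans ?_ le_add_self)
        refine le_trans ?_ (ENNReal.le_tsum (N - 1))
        rw [indicator_of_mem hmem, Nat.sub_add_cancel hpos]
    · push Not at hex
      have : ∑' n, (E n).indicator (fun _ => (2 : ℝ≥0∞) ^ (n + 1)) y = ∞ := by
        rw [eq_top_iff, ← ENNReal.tsum_const_eq_top_of_ne_zero (α := ℕ) (c := 1) one_ne_zero]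
        refine ENNReal.tsum_le_tsum fun n => ?_
        rw [indicator_of_mem (show y ∈ E n from hex n)]
        exact one_le_pow₀ (by norm_num)
      simp [this]
  calc ∫⁻ y in Ico a b, ((σ (Ico y b)) ^ (1 / 2 : ℝ))⁻¹ ∂σ
      ≤ ∫⁻ y in Ico a b, (1 + ∑' n, (E n).indicator (fun _ => (2 : ℝ≥0∞) ^ (n + 1)) y) ∂σ :=
        lintegral_mono hpt
    _ = σ (Ico a b) + ∑' n, 2 ^ (n + 1) * σ (E n ∩ Ico a b) := by
        rw [lintegral_add_left measurable_const, lintegral_tsum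
          fun n => (measurable_const.indicator (hEm n)).aemeasurable]
        simp [lintegral_indicator, hEm, Measure.restrict_apply]
    _ ≤ σ (Ico a b) + ∑' n, 2 * (2⁻¹ : ℝ≥0∞) ^ n := by
        refine add_le_add le_rfl (ENNReal.tsum_le_tsum fun n => ?_)
        calc (2 : ℝ≥0∞) ^ (n + 1) * σ (E n ∩ Ico a b)
            ≤ 2 ^ (n + 1) * ((2⁻¹ : ℝ≥0∞) ^ n) ^ 2 := by
              gcongr
              exact measure_small_tail_le σ a b _
          _ = 2 * (2 ^ n * 2⁻¹ ^ n) * (2⁻¹ : ℝ≥0∞) ^ n := by ring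
          _ = 2 * (2⁻¹ : ℝ≥0∞) ^ n := by
              rw [← mul_pow, ENNReal.mul_inv_cancel (by simp) (by simp)]; simp
    _ < ∞ := by
        rw [ENNReal.tsum_mul_left, ENNReal.tsum_geometric, ENNReal.one_sub_inv_two, inv_inv]
        exact ENNReal.add_lt_top.2 ⟨measure_Ico_lt_top, ENNReal.mul_lt_top (by simp) (by simp)⟩

/-- For `y < b`, the `w`-integral of the Hilbert kernel over `[b,c]` is `O(σ([y,b))^{-1/2})`:
with `p = σ([y,b))^{-1/2}` one has `u ≤ p + p⁻¹u²` for `u = |x-y|⁻¹`, and the `A₂` condition on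
`[y,b)` controls the integral of `u²`. -/
lemma lintegral_kernel_le (σ w : Measure ℝ) [IsLocallyFiniteMeasure σ]
    {A : ℝ} (hA : A2star σ w A) {y b : ℝ} (hy : y < b) (c : ℝ) :
    ∫⁻ x in Icc b c, ENNReal.ofReal |(x - y)⁻¹| ∂w ≤
      ((σ (Ico y b)) ^ (1 / 2 : ℝ))⁻¹ * (w (Icc b c) + ENNReal.ofReal (A ^ 2) + 1) := by
  set S := σ (Ico y b) with hS
  set q := S ^ (1 / 2 : ℝ) with hq
  have hsq : q * q = S := by
    rw [hq, ← ENNReal.rpow_add_of_nonneg _ _ (by norm_num) (by norm_num)]; norm_num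
  have hStop : S ≠ ∞ := measure_Ico_lt_top.ne
  have hqtop : q ≠ ∞ := by rintro h; rw [h] at hsq; simp at hsq; exact hStop hsq.symm
  by_cases hq0 : q = 0
  · rw [hq0, ENNReal.inv_zero, ENNReal.top_mul (by simp)]
    exact le_top
  have hA2 : S * ∫⁻ x in Icc b c, ENNReal.ofReal |(x - y)⁻¹| ^ 2 ∂w ≤ ENNReal.ofReal (A ^ 2) := by
    refine le_trans ?_ (hA (Ico y b) ordConnected_Ico (Metric.isBounded_Ico y b))
    rw [csInf_Ico hy, csSup_Ico hy]
    refine mul_le_mul_right ?_ _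
    calc ∫⁻ x in Icc b c, ENNReal.ofReal |(x - y)⁻¹| ^ 2 ∂w
        ≤ ∫⁻ x in Icc b c, ENNReal.ofReal (((x - (y + b) / 2) ^ 2)⁻¹) ∂w := by
          refine setLIntegral_mono' measurableSet_Icc fun x hx => ?_
          rw [← ENNReal.ofReal_pow (abs_nonneg _), sq_abs, inv_pow]
          have h1 : 0 < x - (y + b) / 2 := by linarith [hx.1]
          exact ENNReal.ofReal_le_ofReal (inv_anti₀ (by positivity)
            (pow_le_pow_left₀ h1.le (by linarith) 2))
      _ ≤ _ := by
          refine lintegral_mono_set ?_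
          rintro x hx ⟨-, h⟩
          exact absurd hx.1 (not_le.2 h)
  calc ∫⁻ x in Icc b c, ENNReal.ofReal |(x - y)⁻¹| ∂w
      ≤ ∫⁻ x in Icc b c, (q⁻¹ + q * ENNReal.ofReal |(x - y)⁻¹| ^ 2) ∂w := by
        refine lintegral_mono fun x => ?_
        set u := ENNReal.ofReal |(x - y)⁻¹|
        rcases le_total u q⁻¹ with h | h
        · exact h.trans le_self_add
        · refine le_trans ?_ le_add_self
          calc u = q * q⁻¹ * u := by rw [ENNReal.mul_inv_cancel hq0 hqtop, one_mul]
            _ ≤ q * u * u := by gcongr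
            _ = q * u ^ 2 := by ring
    _ = q⁻¹ * w (Icc b c) + q⁻¹ * (S * ∫⁻ x in Icc b c, ENNReal.ofReal |(x - y)⁻¹| ^ 2 ∂w) := by
        rw [lintegral_add_left measurable_const, lintegral_const_mul _ (by fun_prop), ← hsq,
          ← mul_assoc, ← mul_assoc q⁻¹, ENNReal.inv_mul_cancel hq0 hqtop, one_mul]
        simp
    _ ≤ q⁻¹ * w (Icc b c) + q⁻¹ * ENNReal.ofReal (A ^ 2) := by gcongr
    _ = q⁻¹ * (w (Icc b c) + ENNReal.ofReal (A ^ 2)) := by ring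
    _ ≤ _ := mul_le_mul_right le_self_add _

/-- The Hilbert kernel is integrable across a common endpoint. The diagonal point `(b,b)` does not
contribute, since `0⁻¹ = 0`. -/
lemma lintegral_kernel_lt_top (σ w : Measure ℝ) [IsLocallyFiniteMeasure σ]
    [IsLocallyFiniteMeasure w] {A : ℝ} (hA : A2star σ w A) (a b c : ℝ) :
    ∫⁻ y in Icc a b, ∫⁻ x in Icc b c, ENNReal.ofReal |(x - y)⁻¹| ∂w ∂σ < ∞ := by
  have hwtop : w (Icc b c) < ∞ := measure_Icc_lt_top
  have h1 : ∫⁻ y in Ico a b, ∫⁻ x in Icc b c, ENNReal.ofReal |(x - y)⁻¹| ∂w ∂σ < ∞ := by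
    refine lt_of_le_of_lt (setLIntegral_mono' measurableSet_Ico
      fun y hy => lintegral_kernel_le σ w hA hy.2 c) ?_
    rw [lintegral_mul_const' _ _ (by simp [hwtop.ne])]
    exact ENNReal.mul_lt_top (lintegral_tail_rpow_lt_top σ a b) (by simp [hwtop])
  have h2 : ∫⁻ y in {b}, ∫⁻ x in Icc b c, ENNReal.ofReal |(x - y)⁻¹| ∂w ∂σ < ∞ := by
    rw [lintegral_singleton]
    by_cases h0 : σ {b} = 0
    · simp [h0]
    have hP := hA {b} ordConnected_singleton Bornology.isBounded_singleton
    simp only [csInf_singleton, csSup_singleton, add_self_div_two] at hP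
    have hfin : ∫⁻ x in {b}ᶜ, ENNReal.ofReal (((x - b) ^ 2)⁻¹) ∂w < ∞ := by
      by_contra! h
      rw [top_le_iff.1 h, ENNReal.mul_top h0] at hP
      simp at hP
    refine ENNReal.mul_lt_top ?_ isCompact_singleton.measure_lt_top
    calc ∫⁻ x in Icc b c, ENNReal.ofReal |(x - b)⁻¹| ∂w
        ≤ ∫⁻ x in Icc b c, (1 + ({b}ᶜ : Set ℝ).indicator
            (fun x => ENNReal.ofReal (((x - b) ^ 2)⁻¹)) x) ∂w := by
          refine lintegral_mono fun x => ?_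
          by_cases hx : x = b
          · simp [hx]
          · rw [indicator_of_mem (by simpa using hx), ← ENNReal.ofReal_one,
              ← ENNReal.ofReal_add (by norm_num) (by positivity)]
            refine ENNReal.ofReal_le_ofReal ?_
            rw [← inv_pow, ← sq_abs]
            nlinarith [sq_nonneg (|(x - b)⁻¹| - 1), abs_nonneg (x - b)⁻¹]
      _ = w (Icc b c) + ∫⁻ x in Icc b c, ({b}ᶜ : Set ℝ).indicator
            (fun x => ENNReal.ofReal (((x - b) ^ 2)⁻¹)) x ∂w := by
          rw [lintegral_add_left measurable_const]; simp
      _ ≤ w (Icc b c) + ∫⁻ x, ({b}ᶜ : Set ℝ).indicator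
            (fun x => ENNReal.ofReal (((x - b) ^ 2)⁻¹)) x ∂w := by
          exact add_le_add le_rfl (setLIntegral_le_lintegral _ _)
      _ < ∞ := by
          rw [lintegral_indicator (measurableSet_singleton b).compl]
          exact ENNReal.add_lt_top.2 ⟨hwtop, hfin⟩
  have hsub : Icc a b ⊆ Ico a b ∪ {b} := by
    intro y hy
    rcases hy.2.lt_or_eq with h | h
    · exact Or.inl ⟨hy.1, h⟩
    · exact Or.inr h
  exact lt_of_le_of_lt ((lintegral_mono_set hsub).trans (lintegral_union_le _ _ _))
    (ENNReal.add_lt_top.2 ⟨h1, h2⟩)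

/-! ### The class of test functions -/

/-- Bounded Borel functions with bounded support; this class contains `𝓕`. -/
def BddCompact (f : ℝ → ℝ) : Prop :=
  Measurable f ∧ ∃ R, ∀ x, |f x| ≤ R ∧ (f x ≠ 0 → |x| ≤ R)

lemma BddCompact.integrable {f : ℝ → ℝ} (hf : BddCompact f) (μ : Measure ℝ)
    [IsLocallyFiniteMeasure μ] : Integrable f μ := by
  obtain ⟨hm, R, hR⟩ := hf
  have hs : Function.support f ⊆ Icc (-R) R := fun x hx => abs_le.1 ((hR x).2 hx)
  rw [← integrableOn_iff_integrable_of_support_subset hs]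
  exact Measure.integrableOn_of_bounded measure_Icc_lt_top.ne hm.aestronglyMeasurable
    (M := R) (Filter.Eventually.of_forall fun x => (hR x).1)

lemma InF.indicator {f : ℝ → ℝ} (hf : InF f) (a b : ℝ) : InF ((Ico a b).indicator f) := by
  unfold InF at hf
  induction hf using Submodule.span_induction with
  | mem x h =>
    obtain ⟨c, d, rfl⟩ := h
    rw [indicator_indicator, Ico_inter_Ico]
    exact Submodule.subset_span ⟨_, _, rfl⟩
  | zero => rw [indicator_zero']; exact Submodule.zero_mem _
  | add x y _ _ hx hy => rw [indicator_add']; exact Submodule.add_mem _ hx hy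
  | smul c x _ hx =>
    rw [show (Ico a b).indicator (c • x) = c • (Ico a b).indicator x from
      indicator_const_smul _ c x]
    exact Submodule.smul_mem _ _ hx

lemma InF.indicator_one (a b : ℝ) : InF ((Ico a b).indicator 1) :=
  Submodule.subset_span ⟨a, b, rfl⟩

lemma InF.bddCompact {f : ℝ → ℝ} (hf : InF f) : BddCompact f := by
  unfold InF at hf
  induction hf using Submodule.span_induction with
  | mem x h =>
    obtain ⟨c, d, rfl⟩ := h
    refine ⟨measurable_one.indicator measurableSet_Ico, 1 + |c| + |d|, fun x => ⟨?_, fun hx => ?_⟩⟩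
    · by_cases hx : x ∈ Ico c d
      · rw [indicator_of_mem hx, Pi.one_apply, abs_one]
        linarith [abs_nonneg c, abs_nonneg d]
      · rw [indicator_of_notMem hx, abs_zero]
        positivity
    · have hx : x ∈ Ico c d := by by_contra h; simp [h] at hx
      rw [abs_le]
      constructor
      · linarith [hx.1, neg_abs_le c, abs_nonneg d]
      · linarith [hx.2, le_abs_self d, abs_nonneg c]
  | zero => exact ⟨measurable_zero, 0, fun x => by simp⟩
  | add x y _ _ hx hy =>
    obtain ⟨hxm, R, hR⟩ := hx
    obtain ⟨hym, R', hR'⟩ := hy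
    refine ⟨hxm.add hym, R + R', fun t => ⟨?_, fun ht => ?_⟩⟩
    · exact (abs_add_le _ _).trans (add_le_add (hR t).1 (hR' t).1)
    · have h0 := (abs_nonneg _).trans (hR t).1
      have h0' := (abs_nonneg _).trans (hR' t).1
      by_cases h : x t = 0
      · have : y t ≠ 0 := by intro h'; simp [h, h'] at ht
        linarith [(hR' t).2 this]
      · linarith [(hR t).2 h]
  | smul c x _ hx =>
    obtain ⟨hxm, R, hR⟩ := hx
    refine ⟨hxm.const_smul c, (1 + |c|) * R, fun t => ?_⟩
    have h0 := (abs_nonneg _).trans (hR t).1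
    constructor
    · simp only [Pi.smul_apply, smul_eq_mul, abs_mul]
      nlinarith [(hR t).1, abs_nonneg c]
    · intro ht
      have : x t ≠ 0 := by intro h'; simp [h'] at ht
      nlinarith [(hR t).2 this, abs_nonneg c]

/-! ### The truncated kernel and the truncated pairings -/

/-- The truncated Hilbert kernel. -/
def truncKer (ε : ℝ) (z : ℝ × ℝ) : ℝ := if ε < |z.1 - z.2| then (z.1 - z.2)⁻¹ else 0

lemma measurable_truncKer (ε : ℝ) : Measurable (truncKer ε) :=
  Measurable.ite (measurableSet_lt measurable_const (by fun_prop)) (by fun_prop) measurable_const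

lemma abs_truncKer_le {ε : ℝ} (hε : 0 < ε) (z : ℝ × ℝ) : |truncKer ε z| ≤ ε⁻¹ := by
  unfold truncKer
  split_ifs with h
  · rw [abs_inv]; exact inv_anti₀ hε h.le
  · simpa using hε.le

lemma abs_truncKer_le_ker (ε : ℝ) (z : ℝ × ℝ) : |truncKer ε z| ≤ |(z.1 - z.2)⁻¹| := by
  unfold truncKer
  split_ifs with h
  · exact le_rfl
  · simp

lemma truncKer_swap (ε : ℝ) (z : ℝ × ℝ) : truncKer ε z.swap = -truncKer ε z := by
  unfold truncKer
  simp only [Prod.fst_swap, Prod.snd_swap, abs_sub_comm z.2 z.1]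
  split_ifs
  · rw [← neg_sub, inv_neg]
  · simp

/-- As `ε → 0⁺` the truncated kernel converges pointwise everywhere to the Hilbert kernel, on the
diagonal because `0⁻¹ = 0`. -/
lemma tendsto_truncKer (z : ℝ × ℝ) :
    Filter.Tendsto (fun ε => truncKer ε z) (nhdsWithin 0 (Ioi 0)) (nhds (z.1 - z.2)⁻¹) := by
  by_cases h : z.1 - z.2 = 0
  · have : (fun ε => truncKer ε z) = fun _ => 0 := by ext ε; simp [truncKer, h]
    rw [this, h, inv_zero]
    exact tendsto_const_nhds
  · refine tendsto_const_nhds.congr' ?_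
    have : Iio |z.1 - z.2| ∈ nhdsWithin (0 : ℝ) (Ioi 0) :=
      nhdsWithin_le_nhds (Iio_mem_nhds (abs_pos.2 h))
    filter_upwards [this] with ε hε
    rw [truncKer, if_pos (mem_Iio.1 hε)]

section Pairing

variable (σ w : Measure ℝ) [IsLocallyFiniteMeasure σ] [IsLocallyFiniteMeasure w]
  {f g : ℝ → ℝ} {ε : ℝ}

lemma integrable_truncKer (hf : BddCompact f) (hg : BddCompact g) (hε : 0 < ε) :
    Integrable (fun z : ℝ × ℝ => truncKer ε z * (g z.1 * f z.2)) (w.prod σ) :=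
  ((hg.integrable w).mul_prod (hf.integrable σ)).bdd_mul (c := ε⁻¹)
    (measurable_truncKer ε).aestronglyMeasurable
    (Filter.Eventually.of_forall fun z => abs_truncKer_le hε z)

lemma truncPairing_eq (hf : BddCompact f) (hg : BddCompact g) (hε : 0 < ε) :
    truncPairing σ w f g ε = ∫ z, truncKer ε z * (g z.1 * f z.2) ∂(w.prod σ) := by
  rw [integral_prod _ (integrable_truncKer σ w hf hg hε), truncPairing]
  congr 1 with x
  rw [← integral_mul_const]
  congr 1 with y
  unfold truncKer
  dsimp only
  split_ifs <;> ring

lemma truncPairing_antisymm (hf : BddCompact f) (hg : BddCompact g) (hε : 0 < ε) :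
    truncPairing σ w f g ε = -truncPairing w σ g f ε := by
  rw [truncPairing_eq σ w hf hg hε, truncPairing_eq w σ hg hf hε, ← integral_neg,
    ← integral_prod_swap]
  congr 1 with z
  rw [truncKer_swap]
  simp only [Prod.fst_swap, Prod.snd_swap]
  ring

lemma truncPairing_add_left {f' : ℝ → ℝ} (hf : BddCompact f) (hf' : BddCompact f')
    (hff : BddCompact (f + f')) (hg : BddCompact g) (hε : 0 < ε) :
    truncPairing σ w (f + f') g ε = truncPairing σ w f g ε + truncPairing σ w f' g ε := by
  rw [truncPairing_eq σ w hff hg hε, truncPairing_eq σ w hf hg hε, truncPairing_eq σ w hf' hg hε,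
    ← integral_add (integrable_truncKer σ w hf hg hε) (integrable_truncKer σ w hf' hg hε)]
  congr 1 with z
  simp only [Pi.add_apply]
  ring

lemma truncPairing_smul_left (c : ℝ) (hf : BddCompact f)
    (hcf : BddCompact (c • f)) (hg : BddCompact g) (hε : 0 < ε) :
    truncPairing σ w (c • f) g ε = c * truncPairing σ w f g ε := by
  rw [truncPairing_eq σ w hcf hg hε, truncPairing_eq σ w hf hg hε, ← integral_const_mul]
  congr 1 with z
  simp only [Pi.smul_apply, smul_eq_mul]
  ring

lemma truncPairing_add_right {g' : ℝ → ℝ} (hf : BddCompact f) (hg : BddCompact g)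
    (hg' : BddCompact g') (hgg : BddCompact (g + g')) (hε : 0 < ε) :
    truncPairing σ w f (g + g') ε = truncPairing σ w f g ε + truncPairing σ w f g' ε := by
  rw [truncPairing_antisymm σ w hf hgg hε, truncPairing_antisymm σ w hf hg hε,
    truncPairing_antisymm σ w hf hg' hε, truncPairing_add_left w σ hg hg' hgg hf hε]
  ring

lemma truncPairing_smul_right (c : ℝ) (hf : BddCompact f) (hg : BddCompact g)
    (hcg : BddCompact (c • g)) (hε : 0 < ε) :
    truncPairing σ w f (c • g) ε = c * truncPairing σ w f g ε := by
  rw [truncPairing_antisymm σ w hf hcg hε, truncPairing_antisymm σ w hf hg hε,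
    truncPairing_smul_left w σ c hg hcg hf hε]
  ring

/-- The untruncated double integral converges absolutely when `f` lives to the left of `b` and
`g` to the right of `b`. -/
lemma integrable_ker_of_le {A : ℝ} (hA : A2star σ w A) (hf : BddCompact f) (hg : BddCompact g)
    {b : ℝ} (hfb : ∀ y, f y ≠ 0 → y ≤ b) (hgb : ∀ x, g x ≠ 0 → b ≤ x) :
    Integrable (fun z : ℝ × ℝ => (z.1 - z.2)⁻¹ * (g z.1 * f z.2)) (w.prod σ) := by
  obtain ⟨hfm, R, hR⟩ := hf
  obtain ⟨hgm, R', hR'⟩ := hg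
  have hs : Function.support (fun z : ℝ × ℝ => (z.1 - z.2)⁻¹ * (g z.1 * f z.2)) ⊆
      Icc b R' ×ˢ Icc (-R) b := by
    intro z hz
    rw [Function.mem_support] at hz
    have h1 : g z.1 ≠ 0 := by intro h; simp [h] at hz
    have h2 : f z.2 ≠ 0 := by intro h; simp [h] at hz
    exact ⟨⟨hgb _ h1, (abs_le.1 ((hR' _).2 h1)).2⟩, (abs_le.1 ((hR _).2 h2)).1, hfb _ h2⟩
  have hkm : Measurable fun z : ℝ × ℝ => (z.1 - z.2)⁻¹ := by fun_prop
  have hker : Integrable (fun z : ℝ × ℝ => (z.1 - z.2)⁻¹)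
      ((w.restrict (Icc b R')).prod (σ.restrict (Icc (-R) b))) := by
    refine ⟨hkm.aestronglyMeasurable, ?_⟩
    rw [hasFiniteIntegral_iff_norm, lintegral_prod_symm _ (by fun_prop)]
    exact lintegral_kernel_lt_top σ w hA (-R) b R'
  rw [← integrableOn_iff_integrable_of_support_subset hs, IntegrableOn, ← Measure.prod_restrict]
  refine (hker.bdd_mul (f := fun z : ℝ × ℝ => g z.1 * f z.2) (c := R' * R)
    (by fun_prop) (Filter.Eventually.of_forall fun z => ?_)).congr
    (Filter.Eventually.of_forall fun z => mul_comm _ _)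
  rw [norm_mul]
  exact mul_le_mul (hR' _).1 (hR _).1 (norm_nonneg _) ((abs_nonneg _).trans (hR' 0).1)

lemma integrable_ker_of_ge {A : ℝ} (hA : A2star w σ A) (hf : BddCompact f) (hg : BddCompact g)
    {b : ℝ} (hfb : ∀ y, f y ≠ 0 → b ≤ y) (hgb : ∀ x, g x ≠ 0 → x ≤ b) :
    Integrable (fun z : ℝ × ℝ => (z.1 - z.2)⁻¹ * (g z.1 * f z.2)) (w.prod σ) := by
  refine (integrable_ker_of_le w σ hA hg hf hgb hfb).swap.neg.congr
    (Filter.Eventually.of_forall fun z => ?_)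
  simp only [Pi.neg_apply, Function.comp_apply, Prod.fst_swap, Prod.snd_swap]
  rw [← neg_sub z.1 z.2, inv_neg]
  ring

lemma abs_truncPairing_le (hf : BddCompact f) (hg : BddCompact g)
    (hi : Integrable (fun z : ℝ × ℝ => (z.1 - z.2)⁻¹ * (g z.1 * f z.2)) (w.prod σ))
    (hε : 0 < ε) :
    |truncPairing σ w f g ε| ≤ ∫ z, ‖(z.1 - z.2)⁻¹ * (g z.1 * f z.2)‖ ∂(w.prod σ) := by
  rw [truncPairing_eq σ w hf hg hε, ← Real.norm_eq_abs]
  refine norm_integral_le_of_norm_le hi.norm (Filter.Eventually.of_forall fun z => ?_)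
  rw [norm_mul, norm_mul (z.1 - z.2)⁻¹]
  exact mul_le_mul_of_nonneg_right (abs_truncKer_le_ker ε z) (norm_nonneg _)

lemma tendsto_truncPairing (hf : BddCompact f) (hg : BddCompact g)
    (hi : Integrable (fun z : ℝ × ℝ => (z.1 - z.2)⁻¹ * (g z.1 * f z.2)) (w.prod σ)) :
    Filter.Tendsto (truncPairing σ w f g) (nhdsWithin 0 (Ioi 0))
      (nhds (hilbertPairing σ w f g)) := by
  have hH : hilbertPairing σ w f g = ∫ z, (z.1 - z.2)⁻¹ * (g z.1 * f z.2) ∂(w.prod σ) := by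
    rw [integral_prod _ hi, hilbertPairing]
    congr 1 with x
    rw [← integral_mul_const]
    congr 1 with y
    ring
  rw [hH]
  have hlim : Filter.Tendsto (fun ε => ∫ z, truncKer ε z * (g z.1 * f z.2) ∂(w.prod σ))
      (nhdsWithin 0 (Ioi 0)) (nhds (∫ z, (z.1 - z.2)⁻¹ * (g z.1 * f z.2) ∂(w.prod σ))) := by
    refine tendsto_integral_filter_of_dominated_convergence _ ?_ ?_ hi.norm ?_
    · filter_upwards [self_mem_nhdsWithin] with ε hε
      exact (integrable_truncKer σ w hf hg hε).aestronglyMeasurable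
    · refine Filter.Eventually.of_forall fun ε => Filter.Eventually.of_forall fun z => ?_
      rw [norm_mul, norm_mul (z.1 - z.2)⁻¹]
      exact mul_le_mul_of_nonneg_right (abs_truncKer_le_ker ε z) (norm_nonneg _)
    · exact Filter.Eventually.of_forall fun z => (tendsto_truncKer z).mul_const _
  refine hlim.congr' ?_
  filter_upwards [self_mem_nhdsWithin] with ε hε
  exact (truncPairing_eq σ w hf hg hε).symm

end Pairing

/-! ### Uniform bounds on `𝓕` -/

/-- The truncated pairings of `f` and `g` are bounded uniformly in the truncation. -/
def UnifBdd (σ w : Measure ℝ) (f g : ℝ → ℝ) : Prop :=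
  ∃ M : ℝ, ∀ ε : ℝ, 0 < ε → |truncPairing σ w f g ε| ≤ M

lemma unifBdd_zero_left {σ w : Measure ℝ} {g : ℝ → ℝ} : UnifBdd σ w 0 g :=
  ⟨0, fun ε _ => by simp [truncPairing]⟩

lemma mem_Ico_of_indicator_ne_zero {a b x : ℝ} (h : (Ico a b).indicator (1 : ℝ → ℝ) x ≠ 0) :
    x ∈ Ico a b := by
  by_contra hx
  exact h (indicator_of_notMem hx _)

lemma indicator_Ico_add {a b c : ℝ} (hab : a ≤ b) (hbc : b ≤ c) :
    (Ico a c).indicator (1 : ℝ → ℝ) = (Ico b c).indicator 1 + (Ico a b).indicator 1 := by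
  rw [← Ico_union_Ico_eq_Ico hab hbc, indicator_union_of_disjoint, add_comm]
  · rfl
  · exact Set.disjoint_left.2 fun x hx hx' => absurd hx.2 (not_lt.2 hx'.1)

section UniformBound

variable {σ w : Measure ℝ} [IsLocallyFiniteMeasure σ] [IsLocallyFiniteMeasure w] {f g : ℝ → ℝ}

lemma UnifBdd.symm (h : UnifBdd σ w f g) (hf : InF f) (hg : InF g) : UnifBdd w σ g f := by
  obtain ⟨M, hM⟩ := h
  refine ⟨M, fun ε hε => ?_⟩
  rw [truncPairing_antisymm w σ hg.bddCompact hf.bddCompact hε, abs_neg]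
  exact hM ε hε

lemma UnifBdd.add_left {f' : ℝ → ℝ} (h : UnifBdd σ w f g) (h' : UnifBdd σ w f' g)
    (hf : InF f) (hf' : InF f') (hg : InF g) : UnifBdd σ w (f + f') g := by
  obtain ⟨M, hM⟩ := h
  obtain ⟨M', hM'⟩ := h'
  refine ⟨M + M', fun ε hε => ?_⟩
  rw [truncPairing_add_left σ w hf.bddCompact hf'.bddCompact
    (InF.bddCompact (Submodule.add_mem _ hf hf')) hg.bddCompact hε]
  exact (abs_add_le _ _).trans (add_le_add (hM ε hε) (hM' ε hε))

lemma UnifBdd.smul_left (h : UnifBdd σ w f g) (c : ℝ) (hf : InF f) (hg : InF g) :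
    UnifBdd σ w (c • f) g := by
  obtain ⟨M, hM⟩ := h
  refine ⟨|c| * M, fun ε hε => ?_⟩
  rw [truncPairing_smul_left σ w c hf.bddCompact
    (InF.bddCompact (Submodule.smul_mem _ c hf)) hg.bddCompact hε, abs_mul]
  exact mul_le_mul_of_nonneg_left (hM ε hε) (abs_nonneg c)

/-- Two functions of `𝓕` separated by a point have uniformly bounded truncated pairings. -/
lemma unifBdd_of_le {A : ℝ} (hA : A2star σ w A) (hf : InF f) (hg : InF g)
    {b : ℝ} (hfb : ∀ y, f y ≠ 0 → y ≤ b) (hgb : ∀ x, g x ≠ 0 → b ≤ x) : UnifBdd σ w f g :=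
  ⟨_, fun _ hε => abs_truncPairing_le σ w hf.bddCompact hg.bddCompact
    (integrable_ker_of_le σ w hA hf.bddCompact hg.bddCompact hfb hgb) hε⟩

/-- Two intervals with the same left endpoint: the longer one is the shorter one plus an adjacent
interval, so testing on the shorter interval and the `A₂` bound suffice. -/
lemma unifBdd_Ico_le {A' : ℝ} (hA' : A2star w σ A')
    (hdiag : ∀ a b : ℝ, a < b →
      UnifBdd σ w ((Ico a b).indicator 1) ((Ico a b).indicator 1))
    {n b d : ℝ} (hnd : n ≤ d) (hbd : d ≤ b) :
    UnifBdd σ w ((Ico n b).indicator 1) ((Ico n d).indicator 1) := by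
  have h1 : UnifBdd σ w ((Ico n d).indicator 1) ((Ico n d).indicator 1) := by
    rcases hnd.lt_or_eq with h | rfl
    · exact hdiag n d h
    · simp only [Ico_self, indicator_empty]
      exact unifBdd_zero_left
  have h2 : UnifBdd σ w ((Ico d b).indicator 1) ((Ico n d).indicator 1) :=
    (unifBdd_of_le hA' (InF.indicator_one n d) (InF.indicator_one d b)
      (b := d) (fun y hy => (mem_Ico_of_indicator_ne_zero hy).2.le)
      (fun x hx => (mem_Ico_of_indicator_ne_zero hx).1)).symm
      (InF.indicator_one _ _) (InF.indicator_one _ _)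
  rw [indicator_Ico_add hnd hbd]
  exact h2.add_left h1 (InF.indicator_one _ _) (InF.indicator_one _ _) (InF.indicator_one _ _)

lemma unifBdd_Ico {A A' : ℝ} (hA : A2star σ w A) (hA' : A2star w σ A')
    (hdiag : ∀ a b : ℝ, a < b →
      UnifBdd σ w ((Ico a b).indicator 1) ((Ico a b).indicator 1))
    {n b d : ℝ} (hnb : n ≤ b) (hnd : n ≤ d) :
    UnifBdd σ w ((Ico n b).indicator 1) ((Ico n d).indicator 1) := by
  rcases le_total d b with h | h
  · exact unifBdd_Ico_le hA' hdiag hnd h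
  · exact (unifBdd_Ico_le hA (fun a b hab => (hdiag a b hab).symm (InF.indicator_one _ _)
      (InF.indicator_one _ _)) hnb h).symm (InF.indicator_one _ _) (InF.indicator_one _ _)

/-- To bound the pairing with all of `𝓕`, it is enough to treat the intervals `[n,b)` whose left
endpoint `n` is sufficiently negative, as `1_[a,b) = 1_[n,b) - 1_[n,a)`. -/
lemma unifBdd_of_forall_Ico (N : ℝ) (hg : InF g)
    (h : ∀ n b : ℝ, n ≤ N → n ≤ b → UnifBdd σ w ((Ico n b).indicator 1) g) (hf : InF f) :
    UnifBdd σ w f g := by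
  have hf' := hf
  unfold InF at hf'
  induction hf' using Submodule.span_induction with
  | mem x hx =>
    obtain ⟨a, b, rfl⟩ := hx
    rcases le_total a b with hab | hab
    · set n := min N a with hn
      have hdec : (Ico a b).indicator (1 : ℝ → ℝ) =
          (Ico n b).indicator 1 + (-1 : ℝ) • (Ico n a).indicator 1 := by
        rw [indicator_Ico_add (min_le_right N a) hab]
        ext x
        simp [hn]
      rw [hdec]
      exact (h n b (min_le_left _ _) ((min_le_right _ _).trans hab)).add_left
        ((h n a (min_le_left _ _) (min_le_right _ _)).smul_left (-1) (InF.indicator_one _ _) hg)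
        (InF.indicator_one _ _) (Submodule.smul_mem _ _ (InF.indicator_one _ _)) hg
    · rw [Ico_eq_empty (not_lt.2 hab), indicator_empty]
      exact unifBdd_zero_left
  | zero => exact unifBdd_zero_left
  | add x y hx hy ihx ihy => exact (ihx hx).add_left (ihy hy) hx hy hg
  | smul c x hx ihx => exact (ihx hx).smul_left c hx hg

lemma unifBdd_of_InF {A A' : ℝ} (hA : A2star σ w A) (hA' : A2star w σ A')
    (hdiag : ∀ a b : ℝ, a < b →
      UnifBdd σ w ((Ico a b).indicator 1) ((Ico a b).indicator 1))
    (hf : InF f) (hg : InF g) : UnifBdd σ w f g := by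
  have key : ∀ m b : ℝ, m ≤ b → UnifBdd σ w ((Ico m b).indicator 1) g := by
    intro m b hmb
    refine (unifBdd_of_forall_Ico (σ := w) (w := σ) m (InF.indicator_one m b) ?_ hg).symm hg
      (InF.indicator_one m b)
    intro n d hnm hnd
    -- move the left endpoint `m` to `n`, the one used on the side of `g`
    have hdec : (Ico m b).indicator (1 : ℝ → ℝ) =
        (Ico n b).indicator 1 + (-1 : ℝ) • (Ico n m).indicator 1 := by
      rw [indicator_Ico_add hnm hmb]
      ext x
      simp
    rw [hdec]
    exact ((unifBdd_Ico hA hA' hdiag (hnm.trans hmb) hnd).add_left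
      ((unifBdd_Ico hA hA' hdiag hnm hnd).smul_left (-1) (InF.indicator_one _ _)
        (InF.indicator_one _ _)) (InF.indicator_one _ _)
      (Submodule.smul_mem _ _ (InF.indicator_one _ _)) (InF.indicator_one _ _)).symm
      (Submodule.add_mem _ (InF.indicator_one _ _) (Submodule.smul_mem _ _ (InF.indicator_one _ _)))
      (InF.indicator_one _ _)
  exact unifBdd_of_forall_Ico 0 hg (fun n b _ hnb => key n b hnb) hf

end UniformBound

/-! ### Testing and Cauchy–Schwarz -/

lemma BddCompact.memLp_two {f : ℝ → ℝ} (hf : BddCompact f) (μ : Measure ℝ)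
    [IsLocallyFiniteMeasure μ] : MemLp f 2 μ := by
  rw [memLp_two_iff_integrable_sq hf.1.aestronglyMeasurable]
  have hi := hf.integrable μ
  obtain ⟨hm, R, hR⟩ := hf
  refine (hi.bdd_mul (c := R) hm.aestronglyMeasurable
    (Filter.Eventually.of_forall fun x => (hR x).1)).congr
    (Filter.Eventually.of_forall fun x => (sq (f x)).symm)

lemma abs_integral_mul_le_l2norm {f g : ℝ → ℝ} (μ : Measure ℝ) [IsLocallyFiniteMeasure μ]
    (hf : BddCompact f) (hg : BddCompact g) :
    |∫ x, f x * g x ∂μ| ≤ l2norm μ f * l2norm μ g := by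
  have h := integral_mul_norm_le_Lp_mul_Lq (μ := μ) (f := f) (g := g) (p := 2) (q := 2)
    ⟨by norm_num, by norm_num, by norm_num⟩ (by simpa using hf.memLp_two μ)
    (by simpa using hg.memLp_two μ)
  refine (abs_integral_le_integral_abs).trans ?_
  simpa [l2norm, Real.sqrt_eq_rpow, abs_mul] using h

/-- Testing of the truncated Hilbert transform on `[a,b)` bounds the truncated pairing, by
Cauchy–Schwarz. -/
lemma abs_truncPairing_indicator_le (σ w : Measure ℝ) [IsLocallyFiniteMeasure σ]
    [IsLocallyFiniteMeasure w] {g : ℝ → ℝ} (hg : BddCompact g) (a b : ℝ) {ε : ℝ} (hε : 0 < ε) :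
    |truncPairing σ w ((Ico a b).indicator 1) ((Ico a b).indicator g) ε| ≤
      l2norm w ((Ico a b).indicator (truncHilbert (σ.restrict (Ico a b)) 1 ε)) * l2norm w g := by
  set H := truncHilbert (σ.restrict (Ico a b)) 1 ε with hH
  have hHeq : ∀ x, H x = ∫ y in Ico a b, truncKer ε (x, y) ∂σ := by
    intro x
    simp [hH, truncHilbert, truncKer]
  have hHm : Measurable H := by
    have : StronglyMeasurable fun x => ∫ y in Ico a b, truncKer ε (x, y) ∂σ :=
      StronglyMeasurable.integral_prod_right (f := fun x y => truncKer ε (x, y))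
        (measurable_truncKer ε).stronglyMeasurable
    rw [funext hHeq]
    exact this.measurable
  have hHb : ∀ x, |H x| ≤ ε⁻¹ * σ.real (Ico a b) := by
    intro x
    rw [hHeq]
    exact norm_setIntegral_le_of_norm_le_const (f := fun y => truncKer ε (x, y))
      measure_Ico_lt_top fun y _ => abs_truncKer_le hε (x, y)
  have hIH : BddCompact ((Ico a b).indicator H) := by
    have h0 : 0 ≤ ε⁻¹ * σ.real (Ico a b) := by positivity
    refine ⟨hHm.indicator measurableSet_Ico, ε⁻¹ * σ.real (Ico a b) + |a| + |b|,
      fun x => ?_⟩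
    by_cases hx : x ∈ Ico a b
    · rw [indicator_of_mem hx]
      refine ⟨by linarith [hHb x, abs_nonneg a, abs_nonneg b], fun _ => abs_le.2 ⟨?_, ?_⟩⟩
      · linarith [hx.1, neg_abs_le a, abs_nonneg b]
      · linarith [hx.2, le_abs_self b, abs_nonneg a]
    · rw [indicator_of_notMem hx, abs_zero]
      exact ⟨by positivity, fun h => absurd rfl h⟩
  have heq : truncPairing σ w ((Ico a b).indicator 1) ((Ico a b).indicator g) ε =
      ∫ x, (Ico a b).indicator H x * g x ∂w := by
    unfold truncPairing
    congr 1 with x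
    have : ∫ y, (if ε < |x - y| then (x - y)⁻¹ * (Ico a b).indicator (1 : ℝ → ℝ) y else 0) ∂σ =
        H x := by
      rw [hHeq, ← integral_indicator measurableSet_Ico]
      congr 1 with y
      by_cases hy : y ∈ Ico a b <;> simp [hy, truncKer]
    rw [this]
    by_cases hx : x ∈ Ico a b <;> simp [hx]
  rw [heq]
  exact abs_integral_mul_le_l2norm w hIH hg

/-! ### Separation of disjoint intervals -/

/-- Functions supported on disjoint intervals are separated by a point. -/
lemma DisjointlySupported.exists_sep {f g : ℝ → ℝ} (h : DisjointlySupported f g)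
    (hf : BddCompact f) (hg : BddCompact g) :
    ∃ b : ℝ, ((∀ y, f y ≠ 0 → y ≤ b) ∧ ∀ x, g x ≠ 0 → b ≤ x) ∨
      ((∀ y, f y ≠ 0 → b ≤ y) ∧ ∀ x, g x ≠ 0 → x ≤ b) := by
  obtain ⟨I, J, hI, hJ, hIJ, hfI, hgJ⟩ := h
  by_cases hf0 : ∃ y₀, f y₀ ≠ 0
  swap
  · push Not at hf0
    obtain ⟨-, R, hR⟩ := hg
    exact ⟨-R, Or.inl ⟨fun y hy => absurd (hf0 y) hy, fun x hx => (abs_le.1 ((hR x).2 hx)).1⟩⟩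
  by_cases hg0 : ∃ x₀, g x₀ ≠ 0
  swap
  · push Not at hg0
    obtain ⟨-, R, hR⟩ := hf
    exact ⟨R, Or.inl ⟨fun y hy => (abs_le.1 ((hR y).2 hy)).2, fun x hx => absurd (hg0 x) hx⟩⟩
  obtain ⟨y₀, hy₀⟩ := hf0
  obtain ⟨x₀, hx₀⟩ := hg0
  have hdisj := Set.disjoint_left.1 hIJ
  -- two points of one interval cannot lie on different sides of a point of the other
  have hsame : ∀ {K L : Set ℝ}, K.OrdConnected → L.OrdConnected → (∀ z ∈ K, z ∉ L) →
      ∀ k₀ ∈ K, ∀ l₀ ∈ L, k₀ ≤ l₀ → ∀ k ∈ K, ∀ l ∈ L, k ≤ l := by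
    intro K L hK hL hd k₀ hk₀ l₀ hl₀ h0 k hk l hl
    by_contra! hlt
    by_cases hll : l ≤ k₀
    · exact hd k₀ hk₀ (hL.out hl hl₀ ⟨hll, h0⟩)
    · exact hd l (hK.out hk₀ hk ⟨(not_le.1 hll).le, hlt.le⟩) hl
  rcases le_total y₀ x₀ with h0 | h0
  · have hall := hsame hI hJ (fun z hz => hdisj hz) y₀ (hfI hy₀) x₀ (hgJ hx₀) h0
    have hub : ∀ x, g x ≠ 0 → ∀ y ∈ Function.support f, y ≤ x :=
      fun x hx y hy => hall y (hfI hy) x (hgJ hx)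
    exact ⟨sSup (Function.support f), Or.inl
      ⟨fun y hy => le_csSup ⟨x₀, hub x₀ hx₀⟩ hy, fun x hx => csSup_le ⟨y₀, hy₀⟩ (hub x hx)⟩⟩
  · have hall := hsame hJ hI (fun z hz hz' => hdisj hz' hz) x₀ (hgJ hx₀) y₀ (hfI hy₀) h0
    have hub : ∀ y, f y ≠ 0 → ∀ x ∈ Function.support g, x ≤ y :=
      fun y hy x hx => hall x (hgJ hx) y (hfI hy)
    exact ⟨sSup (Function.support g), Or.inr
      ⟨fun y hy => csSup_le ⟨x₀, hx₀⟩ (hub y hy), fun x hx => le_csSup ⟨y₀, hub y₀ hy₀⟩ hx⟩⟩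

/-! ### The generalized limit -/

/-- An ultrafilter refining `ε → 0⁺`. Along it every bounded family of truncated pairings
converges, although the limit as `ε → 0⁺` need not exist. -/
def truncUltra : Ultrafilter ℝ := Ultrafilter.of (nhdsWithin 0 (Ioi 0))

lemma truncUltra_le : (truncUltra : Filter ℝ) ≤ nhdsWithin 0 (Ioi 0) := Ultrafilter.of_le _

lemma eventually_pos_truncUltra : ∀ᶠ ε in (truncUltra : Filter ℝ), 0 < ε :=
  truncUltra_le self_mem_nhdsWithin

/-- The limit of the truncated pairings along `truncUltra`. -/
def limPairing (σ w : Measure ℝ) (f g : ℝ → ℝ) : ℝ :=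
  (truncUltra : Filter ℝ).limUnder (truncPairing σ w f g)

lemma UnifBdd.tendsto {σ w : Measure ℝ} {f g : ℝ → ℝ} (h : UnifBdd σ w f g) :
    Filter.Tendsto (truncPairing σ w f g) (truncUltra : Filter ℝ) (nhds (limPairing σ w f g)) := by
  obtain ⟨M, hM⟩ := h
  have hmem : ((truncUltra.map (truncPairing σ w f g) : Ultrafilter ℝ) : Filter ℝ) ≤
      Filter.principal (Icc (-M) M) := by
    rw [Filter.le_principal_iff]
    change ∀ᶠ ε in (truncUltra : Filter ℝ), truncPairing σ w f g ε ∈ Icc (-M) M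
    filter_upwards [eventually_pos_truncUltra] with ε hε
    exact abs_le.1 (hM ε hε)
  obtain ⟨L, -, hL⟩ := isCompact_Icc.ultrafilter_le_nhds _ hmem
  exact tendsto_nhds_limUnder ⟨L, hL⟩

theorem statement10 (σ w : Measure ℝ) [IsLocallyFiniteMeasure σ] [IsLocallyFiniteMeasure w]
    (A A' : ℝ) (hA : A2star σ w A) (hA' : A2star w σ A')
    -- `sup_{ε>0} |B_ε(1_I, 1_I)| < ∞` for every finite interval `I`:
    (hWBP : ∀ a b : ℝ, a < b → ∃ M : ℝ, ∀ ε : ℝ, 0 < ε →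
      |truncPairing σ w ((Set.Ico a b).indicator 1) ((Set.Ico a b).indicator 1) ε| ≤ M) :
    ∃ B : (ℝ → ℝ) → (ℝ → ℝ) → ℝ,
      BilinearOnF B ∧
      (∀ f g : ℝ → ℝ, InF f → InF g → DisjointlySupported f g →
        B f g = hilbertPairing σ w f g) ∧
      (∀ C : ℝ, 0 ≤ C →
        -- truncated interval testing for `σ` ...
        (∀ a b ε : ℝ, a < b → 0 < ε →
          l2norm w ((Set.Ico a b).indicator
              (truncHilbert (σ.restrict (Set.Ico a b)) 1 ε)) ≤
            C * Real.sqrt (σ (Set.Ico a b)).toReal) →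
        -- ... and for `w` ...
        (∀ a b ε : ℝ, a < b → 0 < ε →
          l2norm σ ((Set.Ico a b).indicator
              (truncHilbert (w.restrict (Set.Ico a b)) 1 ε)) ≤
            C * Real.sqrt (w (Set.Ico a b)).toReal) →
        -- ... imply the local testing conditions for `B`:
        LocalTesting σ w B C C) := by
  have hbdd : ∀ {f g : ℝ → ℝ}, InF f → InF g → UnifBdd σ w f g :=
    fun hf hg => unifBdd_of_InF hA hA' hWBP hf hg
  have hlim : ∀ {f g : ℝ → ℝ}, InF f → InF g → Filter.Tendsto (truncPairing σ w f g)
      (truncUltra : Filter ℝ) (nhds (limPairing σ w f g)) := fun hf hg => (hbdd hf hg).tendsto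
  have hadd : ∀ {f g : ℝ → ℝ}, InF f → InF g → InF (f + g) := fun hf hg =>
    Submodule.add_mem _ hf hg
  have hsmul : ∀ (c : ℝ) {f : ℝ → ℝ}, InF f → InF (c • f) := fun c _ hf =>
    Submodule.smul_mem _ c hf
  have hle : ∀ {f g : ℝ → ℝ} {M : ℝ}, InF f → InF g →
      (∀ ε, 0 < ε → |truncPairing σ w f g ε| ≤ M) → |limPairing σ w f g| ≤ M := by
    intro f g M hf hg h
    exact le_of_tendsto (hlim hf hg).abs (eventually_pos_truncUltra.mono h)
  refine ⟨limPairing σ w, ⟨?_, ?_, ?_, ?_⟩, ?_, ?_⟩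
  · intro f f' g hf hf' hg
    refine tendsto_nhds_unique (hlim (hadd hf hf') hg)
      (((hlim hf hg).add (hlim hf' hg)).congr' ?_)
    filter_upwards [eventually_pos_truncUltra] with ε hε
    exact (truncPairing_add_left σ w hf.bddCompact hf'.bddCompact (hadd hf hf').bddCompact
      hg.bddCompact hε).symm
  · intro c f g hf hg
    refine tendsto_nhds_unique (hlim (hsmul c hf) hg) (((hlim hf hg).const_mul c).congr' ?_)
    filter_upwards [eventually_pos_truncUltra] with ε hε
    exact (truncPairing_smul_left σ w c hf.bddCompact (hsmul c hf).bddCompact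
      hg.bddCompact hε).symm
  · intro f g g' hf hg hg'
    refine tendsto_nhds_unique (hlim hf (hadd hg hg'))
      (((hlim hf hg).add (hlim hf hg')).congr' ?_)
    filter_upwards [eventually_pos_truncUltra] with ε hε
    exact (truncPairing_add_right σ w hf.bddCompact hg.bddCompact hg'.bddCompact
      (hadd hg hg').bddCompact hε).symm
  · intro c f g hf hg
    refine tendsto_nhds_unique (hlim hf (hsmul c hg)) (((hlim hf hg).const_mul c).congr' ?_)
    filter_upwards [eventually_pos_truncUltra] with ε hε
    exact (truncPairing_smul_right σ w c hf.bddCompact hg.bddCompact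
      (hsmul c hg).bddCompact hε).symm
  · intro f g hf hg hd
    have hi : Integrable (fun z : ℝ × ℝ => (z.1 - z.2)⁻¹ * (g z.1 * f z.2)) (w.prod σ) := by
      obtain ⟨b, ⟨h1, h2⟩ | ⟨h1, h2⟩⟩ := hd.exists_sep hf.bddCompact hg.bddCompact
      · exact integrable_ker_of_le σ w hA hf.bddCompact hg.bddCompact h1 h2
      · exact integrable_ker_of_ge σ w hA' hf.bddCompact hg.bddCompact h1 h2
    exact tendsto_nhds_unique (hlim hf hg)
      ((tendsto_truncPairing σ w hf.bddCompact hg.bddCompact hi).mono_left truncUltra_le)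
  · intro C _ hσ hw
    refine ⟨fun a b g hab hg => ?_, fun a b f hab hf => ?_⟩
    · refine hle (InF.indicator_one a b) (hg.indicator a b) fun ε hε => ?_
      exact (abs_truncPairing_indicator_le σ w hg.bddCompact a b hε).trans
        (mul_le_mul_of_nonneg_right (hσ a b ε hab hε) (Real.sqrt_nonneg _))
    · refine hle (hf.indicator a b) (InF.indicator_one a b) fun ε hε => ?_
      rw [truncPairing_antisymm σ w (hf.indicator a b).bddCompact
        (InF.indicator_one a b).bddCompact hε, abs_neg, mul_right_comm]
      exact (abs_truncPairing_indicator_le w σ hf.bddCompact a b hε).trans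
        (mul_le_mul_of_nonneg_right (hw a b ε hab hε) (Real.sqrt_nonneg _))
end
end

section
/- Let t ∈ ℝ, let w be a Borel measure on [t,∞), and let α ∈ (0,1). Then ∫_{[t,∞)} w([x,∞))^{−α} dw(x) ≤ w([t,∞))^{1−α} / (1−α). -/
open MeasureTheory Set
open scoped ENNReal

/-!
After restricting `w` to `[t, ∞)` (the case of infinite mass being trivial), one has a finite
measure `μ` with tail `G x = μ [x, ∞)`. The distribution of `G` under `μ` satisfies
`μ {G ≤ s} ≤ s` (`measure_tail_le`), as for the probability integral transform. With `M` the total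
mass, the layer-cake formula therefore gives
`∫ G ^ (-α) dμ = ∫_{y > 0} μ {y ≤ G ^ (-α)} dy ≤ ∫_{y > 0} min M (y ^ (-1 / α)) dy`,
and splitting the last integral at `y = M ^ (-α)` evaluates it to `M ^ (1 - α) / (1 - α)`.
-/

lemma measurable_tail (μ : Measure ℝ) : Measurable fun x => μ (Ici x) :=
  Antitone.measurable fun _ _ h => measure_mono (Ici_subset_Ici.2 h)

/-- The set `{G ≤ s}` is a half-line that may be open at its left end; inner regularity by compact
sets, each of which has a minimum, avoids distinguishing the cases. -/
lemma measure_tail_le (μ : Measure ℝ) [IsFiniteMeasure μ] (s : ℝ≥0∞) :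
    μ {x | μ (Ici x) ≤ s} ≤ s := by
  have hm : MeasurableSet {x | μ (Ici x) ≤ s} := measurable_tail μ measurableSet_Iic
  rw [hm.measure_eq_iSup_isCompact]
  refine iSup₂_le fun K hK => iSup_le fun hc => ?_
  rcases K.eq_empty_or_nonempty with rfl | hne
  · simp
  · obtain ⟨a, haK, ha⟩ := hc.exists_isLeast hne
    exact (measure_mono fun x hx => ha hx).trans (hK haK)

lemma lintegral_tail_rpow_le (μ : Measure ℝ) [IsFiniteMeasure μ] (α : ℝ) (hα0 : 0 < α)
    (hα1 : α < 1) :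
    ∫⁻ x, (μ (Ici x)) ^ (-α) ∂μ ≤ (μ univ) ^ (1 - α) / ENNReal.ofReal (1 - α) := by
  rcases eq_or_ne μ 0 with rfl | hμ
  · simp
  set M : ℝ := (μ univ).toReal with hM
  have hMpos : 0 < M := ENNReal.toReal_pos (by simpa using hμ) (measure_ne_top _ _)
  have hMeq : μ univ = ENNReal.ofReal M := (ENNReal.ofReal_toReal (measure_ne_top _ _)).symm
  have h1α : 0 < 1 - α := by linarith
  set f : ℝ → ℝ := fun x => (μ (Ici x)).toReal ^ (-α) with hf
  have hfm : Measurable f := (measurable_tail μ).ennreal_toReal.pow_const _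
  have hpos : ∀ᵐ x ∂μ, μ (Ici x) ≠ 0 := by
    rw [ae_iff]
    simpa using measure_tail_le μ 0
  have hlhs : ∫⁻ x, (μ (Ici x)) ^ (-α) ∂μ = ∫⁻ x, ENNReal.ofReal (f x) ∂μ := by
    refine lintegral_congr_ae ?_
    filter_upwards [hpos] with x hx
    rw [hf, ← ENNReal.ofReal_rpow_of_pos (ENNReal.toReal_pos hx (measure_ne_top _ _)),
      ENNReal.ofReal_toReal (measure_ne_top _ _)]
  have hbound : ∀ y : ℝ, 0 < y → μ {x | y ≤ f x} ≤ ENNReal.ofReal (y ^ (-α)⁻¹) := by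
    intro y hy
    refine (measure_mono fun x hx => ?_).trans (measure_tail_le μ _)
    simp only [mem_setOf_eq, hf] at hx ⊢
    rw [← ENNReal.ofReal_toReal (measure_ne_top μ (Ici x))]
    refine ENNReal.ofReal_le_ofReal ?_
    rcases (ENNReal.toReal_nonneg : 0 ≤ (μ (Ici x)).toReal).eq_or_lt with h0 | h0
    · rw [← h0]; positivity
    · exact (Real.le_rpow_inv_iff_of_neg h0 hy (by linarith)).2 hx
  rw [hlhs, lintegral_eq_lintegral_meas_le μ
    (Filter.Eventually.of_forall fun x => Real.rpow_nonneg ENNReal.toReal_nonneg _)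
    hfm.aemeasurable]
  set c : ℝ := M ^ (-α) with hc
  have hcpos : 0 < c := Real.rpow_pos_of_pos hMpos _
  have hexp : (-α)⁻¹ < -1 := by
    rw [inv_neg, neg_lt_neg_iff]
    exact (one_lt_inv₀ hα0).2 hα1
  have hlow : ∫⁻ y in Ioc 0 c, μ {x | y ≤ f x} ≤ ENNReal.ofReal (M * c) := by
    calc _ ≤ ∫⁻ _ in Ioc 0 c, μ univ := lintegral_mono fun y => measure_mono (subset_univ _)
      _ = _ := by
        rw [setLIntegral_const, Real.volume_Ioc, hMeq, sub_zero, ENNReal.ofReal_mul hMpos.le]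
  have hhigh : ∫⁻ y in Ioi c, μ {x | y ≤ f x} ≤
      ENNReal.ofReal (-c ^ ((-α)⁻¹ + 1) / ((-α)⁻¹ + 1)) := by
    calc _ ≤ ∫⁻ y in Ioi c, ENNReal.ofReal (y ^ (-α)⁻¹) :=
          setLIntegral_mono' measurableSet_Ioi fun y hy => hbound y (hcpos.trans hy)
      _ = _ := by
        rw [← integral_Ioi_rpow_of_lt hexp hcpos, ofReal_integral_eq_lintegral_ofReal
          (integrableOn_Ioi_rpow_of_lt hexp hcpos)]
        filter_upwards [ae_restrict_mem measurableSet_Ioi] with y hy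
        exact Real.rpow_nonneg (hcpos.trans hy).le _
  have hMc : M * c = M ^ (1 - α) := by
    rw [hc, sub_eq_add_neg, Real.rpow_add hMpos, Real.rpow_one]
  have hcM : c ^ ((-α)⁻¹ + 1) = M ^ (1 - α) := by
    rw [hc, ← Real.rpow_mul hMpos.le]
    congr 1
    field_simp
    ring
  have hden : (-α)⁻¹ + 1 = -((1 - α) / α) := by
    field_simp
    ring
  rw [← Ioc_union_Ioi_eq_Ioi hcpos.le,
    lintegral_union measurableSet_Ioi (Ioc_disjoint_Ioi le_rfl), hMeq,
    ENNReal.ofReal_rpow_of_pos hMpos, ← ENNReal.ofReal_div_of_pos h1α]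
  refine (add_le_add hlow hhigh).trans ?_
  rw [hcM, hMc, hden, neg_div_neg_eq, ← ENNReal.ofReal_add (by positivity) (by positivity)]
  refine ENNReal.ofReal_le_ofReal (le_of_eq ?_)
  field_simp
  ring

theorem statement12 (t : ℝ) (w : Measure ℝ) (α : ℝ) (hα0 : 0 < α) (hα1 : α < 1) :
    ∫⁻ x in Set.Ici t, (w (Set.Ici x)) ^ (-α) ∂w ≤
      (w (Set.Ici t)) ^ (1 - α) / ENNReal.ofReal (1 - α) := by
  rcases eq_or_ne (w (Ici t)) ∞ with htop | hfin
  · rw [htop, ENNReal.top_rpow_of_pos (by linarith), ENNReal.top_div_of_ne_top (by simp)]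
    exact le_top
  · have : IsFiniteMeasure (w.restrict (Ici t)) := ⟨by simpa using hfin.lt_top⟩
    have h := lintegral_tail_rpow_le (w.restrict (Ici t)) α hα0 hα1
    rw [Measure.restrict_apply_univ] at h
    refine (setLIntegral_congr_fun measurableSet_Ici fun x hx => ?_).trans_le h
    simp only [Measure.restrict_apply measurableSet_Ici]
    rw [inter_eq_left.2 (Ici_subset_Ici.2 hx)]
end

section
/- Let σ and w be Radon measures on ℝ and let B : 𝓕 × 𝓕 → ℝ be a bilinear form with the Hilbert-kernel property on disjoint supports. If B satisfies the local testing conditions with constants 𝓗, 𝓗* and the Muckenhoupt–Poisson constants [σ,w]_{A₂}*, [w,σ]_{A₂}* are finite, then B satisfies the weak boundedness property |B(1_I, 1_J)| ≤ 𝓦 σ(I)^{1/2} w(J)^{1/2} for all finite intervals I, J, with 𝓦 ≤ C min(𝓗 + [σ,w]_{A₂}*, 𝓗* + [w,σ]_{A₂}*) for an absolute constant C. -/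
/-!
Split `1_J = 1_{J ∩ I} + 1_{J \ I}`. The local testing condition on `I` controls
`B(1_I, 1_{J ∩ I})`, and `J \ I` consists of at most two intervals disjoint from `I`, for which `B` is
given by the kernel `(x - y)⁻¹`. Splitting `I` instead of `J` gives the bound with the dual constants.

For intervals `U`, `V` separated by a point `p`, any `y ∈ U`, `x ∈ V` satisfy
`|x - p|, |y - p| ≤ |x - y|`. The Poisson `A₂` condition dominates the simple one on adjacent
intervals of length `s` at `p`, so `σ(U ∩ B(p,s)) w(V ∩ B(p,s)) ≤ (K s)²` with `K = 3A/2`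
(`A2star.simple`). Summing the kernel over dyadic distances below a threshold `t`, and bounding it by
`1/t` above, gives `∬ |x - y|⁻¹ ≤ σ(U) w(V) / t + 16 K² t` (`lintegral_kernel_le_of_scale`);
optimizing in `t` gives `8 K σ(U)^{1/2} w(V)^{1/2}` (`lintegral_kernel_le`).
-/

open MeasureTheory Set

noncomputable section

/-- `B` has the Hilbert-kernel property on disjoint supports. -/
def HilbertKernelProp (σ w : Measure ℝ) (B : (ℝ → ℝ) → (ℝ → ℝ) → ℝ) : Prop :=
  ∀ f g : ℝ → ℝ, InF f → InF g → DisjointlySupported f g →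
    B f g = hilbertPairing σ w f g

open scoped ENNReal

/-- Dyadic majorant of the kernel: `r⁻¹` is at most `1/t`, or else `r` lies in the dyadic shell
`r < 2t/2ᵏ`, `r⁻¹ ≤ 2ᵏ⁺¹/t` for some `k`. -/
lemma inv_le_dyadic {t r : ℝ} (ht : 0 < t) (hr : 0 ≤ r) :
    ENNReal.ofReal r⁻¹ ≤ ENNReal.ofReal t⁻¹ +
      ∑' k : ℕ, if r < 2 * t / 2 ^ k then ENNReal.ofReal (2 ^ (k + 1) / t) else 0 := by
  rcases le_or_gt t r with h | h
  · exact le_add_right (ENNReal.ofReal_le_ofReal (inv_anti₀ ht h))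
  rcases hr.eq_or_lt with rfl | hr
  · simp
  obtain ⟨n, hn1, hn2⟩ := exists_nat_pow_near (x := t / r) (y := (2 : ℝ))
    ((one_le_div hr).2 h.le) one_lt_two
  refine le_add_left (le_trans ?_ (ENNReal.le_tsum n))
  have hp : (0 : ℝ) < 2 ^ n := by positivity
  rw [if_pos]
  · apply ENNReal.ofReal_le_ofReal
    rw [inv_eq_one_div, div_le_div_iff₀ hr ht]
    rw [div_lt_iff₀ hr] at hn2
    linarith
  · rw [le_div_iff₀ hr] at hn1
    rw [lt_div_iff₀ hp]
    nlinarith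

lemma lintegral_kernel_le_of_scale {σ w : Measure ℝ} {U V : Set ℝ} {p K t : ℝ}
    (hU : MeasurableSet U) (hV : MeasurableSet V)
    (hsep : ∀ x ∈ V, ∀ y ∈ U, |x - p| ≤ |x - y| ∧ |y - p| ≤ |x - y|)
    (hK : ∀ s : ℝ, 0 < s → σ (Metric.ball p s ∩ U) * w (Metric.ball p s ∩ V) ≤
      ENNReal.ofReal ((K * s) ^ 2)) (ht : 0 < t) :
    ∫⁻ x in V, ∫⁻ y in U, ENNReal.ofReal |x - y|⁻¹ ∂σ ∂w ≤
      ENNReal.ofReal t⁻¹ * (σ U * w V) + ENNReal.ofReal (16 * K ^ 2 * t) := by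
  have hpt : ∀ x ∈ V, ∀ y ∈ U, ENNReal.ofReal |x - y|⁻¹ ≤ ENNReal.ofReal t⁻¹ +
      ∑' k : ℕ, (ENNReal.ofReal (2 ^ (k + 1) / t) *
        (Metric.ball p (2 * t / 2 ^ k)).indicator 1 x) *
        (Metric.ball p (2 * t / 2 ^ k)).indicator 1 y := by
    intro x hx y hy
    refine (inv_le_dyadic ht (abs_nonneg _)).trans ?_
    gcongr with k
    obtain ⟨h1, h2⟩ := hsep x hx y hy
    split_ifs with h
    · have hx' : x ∈ Metric.ball p (2 * t / 2 ^ k) := by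
        rw [Metric.mem_ball, Real.dist_eq]; linarith
      have hy' : y ∈ Metric.ball p (2 * t / 2 ^ k) := by
        rw [Metric.mem_ball, Real.dist_eq]; linarith
      simp [hx', hy']
    · exact zero_le
  have hm : ∀ k : ℕ, Measurable
      ((Metric.ball p (2 * t / 2 ^ k)).indicator (1 : ℝ → ℝ≥0∞)) := fun k =>
    measurable_one.indicator Metric.isOpen_ball.measurableSet
  have hi : ∀ (μ : Measure ℝ) (W : Set ℝ) (k : ℕ),
      ∫⁻ y in W, (Metric.ball p (2 * t / 2 ^ k)).indicator (1 : ℝ → ℝ≥0∞) y ∂μ =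
        μ (Metric.ball p (2 * t / 2 ^ k) ∩ W) := by
    intro μ W k
    rw [lintegral_indicator_one Metric.isOpen_ball.measurableSet,
      Measure.restrict_apply Metric.isOpen_ball.measurableSet]
  have hinner : ∀ x ∈ V, ∫⁻ y in U, ENNReal.ofReal |x - y|⁻¹ ∂σ ≤
      ENNReal.ofReal t⁻¹ * σ U + ∑' k : ℕ, (ENNReal.ofReal (2 ^ (k + 1) / t) *
        σ (Metric.ball p (2 * t / 2 ^ k) ∩ U)) *
        (Metric.ball p (2 * t / 2 ^ k)).indicator 1 x := by
    intro x hx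
    refine (setLIntegral_mono' hU (hpt x hx)).trans (le_of_eq ?_)
    rw [lintegral_add_left measurable_const, setLIntegral_const,
      lintegral_tsum (fun k => ((hm k).const_mul _).aemeasurable)]
    congr 1
    refine tsum_congr fun k => ?_
    rw [lintegral_const_mul _ (hm k), hi]
    ring
  refine (setLIntegral_mono' hV hinner).trans ?_
  rw [lintegral_add_left measurable_const, setLIntegral_const,
    lintegral_tsum (fun k => ((hm k).const_mul _).aemeasurable), mul_assoc]
  gcongr
  have hgeo : ∑' k : ℕ, ENNReal.ofReal (8 * K ^ 2 * t * (1 / 2) ^ k) =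
      ENNReal.ofReal (16 * K ^ 2 * t) := by
    rw [← ENNReal.ofReal_tsum_of_nonneg (fun k => by positivity)
      (summable_geometric_two.mul_left _), tsum_mul_left, tsum_geometric_two]
    congr 1; ring
  rw [← hgeo]
  refine ENNReal.tsum_le_tsum fun k => ?_
  rw [lintegral_const_mul _ (hm k), hi, mul_assoc]
  refine (mul_le_mul_right (hK (2 * t / 2 ^ k) (by positivity)) _).trans (le_of_eq ?_)
  rw [← ENNReal.ofReal_mul (by positivity)]
  congr 1
  rw [one_div, inv_pow]
  field_simp
  ring

lemma le_of_forall_scale {X K s : ℝ} (hK : 0 ≤ K) (hs : 0 ≤ s)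
    (h : ∀ t : ℝ, 0 < t → X ≤ t⁻¹ * s ^ 2 + 16 * K ^ 2 * t) : X ≤ 8 * K * s := by
  -- the scale `(s + ε) / (4 (K + ε))` is almost optimal and covers the cases `s = 0` and `K = 0`
  have key : ∀ ε : ℝ, 0 < ε → X ≤ 4 * (K + ε) * s + 4 * K * (s + ε) := by
    intro ε hε
    refine (h ((s + ε) / (4 * (K + ε))) (by positivity)).trans (add_le_add ?_ ?_)
    · rw [inv_div, div_mul_eq_mul_div, div_le_iff₀ (by positivity)]
      have : 0 ≤ 4 * (K + ε) * s * ε := by positivity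
      nlinarith
    · rw [mul_div_assoc', div_le_iff₀ (by positivity)]
      have : 0 ≤ K * (s + ε) * ε := by positivity
      nlinarith
  have hlim : Filter.Tendsto (fun ε : ℝ => 4 * (K + ε) * s + 4 * K * (s + ε))
      (nhdsWithin 0 (Set.Ioi 0)) (nhds (4 * (K + 0) * s + 4 * K * (s + 0))) :=
    (Continuous.tendsto (by fun_prop) 0).mono_left nhdsWithin_le_nhds
  have := ge_of_tendsto hlim (eventually_nhdsWithin_of_forall key)
  linarith

lemma lintegral_kernel_le_s17 {σ w : Measure ℝ} {U V : Set ℝ} {p K : ℝ}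
    (hU : MeasurableSet U) (hV : MeasurableSet V) (hσ : σ U ≠ ∞) (hw : w V ≠ ∞) (hK0 : 0 ≤ K)
    (hsep : ∀ x ∈ V, ∀ y ∈ U, |x - p| ≤ |x - y| ∧ |y - p| ≤ |x - y|)
    (hK : ∀ s : ℝ, 0 < s → σ (Metric.ball p s ∩ U) * w (Metric.ball p s ∩ V) ≤
      ENNReal.ofReal ((K * s) ^ 2)) :
    ∫⁻ x in V, ∫⁻ y in U, ENNReal.ofReal |x - y|⁻¹ ∂σ ∂w ≤
      ENNReal.ofReal (8 * K * (Real.sqrt (σ U).toReal * Real.sqrt (w V).toReal)) := by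
  have h := fun t (ht : (0 : ℝ) < t) => lintegral_kernel_le_of_scale hU hV hsep hK ht
  have hfin : ∀ t : ℝ, ENNReal.ofReal t⁻¹ * (σ U * w V) + ENNReal.ofReal (16 * K ^ 2 * t) ≠ ∞ :=
    fun t => ENNReal.add_ne_top.2 ⟨ENNReal.mul_ne_top ENNReal.ofReal_ne_top
      (ENNReal.mul_ne_top hσ hw), ENNReal.ofReal_ne_top⟩
  rw [← ENNReal.ofReal_toReal (ne_top_of_le_ne_top (hfin 1) (h 1 one_pos))]
  apply ENNReal.ofReal_le_ofReal
  refine le_of_forall_scale hK0 (by positivity) fun t ht => ?_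
  have h2 := ENNReal.toReal_mono (hfin t) (h t ht)
  rw [ENNReal.toReal_add (ENNReal.mul_ne_top ENNReal.ofReal_ne_top
      (ENNReal.mul_ne_top hσ hw)) ENNReal.ofReal_ne_top, ENNReal.toReal_mul, ENNReal.toReal_mul,
    ENNReal.toReal_ofReal (by positivity), ENNReal.toReal_ofReal (by positivity)] at h2
  rwa [mul_pow, Real.sq_sqrt ENNReal.toReal_nonneg, Real.sq_sqrt ENNReal.toReal_nonneg]

/-- The Poisson condition bounds the product of the masses of an interval of length `s` and of a set
`R` that lies outside it and within `3s/2` of its center. -/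
lemma A2star.mass_mul_le {μ ν : Measure ℝ} {A : ℝ} (h : A2star μ ν A) {p s : ℝ} (hs : 0 < s)
    {R : Set ℝ} (hRm : MeasurableSet R) (hR : R ⊆ (Set.Ico p (p + s))ᶜ)
    (hR' : ∀ x ∈ R, |x - (p + s / 2)| ≤ 3 / 2 * s) :
    μ (Set.Ico p (p + s)) * ν R ≤ ENNReal.ofReal ((3 / 2 * A * s) ^ 2) := by
  have h0 := h (Set.Ico p (p + s)) Set.ordConnected_Ico (Metric.isBounded_Ico _ _)
  rw [csInf_Ico (by linarith), csSup_Ico (by linarith)] at h0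
  have h1 : ENNReal.ofReal (((3 / 2 * s) ^ 2)⁻¹) * ν R ≤
      ∫⁻ x in (Set.Ico p (p + s))ᶜ, ENNReal.ofReal (((x - (p + (p + s)) / 2) ^ 2)⁻¹) ∂ν := by
    refine le_trans ?_ (lintegral_mono_set hR)
    rw [← setLIntegral_const]
    refine setLIntegral_mono' hRm fun x hx => ENNReal.ofReal_le_ofReal ?_
    have e : (p + (p + s)) / 2 = p + s / 2 := by ring
    rw [e]
    have hne : x - (p + s / 2) ≠ 0 := by
      intro h0
      exact hR hx ⟨by linarith, by linarith⟩
    apply inv_anti₀ (by positivity)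
    exact sq_le_sq' (by linarith [(abs_le.1 (hR' x hx)).1]) (abs_le.1 (hR' x hx)).2
  have h2 := (mul_le_mul_right h1 (μ (Set.Ico p (p + s)))).trans h0
  have h3 := mul_le_mul_right h2 (ENNReal.ofReal ((3 / 2 * s) ^ 2))
  rw [← ENNReal.ofReal_mul (by positivity)] at h3
  calc μ (Set.Ico p (p + s)) * ν R
      = ENNReal.ofReal ((3 / 2 * s) ^ 2) *
        (μ (Set.Ico p (p + s)) * (ENNReal.ofReal (((3 / 2 * s) ^ 2)⁻¹) * ν R)) := by
        have : ENNReal.ofReal ((3 / 2 * s) ^ 2) * ENNReal.ofReal (((3 / 2 * s) ^ 2)⁻¹) = 1 := by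
          rw [← ENNReal.ofReal_mul (by positivity), mul_inv_cancel₀ (by positivity),
            ENNReal.ofReal_one]
        calc _ = 1 * (μ (Set.Ico p (p + s)) * ν R) := (one_mul _).symm
          _ = _ := by rw [← this]; ring
    _ ≤ _ := h3
    _ = _ := by congr 1; ring

/-- The simple `A₂` condition with constant `K`, tested on pairs of adjacent intervals of equal
length. -/
def AdjacentA2 (σ w : Measure ℝ) (K : ℝ) : Prop :=
  ∀ p s : ℝ, 0 < s →
    σ (Set.Ico (p - s) p) * w (Set.Ico p (p + s)) ≤ ENNReal.ofReal ((K * s) ^ 2) ∧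
    σ (Set.Ico p (p + s)) * w (Set.Ico (p - s) p) ≤ ENNReal.ofReal ((K * s) ^ 2)

lemma AdjacentA2.symm {σ w : Measure ℝ} {K : ℝ} (h : AdjacentA2 σ w K) : AdjacentA2 w σ K :=
  fun p s hs => ⟨by rw [mul_comm]; exact (h p s hs).2, by rw [mul_comm]; exact (h p s hs).1⟩

lemma A2star.simple {σ w : Measure ℝ} {A : ℝ} (h : A2star σ w A) :
    AdjacentA2 σ w (3 / 2 * A) := by
  intro p s hs
  constructor
  · have := h.mass_mul_le (p := p - s) hs (R := Set.Ico p (p + s)) measurableSet_Ico ?_ ?_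
    · rwa [sub_add_cancel] at this
    · rintro x ⟨h1, h2⟩ ⟨h3, h4⟩
      linarith
    · rintro x ⟨h1, h2⟩
      rw [abs_le]; constructor <;> linarith
  · refine h.mass_mul_le hs measurableSet_Ico ?_ ?_
    · rintro x ⟨h1, h2⟩ ⟨h3, h4⟩
      linarith
    · rintro x ⟨h1, h2⟩
      rw [abs_le]; constructor <;> linarith

lemma InF.indicator_Ico (a b : ℝ) : InF ((Set.Ico a b).indicator 1) :=
  Submodule.subset_span ⟨a, b, rfl⟩

lemma abs_hilbertPairing_le (σ w : Measure ℝ) {U V : Set ℝ}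
    (hU : MeasurableSet U) (hV : MeasurableSet V) {M : ℝ} (hM : 0 ≤ M)
    (h : ∫⁻ x in V, ∫⁻ y in U, ENNReal.ofReal |x - y|⁻¹ ∂σ ∂w ≤ ENNReal.ofReal M) :
    |hilbertPairing σ w (U.indicator 1) (V.indicator 1)| ≤ M := by
  rw [← ENNReal.ofReal_le_ofReal_iff hM, ← Real.enorm_eq_ofReal_abs]
  refine le_trans ?_ h
  refine (enorm_integral_le_lintegral_enorm _).trans ?_
  rw [← lintegral_indicator hV]
  refine lintegral_mono fun x => ?_
  by_cases hx : x ∈ V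
  · simp only [hx, Set.indicator_of_mem, Pi.one_apply, mul_one]
    refine (enorm_integral_le_lintegral_enorm _).trans ?_
    rw [← lintegral_indicator hU]
    refine lintegral_mono fun y => ?_
    by_cases hy : y ∈ U
    · simp [hy, Real.enorm_eq_ofReal_abs]
    · simp [hy]
  · simp [hx]

/-- Off-diagonal estimate: the form on two disjoint intervals is controlled by simple `A₂` alone. -/
lemma abs_form_disjoint_le {σ w : Measure ℝ} [IsLocallyFiniteMeasure σ] [IsLocallyFiniteMeasure w]
    {B : (ℝ → ℝ) → (ℝ → ℝ) → ℝ} (hB : HilbertKernelProp σ w B) {K : ℝ} (hK0 : 0 ≤ K)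
    (hK : AdjacentA2 σ w K) {a b c d : ℝ} (h : b ≤ c ∨ d ≤ a) :
    |B ((Set.Ico a b).indicator 1) ((Set.Ico c d).indicator 1)| ≤
      8 * K * (Real.sqrt (σ (Set.Ico a b)).toReal * Real.sqrt (w (Set.Ico c d)).toReal) := by
  rw [hB _ _ (InF.indicator_Ico a b) (InF.indicator_Ico c d)]
  · refine abs_hilbertPairing_le σ w measurableSet_Ico measurableSet_Ico (by positivity) ?_
    rcases h with h | h
    · refine lintegral_kernel_le_s17 (p := b) measurableSet_Ico measurableSet_Ico
        measure_Ico_lt_top.ne measure_Ico_lt_top.ne hK0 ?_ ?_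
      · rintro x ⟨h1, h2⟩ y ⟨h3, h4⟩
        rw [abs_of_nonneg (by linarith : 0 ≤ x - b), abs_of_nonneg (by linarith : 0 ≤ x - y),
          abs_of_nonpos (by linarith : y - b ≤ 0)]
        constructor <;> linarith
      · intro s hs
        refine le_trans ?_ (hK b s hs).1
        gcongr
        · rintro y ⟨h1, h2, h3⟩
          rw [Metric.mem_ball, Real.dist_eq, abs_lt] at h1
          exact ⟨by linarith, h3⟩
        · rintro x ⟨h1, h2, h3⟩
          rw [Metric.mem_ball, Real.dist_eq, abs_lt] at h1
          exact ⟨by linarith, by linarith⟩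
    · refine lintegral_kernel_le_s17 (p := a) measurableSet_Ico measurableSet_Ico
        measure_Ico_lt_top.ne measure_Ico_lt_top.ne hK0 ?_ ?_
      · rintro x ⟨h1, h2⟩ y ⟨h3, h4⟩
        rw [abs_of_nonpos (by linarith : x - a ≤ 0), abs_of_nonpos (by linarith : x - y ≤ 0),
          abs_of_nonneg (by linarith : 0 ≤ y - a)]
        constructor <;> linarith
      · intro s hs
        refine le_trans ?_ (hK a s hs).2
        gcongr
        · rintro y ⟨h1, h2, h3⟩
          rw [Metric.mem_ball, Real.dist_eq, abs_lt] at h1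
          exact ⟨by linarith, by linarith⟩
        · rintro x ⟨h1, h2, h3⟩
          rw [Metric.mem_ball, Real.dist_eq, abs_lt] at h1
          exact ⟨by linarith, by linarith⟩
  · refine ⟨Set.Ico a b, Set.Ico c d, Set.ordConnected_Ico, Set.ordConnected_Ico, ?_,
      Set.support_indicator_subset, Set.support_indicator_subset⟩
    rw [Set.disjoint_left]
    rintro x ⟨h1, h2⟩ ⟨h3, h4⟩
    rcases h with h | h <;> linarith

/-- Decomposition of `[c, d)` into its parts left of, inside and right of `[a, b)`. -/
lemma indicator_Ico_split {a b : ℝ} (hab : a < b) (c d : ℝ) :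
    (Set.Ico c d).indicator (1 : ℝ → ℝ) =
      (Set.Ico c (min d a)).indicator 1 + (Set.Ico (max a c) (min b d)).indicator 1 +
        (Set.Ico (max b c) d).indicator 1 := by
  ext x
  simp only [Set.indicator_apply, Set.mem_Ico, Pi.add_apply, Pi.one_apply, lt_min_iff, max_le_iff]
  rcases lt_or_ge x a with h1 | h1
  · have h2 : x < b := h1.trans hab
    simp [h1, h2, not_le.2 h1, not_le.2 h2]
  rcases lt_or_ge x b with h2 | h2
  · simp [h1, h2, not_lt.2 h1, not_le.2 h2]
  · simp [h1, h2, not_lt.2 h1, not_lt.2 h2]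

lemma indicator_Ico_inter (a b c d : ℝ) :
    (Set.Ico a b).indicator ((Set.Ico (max a c) (min b d)).indicator (1 : ℝ → ℝ)) =
      (Set.Ico (max a c) (min b d)).indicator 1 := by
  rw [Set.indicator_indicator, Set.inter_eq_right.2]
  exact Set.Ico_subset_Ico (le_max_left _ _) (min_le_left _ _)

lemma l2norm_indicator_Ico (μ : Measure ℝ) (a b : ℝ) :
    l2norm μ ((Set.Ico a b).indicator 1) = Real.sqrt (μ (Set.Ico a b)).toReal := by
  have : (fun x => (Set.Ico a b).indicator (1 : ℝ → ℝ) x ^ 2) = (Set.Ico a b).indicator 1 := by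
    ext x
    by_cases hx : x ∈ Set.Ico a b <;> simp [hx]
  rw [l2norm, this, integral_indicator_one measurableSet_Ico, Measure.real]

lemma sqrt_measure_mono (μ : Measure ℝ) [IsLocallyFiniteMeasure μ] {a b : ℝ} {S : Set ℝ}
    (h : S ⊆ Set.Ico a b) : Real.sqrt (μ S).toReal ≤ Real.sqrt (μ (Set.Ico a b)).toReal :=
  Real.sqrt_le_sqrt (ENNReal.toReal_mono measure_Ico_lt_top.ne (measure_mono h))

theorem statement17 :
    ∃ C : ℝ, 0 < C ∧
      ∀ (σ w : Measure ℝ) [IsLocallyFiniteMeasure σ] [IsLocallyFiniteMeasure w]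
        (B : (ℝ → ℝ) → (ℝ → ℝ) → ℝ) (H H' A A' : ℝ),
        0 ≤ H → 0 ≤ H' → 0 ≤ A → 0 ≤ A' →
        BilinearOnF B →
        HilbertKernelProp σ w B →
        LocalTesting σ w B H H' →
        A2star σ w A → A2star w σ A' →
        -- the weak boundedness property with
        -- `𝓦 ≤ C min(𝓗 + [σ,w]_{A₂}*, 𝓗* + [w,σ]_{A₂}*)`:
        ∀ a b c d : ℝ, a < b → c < d →
          |B ((Set.Ico a b).indicator 1) ((Set.Ico c d).indicator 1)| ≤
            C * min (H + A) (H' + A') *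
              Real.sqrt (σ (Set.Ico a b)).toReal * Real.sqrt (w (Set.Ico c d)).toReal := by
  refine ⟨24, by norm_num, ?_⟩
  intro σ w _ _ B H H' A A' hH hH' hA hA' hbil hker htest hA2 hA2' a b c d hab hcd
  have hF : ∀ a b : ℝ, InF ((Set.Ico a b).indicator 1) := InF.indicator_Ico
  set S := Real.sqrt (σ (Set.Ico a b)).toReal with hS
  set W := Real.sqrt (w (Set.Ico c d)).toReal with hW
  have hS0 : 0 ≤ S := Real.sqrt_nonneg _
  have hW0 : 0 ≤ W := Real.sqrt_nonneg _
  have hSW : 0 ≤ S * W := mul_nonneg hS0 hW0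
  rcases min_cases (H + A) (H' + A') with ⟨hmin, _⟩ | ⟨hmin, _⟩ <;> rw [hmin]
  · have hK : (0 : ℝ) ≤ 8 * (3 / 2 * A) := by positivity
    have e : B ((Set.Ico a b).indicator 1) ((Set.Ico c d).indicator 1) =
        B ((Set.Ico a b).indicator 1) ((Set.Ico c (min d a)).indicator 1) +
        B ((Set.Ico a b).indicator 1) ((Set.Ico (max a c) (min b d)).indicator 1) +
        B ((Set.Ico a b).indicator 1) ((Set.Ico (max b c) d).indicator 1) := by
      rw [indicator_Ico_split hab c d,
        hbil.2.2.1 _ _ _ (hF _ _) (Submodule.add_mem _ (hF _ _) (hF _ _)) (hF _ _),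
        hbil.2.2.1 _ _ _ (hF _ _) (hF _ _) (hF _ _)]
    have b1 : |B ((Set.Ico a b).indicator 1) ((Set.Ico c (min d a)).indicator 1)| ≤
        8 * (3 / 2 * A) * (S * W) := by
      refine (abs_form_disjoint_le hker (by positivity) hA2.simple
        (Or.inr (min_le_right _ _))).trans ?_
      gcongr
      exact sqrt_measure_mono w (Set.Ico_subset_Ico le_rfl (min_le_left _ _))
    have b3 : |B ((Set.Ico a b).indicator 1) ((Set.Ico (max b c) d).indicator 1)| ≤
        8 * (3 / 2 * A) * (S * W) := by
      refine (abs_form_disjoint_le hker (by positivity) hA2.simple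
        (Or.inl (le_max_left _ _))).trans ?_
      gcongr
      exact sqrt_measure_mono w (Set.Ico_subset_Ico (le_max_right _ _) le_rfl)
    have b2 : |B ((Set.Ico a b).indicator 1) ((Set.Ico (max a c) (min b d)).indicator 1)| ≤
        H * S * W := by
      have := htest.1 a b _ hab (hF (max a c) (min b d))
      rw [indicator_Ico_inter, l2norm_indicator_Ico] at this
      refine this.trans ?_
      gcongr
      exact sqrt_measure_mono w (Set.Ico_subset_Ico (le_max_right _ _) (min_le_right _ _))
    rw [e]
    refine (abs_add_three _ _ _).trans ?_
    nlinarith [mul_nonneg hH hSW]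
  · have hK : (0 : ℝ) ≤ 8 * (3 / 2 * A') := by positivity
    have e : B ((Set.Ico a b).indicator 1) ((Set.Ico c d).indicator 1) =
        B ((Set.Ico a (min b c)).indicator 1) ((Set.Ico c d).indicator 1) +
        B ((Set.Ico (max c a) (min d b)).indicator 1) ((Set.Ico c d).indicator 1) +
        B ((Set.Ico (max d a) b).indicator 1) ((Set.Ico c d).indicator 1) := by
      rw [indicator_Ico_split hcd a b,
        hbil.1 _ _ _ (Submodule.add_mem _ (hF _ _) (hF _ _)) (hF _ _) (hF _ _),
        hbil.1 _ _ _ (hF _ _) (hF _ _) (hF _ _)]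
    have b1 : |B ((Set.Ico a (min b c)).indicator 1) ((Set.Ico c d).indicator 1)| ≤
        8 * (3 / 2 * A') * (S * W) := by
      refine (abs_form_disjoint_le hker (by positivity) hA2'.simple.symm
        (Or.inl (min_le_right _ _))).trans ?_
      gcongr
      exact sqrt_measure_mono σ (Set.Ico_subset_Ico le_rfl (min_le_left _ _))
    have b3 : |B ((Set.Ico (max d a) b).indicator 1) ((Set.Ico c d).indicator 1)| ≤
        8 * (3 / 2 * A') * (S * W) := by
      refine (abs_form_disjoint_le hker (by positivity) hA2'.simple.symm
        (Or.inr (le_max_left _ _))).trans ?_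
      gcongr
      exact sqrt_measure_mono σ (Set.Ico_subset_Ico (le_max_right _ _) le_rfl)
    have b2 : |B ((Set.Ico (max c a) (min d b)).indicator 1) ((Set.Ico c d).indicator 1)| ≤
        H' * S * W := by
      have := htest.2 c d _ hcd (hF (max c a) (min d b))
      rw [indicator_Ico_inter, l2norm_indicator_Ico] at this
      refine this.trans ?_
      gcongr
      exact sqrt_measure_mono σ (Set.Ico_subset_Ico (le_max_right _ _) (min_le_right _ _))
    rw [e]
    refine (abs_add_three _ _ _).trans ?_
    nlinarith [mul_nonneg hH' hSW]
end
end

section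
/- Let 1 < p < ∞ with conjugate exponent p′, let σ and w be locally finite Borel measures on ℝ^d, and let 𝒟 be the standard dyadic grid on ℝ^d. To each Q ∈ 𝒟 associate a number λ_Q ≥ 0 and two distinct dyadic children Q₊ ≠ Q₋ of Q. Define Λ(f,g) := Σ_{Q∈𝒟} λ_Q (∫_{Q₊} f dσ)(∫_{Q₋} g dw) and, for R ∈ 𝒟, Λ_R(f,g) := Σ_{Q⊆R} λ_Q (∫_{Q₊} f dσ)(∫_{Q₋} g dw). Then ‖Λ‖ := sup{|Λ(f,g)| : ‖f‖_{L^p(σ)} = ‖g‖_{L^{p′}(w)} = 1} is finite if and only if all three of the following are finite: 𝒰 := sup_{Q∈𝒟} λ_Q σ(Q₊)^{1/p′} w(Q₋)^{1/p}, 𝒯 := sup{σ(Q)^{−1/p} |Λ_Q(1,g)| : Q ∈ 𝒟, ‖g‖_{L^{p′}(w)} = 1}, and 𝒯* := sup{w(Q)^{−1/p′} |Λ_Q(f,1)| : Q ∈ 𝒟, ‖f‖_{L^p(σ)} = 1}; moreover ‖Λ‖ is comparable to 𝒰 + 𝒯 + 𝒯* up to constants depending only on p. -/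
/-!
The bounds `𝒰, 𝒯, 𝒯* ≤ ‖Λ‖` follow by testing the form on indicators of cubes, since the children
of a cube `Q ⊆ R` lie in `R`.

For the upper bound it suffices to treat a finite set of cubes `Q`. Let `𝒬` be the finite family of
the children `Q₊, Q₋` involved. For a cube `R ∈ 𝒬`, let `2 ^ k` be the dyadic size of the largest
`σ`-average of `f` over a member of `𝒬` containing `R`, and let `P_f(R) ⊇ R` be the maximal member
on which the average exceeds `2 ^ k` (`IsLevel`); define `P_g(R)` in the same way from `g` and `w`.
These maximal cubes satisfy the Carleson estimate `∑ 2 ^ (k p) σ(P) ≲ ∫ f ^ p dσ` (`carleson`).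

A cube of `𝒬` that strictly contains a child of `Q` contains `Q`. So three cases exhaust all `Q`.

* `P_f(Q₊) = Q₊` and `P_g(Q₋) = Q₋`: the term is at most `𝒰` times the product of two Carleson
  terms, and Hölder's inequality sums them (`diag_sum`).
* `P = P_f(Q₊)` contains both `Q` and `P_g(Q₋)`: the average of `f` over `Q₊` is at most
  `2 ^ (k + 1)`, and a maximal cube of level `k + 1` meeting `Q₋` lies inside `Q₋`, for otherwise it
  would contain `Q`, hence `Q₊`. So `g` may be replaced by its averages over these next-level cubes
  without changing the integral over `Q₋`. The condition `𝒯` on `P` and Hölder's inequality over all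
  `(k, P)` (`corona_sum`) reduce the estimate to a bound for the averages of `g` over the next-level
  cubes; because `P_g(Q₋) ⊆ P`, those cubes have overlap at most two inside each `g`-maximal cube,
  and the Carleson estimate for `g` gives that bound (`relevant_sum`).
* `P_g(Q₋)` contains both `Q` and `P_f(Q₊)`: the mirror image, with `𝒯*`.
-/


open MeasureTheory Set
open scoped ENNReal

noncomputable section

/-- Index of a standard dyadic cube in `ℝ^d`: a generation `k : ℤ` and a position
`n : Fin d → ℤ`; the corresponding cube is `∏_i [n i · 2^k, (n i + 1) · 2^k)`. -/
abbrev DIdx (d : ℕ) := ℤ × (Fin d → ℤ)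

/-- The standard dyadic cube in `ℝ^d` with index `q`. -/
def dCube (d : ℕ) (q : DIdx d) : Set (Fin d → ℝ) :=
  {x | ∀ i, (q.2 i : ℝ) * 2 ^ q.1 ≤ x i ∧ x i < ((q.2 i : ℝ) + 1) * 2 ^ q.1}

/-- `c` is (the index of) a dyadic child of `q`. -/
def IsChildIdx (d : ℕ) (q c : DIdx d) : Prop :=
  c.1 = q.1 - 1 ∧ ∀ i, c.2 i = 2 * q.2 i ∨ c.2 i = 2 * q.2 i + 1

/-- The `L^p` "norm" of an `ℝ≥0∞`-valued function. -/
def lpNorm (d : ℕ) (μ : Measure (Fin d → ℝ)) (p : ℝ) (f : (Fin d → ℝ) → ℝ≥0∞) : ℝ≥0∞ :=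
  (∫⁻ x, f x ^ p ∂μ) ^ (1 / p)

/-- The positive bilinear form
`Λ(f,g) = Σ_Q λ_Q (∫_{Q₊} f dσ) (∫_{Q₋} g dw)`. -/
def posForm (d : ℕ) (σ w : Measure (Fin d → ℝ)) (lam : DIdx d → ℝ)
    (plusI minusI : DIdx d → DIdx d) (f g : (Fin d → ℝ) → ℝ≥0∞) : ℝ≥0∞ :=
  ∑' q : DIdx d, ENNReal.ofReal (lam q) * (∫⁻ x in dCube d (plusI q), f x ∂σ) *
    (∫⁻ x in dCube d (minusI q), g x ∂w)

/-- The localized form `Λ_R(f,g) = Σ_{Q ⊆ R} λ_Q (∫_{Q₊} f dσ) (∫_{Q₋} g dw)`. -/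
def posFormLoc (d : ℕ) (σ w : Measure (Fin d → ℝ)) (lam : DIdx d → ℝ)
    (plusI minusI : DIdx d → DIdx d) (r : DIdx d) (f g : (Fin d → ℝ) → ℝ≥0∞) : ℝ≥0∞ :=
  ∑' q : DIdx d,
    Set.indicator {q : DIdx d | dCube d q ⊆ dCube d r}
      (fun q => ENNReal.ofReal (lam q) * (∫⁻ x in dCube d (plusI q), f x ∂σ) *
        (∫⁻ x in dCube d (minusI q), g x ∂w)) q

/-! ### Maximal cubes at dyadic levels -/

section Abstract

open Classical

variable {X : Type*}

/-- The dyadic level `2 ^ k`, as an extended nonnegative real. -/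
def lv (k : ℤ) : ℝ≥0∞ := (2 : ℝ≥0∞) ^ (k : ℝ)

lemma lv_pos (k : ℤ) : 0 < lv k := ENNReal.rpow_pos (by norm_num) (by norm_num)

lemma lv_ne_top (k : ℤ) : lv k ≠ ⊤ := ENNReal.rpow_ne_top_of_ne_zero (by norm_num) (by norm_num)

lemma lv_mono {j k : ℤ} (h : j ≤ k) : lv j ≤ lv k :=
  ENNReal.rpow_le_rpow_of_exponent_le (by norm_num) (by exact_mod_cast h)

lemma lv_add (j k : ℤ) : lv (j + k) = lv j * lv k := by
  unfold lv
  push_cast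
  exact ENNReal.rpow_add _ _ (by norm_num) (by norm_num)

lemma lv_one : lv 1 = 2 := by simp [lv]

lemma lv_succ (k : ℤ) : lv (k + 1) = 2 * lv k := by rw [lv_add, lv_one, mul_comm]

lemma lv_eq_two_mul (k : ℤ) : lv k = 2 * lv (k - 1) := by rw [← lv_succ, sub_add_cancel]

lemma exists_lv {t : ℝ≥0∞} (h0 : t ≠ 0) (ht : t ≠ ⊤) : ∃ k : ℤ, lv k < t ∧ t ≤ lv (k + 1) := by
  obtain ⟨k, hk⟩ := ENNReal.exists_mem_Ioc_zpow (y := 2) h0 ht (by norm_num) (by norm_num)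
  refine ⟨k, ?_, ?_⟩
  · rw [lv, ENNReal.rpow_intCast]; exact hk.1
  · rw [lv, ENNReal.rpow_intCast]; exact hk.2

/-- `P` is a maximal member of the family `𝒬` among those on which `a` exceeds `2 ^ k`.
The function `a` will be the average of a fixed function over the cube. -/
structure IsMaxCube (𝒬 : Finset (Set X)) (a : Set X → ℝ≥0∞) (k : ℤ) (P : Set X) : Prop where
  mem : P ∈ 𝒬
  lt : lv k < a P
  max : ∀ R ∈ 𝒬, P ⊆ R → lv k < a R → R ⊆ P

/-- The supremum of `a` over the members of `𝒬` containing `R` lies in `(2 ^ k, 2 ^ (k + 1)]`,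
and `P ⊇ R` is a maximal member of `𝒬` with `a P > 2 ^ k`. -/
structure IsLevel (𝒬 : Finset (Set X)) (a : Set X → ℝ≥0∞) (R : Set X) (k : ℤ) (P : Set X) :
    Prop where
  top : IsMaxCube 𝒬 a k P
  sub : R ⊆ P
  le : ∀ R' ∈ 𝒬, R ⊆ R' → a R' ≤ lv (k + 1)

/-- Any two intersecting members of `𝒬` are comparable. -/
def Nested (𝒬 : Finset (Set X)) : Prop :=
  ∀ R ∈ 𝒬, ∀ R' ∈ 𝒬, (R ∩ R').Nonempty → R ⊆ R' ∨ R' ⊆ R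

variable {𝒬 : Finset (Set X)} {a : Set X → ℝ≥0∞}

lemma IsMaxCube.subset {k : ℤ} {P R : Set X} (hN : Nested 𝒬) (h : IsMaxCube 𝒬 a k P) (hR : R ∈ 𝒬)
    (hk : lv k < a R) (hne : (P ∩ R).Nonempty) : R ⊆ P := by
  rcases hN P h.mem R hR hne with h1 | h1
  · exact h.max R hR h1 hk
  · exact h1

lemma IsMaxCube.eq {k : ℤ} {P P' : Set X} (hN : Nested 𝒬) (h : IsMaxCube 𝒬 a k P)
    (h' : IsMaxCube 𝒬 a k P') (hne : (P ∩ P').Nonempty) : P = P' :=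
  Subset.antisymm (h'.subset hN h.mem h.lt (by rwa [inter_comm])) (h.subset hN h'.mem h'.lt hne)

lemma exists_isMaxCube {k : ℤ} {R : Set X} (hR : R ∈ 𝒬) (hk : lv k < a R) :
    ∃ P, IsMaxCube 𝒬 a k P ∧ R ⊆ P := by
  obtain ⟨P, hRP, hP⟩ := Finset.exists_le_maximal (𝒬.filter fun R => lv k < a R) (a := R)
    (by simp [hR, hk])
  have h1 := Finset.mem_filter.1 hP.prop
  exact ⟨P, ⟨h1.1, h1.2, fun R' hR' hs hlt => hP.le_of_ge (by simp [hR', hlt]) hs⟩, hRP⟩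

lemma exists_isLevel {R : Set X} (hR : R ∈ 𝒬) (h0 : a R ≠ 0) (hfin : ∀ R' ∈ 𝒬, a R' ≠ ⊤) :
    ∃ k P, IsLevel 𝒬 a R k P := by
  obtain ⟨M, hM, hmax⟩ := Finset.exists_max_image (𝒬.filter fun R' => R ⊆ R') a
    ⟨R, by simp [hR]⟩
  have hM' := Finset.mem_filter.1 hM
  have hRM : a R ≤ a M := hmax R (by simp [hR])
  obtain ⟨k, hk1, hk2⟩ := exists_lv (t := a M)
    (fun h => h0 (by simpa [h] using hRM)) (hfin M hM'.1)
  obtain ⟨P, hP, hMP⟩ := exists_isMaxCube hM'.1 hk1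
  exact ⟨k, P, hP, hM'.2.trans hMP, fun R' hR' hs => (hmax R' (by simp [hR', hs])).trans hk2⟩

lemma IsLevel.mono {R R' P P' : Set X} {k k' : ℤ} (hN : Nested 𝒬) (h : IsLevel 𝒬 a R k P)
    (h' : IsLevel 𝒬 a R' k' P') (hs : R ⊆ R') (hne : R.Nonempty) : P ⊆ P' := by
  have hk : k' ≤ k := by
    by_contra! hlt
    have h1 := h.le P' h'.top.mem (hs.trans h'.sub)
    have h2 : lv (k + 1) ≤ lv k' := lv_mono (by omega)
    exact absurd h'.top.lt (not_lt.2 (h1.trans h2))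
  refine h'.top.subset hN h.top.mem ((lv_mono hk).trans_lt h.top.lt) ?_
  obtain ⟨x, hx⟩ := hne
  exact ⟨x, h'.sub (hs hx), h.sub hx⟩

/-! ### The Carleson estimate for maximal cubes -/

/-- The constant in the geometric sum `∑_{2 ^ (k - 1) < t} 2 ^ (k b) ≤ geoC b * t ^ b`. -/
def geoC (b : ℝ) : ℝ≥0∞ := 2 ^ b * (1 - (2 : ℝ≥0∞) ^ (-b))⁻¹

lemma geoC_ne_top {b : ℝ} (hb : 0 < b) : geoC b ≠ ⊤ := by
  unfold geoC
  refine ENNReal.mul_ne_top (ENNReal.rpow_ne_top_of_nonneg hb.le (by norm_num)) ?_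
  rw [ENNReal.inv_ne_top]
  exact (tsub_pos_of_lt (ENNReal.rpow_lt_one_of_one_lt_of_neg (by norm_num) (by linarith))).ne'

lemma geo_sum {b : ℝ} (hb : 0 < b) (t : ℝ≥0∞) (F : Finset ℤ) :
    ∑ k ∈ F, (if lv (k - 1) < t then lv k ^ b else 0) ≤ geoC b * t ^ b := by
  rcases eq_or_ne t 0 with rfl | h0
  · simp
  rcases eq_or_ne t ⊤ with rfl | ht
  · have : geoC b ≠ 0 := by
      unfold geoC
      refine mul_ne_zero (ENNReal.rpow_pos (by norm_num) (by norm_num)).ne' ?_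
      rw [ENNReal.inv_ne_zero]
      exact ne_top_of_le_ne_top ENNReal.one_ne_top tsub_le_self
    rw [ENNReal.top_rpow_of_pos hb, ENNReal.mul_top this]
    exact le_top
  obtain ⟨m, hm1, hm2⟩ := exists_lv h0 ht
  have hlt : ∀ k, lv (k - 1) < t → k ≤ m + 1 := by
    intro k hk
    by_contra! h
    exact absurd hk (not_lt.2 (hm2.trans (lv_mono (by omega))))
  calc ∑ k ∈ F, (if lv (k - 1) < t then lv k ^ b else 0)
      = ∑ k ∈ F.filter (fun k => lv (k - 1) < t), lv k ^ b := by rw [Finset.sum_filter]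
    _ = ∑ n ∈ (F.filter (fun k => lv (k - 1) < t)).image (fun k => (m + 1 - k).toNat),
          lv (m + 1 - (n : ℤ)) ^ b := by
        rw [Finset.sum_image]
        · refine Finset.sum_congr rfl fun k hk => ?_
          have := hlt k (Finset.mem_filter.1 hk).2
          congr 2
          omega
        · intro k hk k' hk' h
          have := hlt k (Finset.mem_filter.1 hk).2
          have := hlt k' (Finset.mem_filter.1 hk').2
          simp only at h
          omega
    _ ≤ ∑' n : ℕ, lv (m + 1 - (n : ℤ)) ^ b := ENNReal.sum_le_tsum _
    _ = ∑' n : ℕ, lv (m + 1) ^ b * ((2 : ℝ≥0∞) ^ (-b)) ^ n := by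
        refine tsum_congr fun n => ?_
        rw [sub_eq_add_neg, lv_add, ENNReal.mul_rpow_of_nonneg _ _ hb.le]
        congr 1
        rw [lv, ← ENNReal.rpow_mul, ← ENNReal.rpow_mul_natCast]
        congr 1
        push_cast
        ring
    _ = lv (m + 1) ^ b * (1 - (2 : ℝ≥0∞) ^ (-b))⁻¹ := by
        rw [ENNReal.tsum_mul_left, ENNReal.tsum_geometric]
    _ ≤ (2 * t) ^ b * (1 - (2 : ℝ≥0∞) ^ (-b))⁻¹ := by
        gcongr
        rw [lv_succ]
        gcongr
    _ = geoC b * t ^ b := by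
        rw [ENNReal.mul_rpow_of_nonneg _ _ hb.le, geoC]
        ring

variable [MeasurableSpace X]

/-- The average of `f` over `R` with respect to `μ` (zero if `μ R = 0`). -/
def av (μ : Measure X) (f : X → ℝ≥0∞) (R : Set X) : ℝ≥0∞ := ⨍⁻ x in R, f x ∂μ

lemma av_mul {μ : Measure X} {f : X → ℝ≥0∞} {R : Set X} (h : μ R ≠ ⊤) :
    av μ f R * μ R = ∫⁻ x in R, f x ∂μ := by
  rw [mul_comm]
  exact measure_mul_setLAverage f h

/-- The constant in the Carleson estimate `∑ 2 ^ (k p) μ P ≤ carC p * ∫ f ^ p`. -/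
def carC (p : ℝ) : ℝ≥0∞ := 2 * geoC (p - 1)

lemma carC_ne_top {p : ℝ} (hp : 1 < p) : carC p ≠ ⊤ :=
  ENNReal.mul_ne_top (by norm_num) (geoC_ne_top (by linarith))

/-- On a set where the average of `f` exceeds `2 ^ k`, at least half of the mass `2 ^ k * μ P` comes
from `{f > 2 ^ (k - 1)}`, as the rest contributes at most `2 ^ (k - 1) * μ P`. -/
lemma lv_mul_measure_le {μ : Measure X} {f : X → ℝ≥0∞} (hf : Measurable f) {P : Set X}
    (hP : μ P ≠ ⊤) {k : ℤ} (hk : lv k < av μ f P) :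
    lv k * μ P ≤ 2 * ∫⁻ x in P, (if lv (k - 1) < f x then f x else 0) ∂μ := by
  have h1 : lv k * μ P ≤ ∫⁻ x in P, f x ∂μ := by
    rw [← av_mul hP]
    gcongr
  have hm : Measurable fun x => (if lv (k - 1) < f x then f x else 0) :=
    Measurable.ite (measurableSet_lt measurable_const hf) hf measurable_const
  have h2 : ∫⁻ x in P, f x ∂μ ≤
      ∫⁻ x in P, (if lv (k - 1) < f x then f x else 0) ∂μ + lv (k - 1) * μ P := by
    rw [← setLIntegral_const, ← lintegral_add_left hm]
    refine lintegral_mono fun x => ?_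
    split_ifs with h
    · exact le_self_add
    · simpa using h
  have h3 : lv k * μ P = lv (k - 1) * μ P + lv (k - 1) * μ P := by
    rw [lv_eq_two_mul k]; ring
  have h4 : lv (k - 1) * μ P ≤ ∫⁻ x in P, (if lv (k - 1) < f x then f x else 0) ∂μ := by
    have h5 := h1.trans h2
    rw [h3] at h5
    exact (ENNReal.add_le_add_iff_right (ENNReal.mul_ne_top (lv_ne_top _) hP)).1 h5
  calc lv k * μ P = 2 * (lv (k - 1) * μ P) := by rw [h3]; ring
    _ ≤ _ := by gcongr

/-- The Carleson embedding: maximal cubes of all levels, weighted by their levels, are controlled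
by the `L^p` norm of `f`. Maximal cubes of a fixed level are disjoint, so at each point this is a
geometric sum in the level. -/
lemma carleson {μ : Measure X} {f : X → ℝ≥0∞} (hf : Measurable f) {p : ℝ} (hp : 1 < p)
    (hN : Nested 𝒬) (hm : ∀ R ∈ 𝒬, MeasurableSet R) (hfin : ∀ R ∈ 𝒬, μ R ≠ ⊤)
    (K : Finset (ℤ × Set X)) (hK : ∀ t ∈ K, IsMaxCube 𝒬 (av μ f) t.1 t.2) :
    ∑ t ∈ K, lv t.1 ^ p * μ t.2 ≤ carC p * ∫⁻ x, f x ^ p ∂μ := by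
  have hb : 0 < p - 1 := by linarith
  have hmk : ∀ k, Measurable fun x => (if lv (k - 1) < f x then lv k ^ (p - 1) else 0) * f x :=
    fun k => (Measurable.ite (measurableSet_lt measurable_const hf) measurable_const
      measurable_const).mul hf
  have hmf : ∀ k, Measurable fun x => (if lv (k - 1) < f x then f x else 0) := fun k =>
    Measurable.ite (measurableSet_lt measurable_const hf) hf measurable_const
  calc ∑ t ∈ K, lv t.1 ^ p * μ t.2
      ≤ ∑ t ∈ K, 2 * ∫⁻ x, t.2.indicator
          (fun x => (if lv (t.1 - 1) < f x then lv t.1 ^ (p - 1) else 0) * f x) x ∂μ := by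
        refine Finset.sum_le_sum fun t ht => ?_
        have hT := hK t ht
        rw [lintegral_indicator (hm _ hT.mem)]
        calc lv t.1 ^ p * μ t.2 = lv t.1 ^ (p - 1) * (lv t.1 * μ t.2) := by
              rw [← mul_assoc]
              congr 1
              conv_rhs => rw [← ENNReal.rpow_one (lv t.1), ← ENNReal.rpow_mul,
                ← ENNReal.rpow_add _ _ (lv_pos _).ne' (lv_ne_top _)]
              congr 1; ring
          _ ≤ lv t.1 ^ (p - 1) * (2 * ∫⁻ x in t.2, (if lv (t.1 - 1) < f x then f x else 0) ∂μ) := by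
              exact mul_le_mul' le_rfl (lv_mul_measure_le hf (hfin _ hT.mem) hT.lt)
          _ = 2 * ∫⁻ x in t.2,
                lv t.1 ^ (p - 1) * (if lv (t.1 - 1) < f x then f x else 0) ∂μ := by
              rw [lintegral_const_mul _ (hmf _)]
              ring
          _ = _ := by
              congr 2
              ext x
              split_ifs <;> simp
    _ = 2 * ∫⁻ x, ∑ t ∈ K, t.2.indicator
          (fun x => (if lv (t.1 - 1) < f x then lv t.1 ^ (p - 1) else 0) * f x) x ∂μ := by
        rw [← Finset.mul_sum, lintegral_finsetSum]
        exact fun t ht => (hmk _).indicator (hm _ (hK t ht).mem)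
    _ ≤ 2 * ∫⁻ x, geoC (p - 1) * f x ^ p ∂μ := by
        gcongr with x
        calc ∑ t ∈ K, t.2.indicator
              (fun x => (if lv (t.1 - 1) < f x then lv t.1 ^ (p - 1) else 0) * f x) x
            = ∑ t ∈ K.filter (fun t => x ∈ t.2),
                (if lv (t.1 - 1) < f x then lv t.1 ^ (p - 1) else 0) * f x := by
              rw [Finset.sum_filter]
              refine Finset.sum_congr rfl fun t _ => ?_
              rw [Set.indicator_apply]
          _ = ∑ k ∈ (K.filter (fun t => x ∈ t.2)).image Prod.fst,
                (if lv (k - 1) < f x then lv k ^ (p - 1) else 0) * f x := by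
              rw [Finset.sum_image]
              intro s hs t ht hst
              have hs' := Finset.mem_filter.1 hs
              have ht' := Finset.mem_filter.1 ht
              have h1 := hK s hs'.1
              have h2 := hK t ht'.1
              rw [← hst] at h2
              exact Prod.ext hst (h1.eq hN h2 ⟨x, hs'.2, ht'.2⟩)
          _ ≤ (geoC (p - 1) * f x ^ (p - 1)) * f x := by
              rw [← Finset.sum_mul]
              gcongr
              exact geo_sum hb _ _
          _ = geoC (p - 1) * f x ^ p := by
              rw [mul_assoc]
              congr 1
              conv_lhs => rw [← ENNReal.rpow_one (f x), ← ENNReal.rpow_mul,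
                ← ENNReal.rpow_add_of_nonneg _ _ (by linarith) zero_le_one]
              congr 1; ring
    _ = carC p * ∫⁻ x, f x ^ p ∂μ := by
        rw [lintegral_const_mul _ (hf.pow_const p), carC, mul_assoc]

/-! ### Summing over a corona -/

/-- Summation of the averages of `g` over the maximal cubes `P'` of the level after `k` (with
respect to `af`) lying under a `g`-maximal cube `G ⊆ P`. Entries `t` stand for `((k, P), P')`.
Grouping the `P'` by the `g`-maximal cube above them, those in one group are disjoint, apart from
the one that may coincide with that `g`-maximal cube, so the Carleson estimate for `g` applies. -/
lemma relevant_sum {w : Measure X} {g : X → ℝ≥0∞} (hg : Measurable g) {p' : ℝ} (hp' : 1 < p')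
    (hN : Nested 𝒬) (hm : ∀ R ∈ 𝒬, MeasurableSet R) (hne : ∀ R ∈ 𝒬, R.Nonempty)
    (hfin : ∀ R ∈ 𝒬, w R ≠ ⊤) (hav : ∀ R ∈ 𝒬, av w g R ≠ ⊤)
    {af : Set X → ℝ≥0∞} (𝕋 : Finset ((ℤ × Set X) × Set X))
    (h1 : ∀ t ∈ 𝕋, IsMaxCube 𝒬 af t.1.1 t.1.2) (h2 : ∀ t ∈ 𝕋, IsMaxCube 𝒬 af (t.1.1 + 1) t.2)
    (h3 : ∀ t ∈ 𝕋, av w g t.2 ≠ 0)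
    (h4 : ∀ t ∈ 𝕋, ∃ B C k G, IsLevel 𝒬 (av w g) B k G ∧ t.2 ⊆ B ∧ B ⊂ C ∧ C ⊆ t.1.2 ∧
      G ⊆ t.1.2) :
    ∑ t ∈ 𝕋, av w g t.2 ^ p' * w t.2 ≤ 2 * (2 ^ p' * carC p') * ∫⁻ x, g x ^ p' ∂w := by
  have hp0 : 0 ≤ p' := by linarith
  have hex : ∀ R : Set X, ∃ k P, R ∈ 𝒬 → av w g R ≠ 0 → IsLevel 𝒬 (av w g) R k P := by
    intro R
    by_cases h : R ∈ 𝒬 ∧ av w g R ≠ 0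
    · obtain ⟨k, P, hkP⟩ := exists_isLevel h.1 h.2 hav
      exact ⟨k, P, fun _ _ => hkP⟩
    · exact ⟨0, ∅, fun a b => absurd ⟨a, b⟩ h⟩
  choose j G hjG using hex
  have hL : ∀ t ∈ 𝕋, IsLevel 𝒬 (av w g) t.2 (j t.2) (G t.2) :=
    fun t ht => hjG _ (h2 t ht).mem (h3 t ht)
  have hGP : ∀ t ∈ 𝕋, G t.2 ⊆ t.1.2 := by
    intro t ht
    obtain ⟨B, C, k, G', hB, hs, -, -, hG⟩ := h4 t ht
    exact ((hL t ht).mono hN hB hs (hne _ (h2 t ht).mem)).trans hG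
  -- the `g`-maximal cube above `P'`, and whether it is `P'` itself
  let φ : (ℤ × Set X) × Set X → (ℤ × Set X) × Bool :=
    fun t => ((j t.2, G t.2), decide (t.2 = G t.2))
  have key : ∀ s ∈ 𝕋, ∀ t ∈ 𝕋, φ s = φ t → s.1.1 < t.1.1 → Disjoint s.2 t.2 := by
    intro s hs t ht hst hlt
    by_contra hnd
    rw [Set.not_disjoint_iff_nonempty_inter] at hnd
    obtain ⟨x, hxs, hxt⟩ := hnd
    simp only [φ, Prod.mk.injEq, decide_eq_decide] at hst
    obtain ⟨⟨-, hG⟩, hiff⟩ := hst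
    have hxP : x ∈ t.1.2 := hGP t ht ((hL t ht).sub hxt)
    have hPs : t.1.2 ⊆ s.2 := (h2 s hs).subset hN (h1 t ht).mem
      ((lv_mono (by omega)).trans_lt (h1 t ht).lt) ⟨x, hxs, hxP⟩
    have hsG : s.2 = G s.2 := Subset.antisymm (hL s hs).sub
      (by rw [hG]; exact (hGP t ht).trans hPs)
    have htG := hiff.1 hsG
    obtain ⟨B, C, k, G', hB, hsB, hBC, hCP, -⟩ := h4 t ht
    have : C ⊆ B := by
      refine hCP.trans (hPs.trans ?_)
      rw [hsG, hG, ← htG]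
      exact hsB
    exact hBC.2 this
  have hdisj : ∀ y, ((𝕋.filter fun t => φ t = y : Finset _) : Set _).PairwiseDisjoint
      (fun t : (ℤ × Set X) × Set X => t.2) := by
    intro y s hs t ht hst
    have hs' := Finset.mem_filter.1 (Finset.mem_coe.1 hs)
    have ht' := Finset.mem_filter.1 (Finset.mem_coe.1 ht)
    have he : φ s = φ t := hs'.2.trans ht'.2.symm
    rcases lt_trichotomy s.1.1 t.1.1 with h | h | h
    · exact key s hs'.1 t ht'.1 he h
    · by_contra hnd
      simp only [Function.onFun] at hnd
      rw [Set.not_disjoint_iff_nonempty_inter] at hnd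
      have e2 : s.2 = t.2 := (h2 s hs'.1).eq hN (by rw [h]; exact h2 t ht'.1) hnd
      have e1 : s.1.2 = t.1.2 := by
        obtain ⟨x, hxs, hxt⟩ := hnd
        exact (h1 s hs'.1).eq hN (by rw [h]; exact h1 t ht'.1)
          ⟨x, hGP s hs'.1 ((hL s hs'.1).sub hxs), hGP t ht'.1 ((hL t ht'.1).sub hxt)⟩
      exact hst (Prod.ext (Prod.ext h e1) e2)
    · exact (key t ht'.1 s hs'.1 he.symm h).symm
  set J := 𝕋.image fun t => (j t.2, G t.2) with hJ
  calc ∑ t ∈ 𝕋, av w g t.2 ^ p' * w t.2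
      ≤ ∑ t ∈ 𝕋, 2 ^ p' * (lv (j t.2) ^ p' * w t.2) := by
        refine Finset.sum_le_sum fun t ht => ?_
        rw [← mul_assoc, ← ENNReal.mul_rpow_of_nonneg _ _ hp0, ← lv_succ]
        gcongr
        exact (hL t ht).le _ (h2 t ht).mem Subset.rfl
    _ = ∑ y ∈ J ×ˢ (Finset.univ : Finset Bool), ∑ t ∈ 𝕋.filter (fun t => φ t = y),
          2 ^ p' * (lv (j t.2) ^ p' * w t.2) := by
        rw [Finset.sum_fiberwise_of_maps_to]
        intro t ht
        simp only [Finset.mem_product, Finset.mem_univ, and_true]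
        exact Finset.mem_image_of_mem (fun t : (ℤ × Set X) × Set X => (j t.2, G t.2)) ht
    _ ≤ ∑ y ∈ J ×ˢ (Finset.univ : Finset Bool), 2 ^ p' * (lv y.1.1 ^ p' * w y.1.2) := by
        refine Finset.sum_le_sum fun y _ => ?_
        calc ∑ t ∈ 𝕋.filter (fun t => φ t = y), 2 ^ p' * (lv (j t.2) ^ p' * w t.2)
            = ∑ t ∈ 𝕋.filter (fun t => φ t = y), 2 ^ p' * lv y.1.1 ^ p' * w t.2 := by
              refine Finset.sum_congr rfl fun t ht => ?_
              rw [← (Finset.mem_filter.1 ht).2, mul_assoc]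
          _ = 2 ^ p' * lv y.1.1 ^ p' * w (⋃ t ∈ 𝕋.filter (fun t => φ t = y), t.2) := by
              rw [← Finset.mul_sum, measure_biUnion_finset (hdisj y)]
              exact fun t ht => hm _ (h2 t (Finset.mem_filter.1 ht).1).mem
          _ ≤ 2 ^ p' * (lv y.1.1 ^ p' * w y.1.2) := by
              rw [mul_assoc]
              gcongr
              refine Set.iUnion₂_subset fun t ht => ?_
              have ht' := Finset.mem_filter.1 ht
              rw [← ht'.2]
              exact (hL t ht'.1).sub
    _ = 2 * (2 ^ p' * ∑ y ∈ J, lv y.1 ^ p' * w y.2) := by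
        rw [Finset.sum_product, Finset.mul_sum, Finset.mul_sum]
        refine Finset.sum_congr rfl fun y _ => ?_
        simp only [Fintype.sum_bool]
        ring
    _ ≤ 2 * (2 ^ p' * (carC p' * ∫⁻ x, g x ^ p' ∂w)) := by
        refine mul_le_mul' le_rfl (mul_le_mul' le_rfl ?_)
        refine carleson hg hp' hN hm hfin J fun y hy => ?_
        obtain ⟨t, ht, rfl⟩ := Finset.mem_image.1 hy
        exact (hL t ht).top
    _ = _ := by ring

/-- The constant in the estimate of the part of the form governed by one testing condition. -/
def corC (p p' : ℝ) : ℝ≥0∞ :=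
  2 * carC p ^ (1 / p) * (1 + 2 * (2 ^ p' * carC p')) ^ (1 / p')

lemma corC_ne_top {p p' : ℝ} (hp : 1 < p) (hp' : 1 < p') : corC p p' ≠ ⊤ := by
  have h1 := carC_ne_top hp
  have h2 := carC_ne_top hp'
  have e1 : 0 ≤ 1 / p := by positivity
  have e2 : 0 ≤ 1 / p' := by positivity
  refine ENNReal.mul_ne_top (ENNReal.mul_ne_top (by norm_num)
    (ENNReal.rpow_ne_top_of_nonneg e1 h1)) (ENNReal.rpow_ne_top_of_nonneg e2 ?_)
  refine ENNReal.add_ne_top.2 ⟨by norm_num, ENNReal.mul_ne_top (by norm_num)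
    (ENNReal.mul_ne_top (ENNReal.rpow_ne_top_of_nonneg (by linarith) (by norm_num)) h2)⟩

/-- The part of the form where the `f`-maximal cube `Pf q` above `A q` contains both the parent
cube `C q` and the `g`-maximal cube above `B q`. On the corona of `(k, P)`, the average of `f` is
at most `2 ^ (k + 1)`, and `g` may be replaced by its averages over the maximal cubes of level
`k + 1`; the testing condition is applied to the result and the coronas are summed by Hölder. -/
lemma corona_sum {ι : Type*} {σ w : Measure X} {f g : X → ℝ≥0∞} (hf : Measurable f)
    (hg : Measurable g) {p p' : ℝ} (hpp : p.HolderConjugate p')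
    (hN : Nested 𝒬) (hm : ∀ R ∈ 𝒬, MeasurableSet R) (hne : ∀ R ∈ 𝒬, R.Nonempty)
    (hσ : ∀ R ∈ 𝒬, σ R ≠ ⊤) (hw : ∀ R ∈ 𝒬, w R ≠ ⊤) (hav : ∀ R ∈ 𝒬, av w g R ≠ ⊤)
    (I : Finset ι) (A B C : ι → Set X) (lam : ι → ℝ≥0∞)
    (kf kg : ι → ℤ) (Pf Pg : ι → Set X)
    (hA : ∀ q ∈ I, A q ∈ 𝒬) (hB : ∀ q ∈ I, B q ∈ 𝒬)
    (hAC : ∀ q ∈ I, A q ⊆ C q) (hBC : ∀ q ∈ I, B q ⊂ C q)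
    (hBR : ∀ q ∈ I, ∀ R ∈ 𝒬, B q ⊂ R → C q ⊆ R)
    (hLf : ∀ q ∈ I, IsLevel 𝒬 (av σ f) (A q) (kf q) (Pf q))
    (hLg : ∀ q ∈ I, IsLevel 𝒬 (av w g) (B q) (kg q) (Pg q))
    (hCP : ∀ q ∈ I, C q ⊆ Pf q) (hGP : ∀ q ∈ I, Pg q ⊆ Pf q) (T : ℝ≥0∞)
    (hT : ∀ P ∈ 𝒬, ∀ h : X → ℝ≥0∞, Measurable h →
      ∑ q ∈ I.filter (fun q => C q ⊆ P), lam q * σ (A q) * ∫⁻ x in B q, h x ∂w ≤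
        T * σ P ^ (1 / p) * (∫⁻ x, h x ^ p' ∂w) ^ (1 / p')) :
    ∑ q ∈ I, lam q * (∫⁻ x in A q, f x ∂σ) * (∫⁻ x in B q, g x ∂w) ≤
      corC p p' * T * (∫⁻ x, f x ^ p ∂σ) ^ (1 / p) * (∫⁻ x, g x ^ p' ∂w) ^ (1 / p') := by
  have hp1 : 1 < p := hpp.lt
  have hp1' : 1 < p' := hpp.symm.lt
  have hp0 : 0 < p := by linarith
  have hp0' : 0 < p' := by linarith
  set a := av σ f with ha
  -- `Ω m` is the union of all maximal cubes of level `m`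
  let Ω : ℤ → Set X := fun m => ⋃ R ∈ 𝒬.filter (fun R => lv m < a R), R
  have hΩm : ∀ m, MeasurableSet (Ω m) := fun m =>
    Finset.measurableSet_biUnion _ fun R hR => hm R (Finset.mem_filter.1 hR).1
  have hΩ : ∀ m R, R ∈ 𝒬 → lv m < a R → R ⊆ Ω m := by
    intro m R hR hlt x hx
    simp only [Ω, Set.mem_iUnion]
    exact ⟨R, by simp [hR, hlt], hx⟩
  -- the next-level maximal cubes that lie in some `B q` with `q` in the corona of `t`
  let Rel : ℤ × Set X → Finset (Set X) := fun t => 𝒬.filter fun P' =>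
    IsMaxCube 𝒬 a (t.1 + 1) P' ∧ av w g P' ≠ 0 ∧ ∃ q ∈ I, kf q = t.1 ∧ Pf q = t.2 ∧ P' ⊆ B q
  have hRel : ∀ t P', P' ∈ Rel t → P' ∈ 𝒬 ∧ IsMaxCube 𝒬 a (t.1 + 1) P' ∧ av w g P' ≠ 0 ∧
      ∃ q ∈ I, kf q = t.1 ∧ Pf q = t.2 ∧ P' ⊆ B q := fun t P' h => Finset.mem_filter.1 h
  -- `g` outside the next-level cubes, and its averages on the relevant ones
  let H : ℤ × Set X → X → ℝ≥0∞ := fun t x => (t.2 \ Ω (t.1 + 1)).indicator g x +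
    ∑ P' ∈ Rel t, P'.indicator (fun _ => av w g P') x
  set K : Finset (ℤ × Set X) := I.image fun q => (kf q, Pf q) with hKdef
  have hK : ∀ t ∈ K, IsMaxCube 𝒬 a t.1 t.2 := by
    intro t ht
    obtain ⟨q, hq, rfl⟩ := Finset.mem_image.1 ht
    exact (hLf q hq).top
  have hind : ∀ t, ∀ P' ∈ Rel t, Measurable (P'.indicator fun _ : X => av w g P') :=
    fun t P' h => measurable_const.indicator (hm _ (hRel t P' h).1)
  have hmE : ∀ t ∈ K, MeasurableSet (t.2 \ Ω (t.1 + 1)) := fun t ht =>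
    (hm _ (hK t ht).mem).diff (hΩm _)
  have hHm : ∀ t ∈ K, Measurable (H t) := fun t ht =>
    (hg.indicator (hmE t ht)).add (Finset.measurable_fun_sum _ (hind t))
  -- replacing `g` by `H` on a cube of the corona
  have stepA : ∀ q ∈ I, ∫⁻ x in B q, g x ∂w ≤ ∫⁻ x in B q, H (kf q, Pf q) x ∂w := by
    intro q hq
    have htK : (kf q, Pf q) ∈ K := Finset.mem_image_of_mem (fun q => (kf q, Pf q)) hq
    set t : ℤ × Set X := (kf q, Pf q) with ht
    set M := 𝒬.filter fun P' => IsMaxCube 𝒬 a (t.1 + 1) P' ∧ P' ⊆ B q with hM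
    have hcov : B q ⊆ (B q \ Ω (t.1 + 1)) ∪ ⋃ P' ∈ M, P' := by
      intro x hx
      by_cases hxΩ : x ∈ Ω (t.1 + 1)
      · right
        simp only [Ω, Set.mem_iUnion] at hxΩ
        obtain ⟨R, hR, hxR⟩ := hxΩ
        have hR' := Finset.mem_filter.1 hR
        obtain ⟨P', hP', hRP'⟩ := exists_isMaxCube hR'.1 hR'.2
        have hsub : P' ⊆ B q := by
          rcases hN P' hP'.mem (B q) (hB q hq) ⟨x, hRP' hxR, hx⟩ with h | h
          · exact h
          by_contra hcon
          -- otherwise the parent cube, hence `A q`, lies in a cube of level `k + 1`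
          have hC := hBR q hq P' hP'.mem ⟨h, hcon⟩
          exact absurd hP'.lt (not_lt.2 ((hLf q hq).le P' hP'.mem ((hAC q hq).trans hC)))
        simp only [Set.mem_iUnion]
        exact ⟨P', Finset.mem_filter.2 ⟨hP'.mem, hP', hsub⟩, hRP' hxR⟩
      · exact Or.inl ⟨hx, hxΩ⟩
    have hBP : B q ⊆ t.2 := (hBC q hq).1.trans (hCP q hq)
    have hR1 : ∫⁻ x in B q, H t x ∂w = ∫⁻ x in B q \ Ω (t.1 + 1), g x ∂w +
        ∑ P' ∈ Rel t, av w g P' * w (P' ∩ B q) := by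
      simp only [H]
      rw [lintegral_add_left (hg.indicator (hmE t htK)), lintegral_finsetSum _ (hind t),
        lintegral_indicator (hmE t htK), Measure.restrict_restrict (hmE t htK)]
      congr 1
      · congr 2
        ext x
        exact ⟨fun h => ⟨h.2, h.1.2⟩, fun h => ⟨⟨hBP h.1, h.2⟩, h.1⟩⟩
      · refine Finset.sum_congr rfl fun P' hP' => ?_
        have := hm _ (hRel t P' hP').1
        rw [lintegral_indicator_const this, Measure.restrict_apply this]
    rw [hR1]
    calc ∫⁻ x in B q, g x ∂w
        ≤ ∫⁻ x in (B q \ Ω (t.1 + 1)) ∪ ⋃ P' ∈ M, P', g x ∂w := lintegral_mono_set hcov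
      _ ≤ ∫⁻ x in B q \ Ω (t.1 + 1), g x ∂w + ∫⁻ x in ⋃ P' ∈ M, P', g x ∂w :=
          lintegral_union_le _ _ _
      _ ≤ ∫⁻ x in B q \ Ω (t.1 + 1), g x ∂w + ∑ P' ∈ M, ∫⁻ x in P', g x ∂w := by
          gcongr
          rw [lintegral_biUnion_finset (μ := w) (t := fun P' => P')]
          · intro P' h1 P'' h2 hne'
            have h1' := (Finset.mem_filter.1 (Finset.mem_coe.1 h1)).2.1
            have h2' := (Finset.mem_filter.1 (Finset.mem_coe.1 h2)).2.1
            by_contra hnd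
            simp only [Function.onFun] at hnd
            rw [Set.not_disjoint_iff_nonempty_inter] at hnd
            exact hne' (h1'.eq hN h2' hnd)
          · exact fun P' h => hm _ (Finset.mem_filter.1 h).1
      _ ≤ ∫⁻ x in B q \ Ω (t.1 + 1), g x ∂w + ∑ P' ∈ Rel t, av w g P' * w (P' ∩ B q) := by
          gcongr
          rw [← Finset.sum_filter_of_ne (p := fun P' => av w g P' ≠ 0)]
          · refine (Finset.sum_le_sum (g := fun P' => av w g P' * w (P' ∩ B q)) ?_).trans
              (Finset.sum_le_sum_of_subset ?_)
            · intro P' hP'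
              have h := Finset.mem_filter.1 (Finset.mem_filter.1 hP').1
              rw [Set.inter_eq_left.2 h.2.2, av_mul (hw _ h.1)]
            · intro P' hP'
              have h0 := Finset.mem_filter.1 hP'
              have h := Finset.mem_filter.1 h0.1
              exact Finset.mem_filter.2 ⟨h.1, h.2.1, h0.2, q, hq, rfl, rfl, h.2.2⟩
          · intro P' hP' hne0 h0
            apply hne0
            rw [← av_mul (hw _ (Finset.mem_filter.1 hP').1), h0, zero_mul]
  have hpow : ∀ t ∈ K, ∫⁻ x, H t x ^ p' ∂w ≤ ∫⁻ x in t.2 \ Ω (t.1 + 1), g x ^ p' ∂w +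
      ∑ P' ∈ Rel t, av w g P' ^ p' * w P' := by
    intro t ht
    have hR : ∫⁻ x in t.2 \ Ω (t.1 + 1), g x ^ p' ∂w + ∑ P' ∈ Rel t, av w g P' ^ p' * w P' =
        ∫⁻ x, ((t.2 \ Ω (t.1 + 1)).indicator (fun x => g x ^ p') x +
          ∑ P' ∈ Rel t, P'.indicator (fun _ => av w g P' ^ p') x) ∂w := by
      rw [lintegral_add_left ((hg.pow_const p').indicator (hmE t ht)),
        lintegral_indicator (hmE t ht), lintegral_finsetSum]
      · congr 1
        refine Finset.sum_congr rfl fun P' hP' => ?_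
        rw [lintegral_indicator_const (hm _ (hRel t P' hP').1)]
      · exact fun P' h => measurable_const.indicator (hm _ (hRel t P' h).1)
    rw [hR]
    refine lintegral_mono fun x => ?_
    by_cases hx : ∃ P' ∈ Rel t, x ∈ P'
    · obtain ⟨P', hP', hxP'⟩ := hx
      have hr := hRel t P' hP'
      have hxΩ : x ∉ t.2 \ Ω (t.1 + 1) := fun h => h.2 (hΩ _ _ hr.1 hr.2.1.lt hxP')
      have hs : ∀ v : Set X → ℝ≥0∞,
          ∑ P' ∈ Rel t, P'.indicator (fun _ => v P') x = v P' := by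
        intro v
        rw [Finset.sum_eq_single P']
        · exact Set.indicator_of_mem hxP' _
        · intro P'' h'' hne''
          refine Set.indicator_of_notMem (fun hx'' => hne'' ?_) _
          exact (hRel t P'' h'').2.1.eq hN hr.2.1 ⟨x, hx'', hxP'⟩
        · exact fun h => absurd hP' h
      simp only [H]
      rw [hs (fun P' => av w g P'), hs (fun P' => av w g P' ^ p'),
        Set.indicator_of_notMem hxΩ, Set.indicator_of_notMem hxΩ, zero_add, zero_add]
    · push Not at hx
      have hs : ∀ v : Set X → ℝ≥0∞, ∑ P' ∈ Rel t, P'.indicator (fun _ => v P') x = 0 :=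
        fun v => Finset.sum_eq_zero fun P' h => Set.indicator_of_notMem (hx P' h) _
      simp only [H]
      rw [hs (fun P' => av w g P'), hs (fun P' => av w g P' ^ p'), add_zero, add_zero]
      by_cases hxE : x ∈ t.2 \ Ω (t.1 + 1)
      · rw [Set.indicator_of_mem hxE, Set.indicator_of_mem hxE]
      · rw [Set.indicator_of_notMem hxE, Set.indicator_of_notMem hxE,
          ENNReal.zero_rpow_of_pos hp0']
  have hdisj : ((K : Finset _) : Set _).PairwiseDisjoint
      (fun t : ℤ × Set X => t.2 \ Ω (t.1 + 1)) := by
    have aux : ∀ s ∈ K, ∀ t ∈ K, s.1 < t.1 → ∀ x ∈ s.2 \ Ω (s.1 + 1), x ∉ t.2 \ Ω (t.1 + 1) :=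
      fun s _ t ht hlt x hxs hxt => hxs.2 (hΩ _ _ (hK t ht).mem
        ((lv_mono (by omega)).trans_lt (hK t ht).lt) hxt.1)
    intro s hs t ht hst
    rw [Function.onFun, Set.disjoint_left]
    intro x hxs hxt
    rcases lt_trichotomy s.1 t.1 with h | h | h
    · exact aux s hs t ht h x hxs hxt
    · refine hst (Prod.ext h ((hK s hs).eq hN ?_ ⟨x, hxs.1, hxt.1⟩))
      rw [h]; exact hK t ht
    · exact aux t ht s hs h x hxt hxs
  have stepB : ∑ t ∈ K, ∫⁻ x, H t x ^ p' ∂w ≤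
      (1 + 2 * (2 ^ p' * carC p')) * ∫⁻ x, g x ^ p' ∂w := by
    refine (Finset.sum_le_sum hpow).trans ?_
    rw [Finset.sum_add_distrib, add_mul, one_mul]
    refine add_le_add ?_ ?_
    · rw [← lintegral_biUnion_finset hdisj hmE]
      exact setLIntegral_le_lintegral _ _
    · set 𝕋 := (K ×ˢ 𝒬).filter fun t => t.2 ∈ Rel t.1 with h𝕋
      have hmem : ∀ t, t ∈ 𝕋 ↔ t.1 ∈ K ∧ t.2 ∈ Rel t.1 := by
        intro t
        simp only [h𝕋, Finset.mem_filter, Finset.mem_product]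
        exact ⟨fun h => ⟨h.1.1, h.2⟩, fun h => ⟨⟨h.1, (hRel _ _ h.2).1⟩, h.2⟩⟩
      rw [← Finset.sum_finset_product 𝕋 K Rel hmem
        (f := fun t : (ℤ × Set X) × Set X => av w g t.2 ^ p' * w t.2)]
      refine relevant_sum (af := a) hg hp1' hN hm hne hw hav 𝕋 ?_ ?_ ?_ ?_
      · exact fun t ht => hK _ ((hmem t).1 ht).1
      · exact fun t ht => (hRel _ _ ((hmem t).1 ht).2).2.1
      · exact fun t ht => (hRel _ _ ((hmem t).1 ht).2).2.2.1
      · intro t ht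
        obtain ⟨q, hq, -, h2, h3⟩ := (hRel _ _ ((hmem t).1 ht).2).2.2.2
        exact ⟨B q, C q, kg q, Pg q, hLg q hq, h3, hBC q hq, h2 ▸ hCP q hq, h2 ▸ hGP q hq⟩
  calc ∑ q ∈ I, lam q * (∫⁻ x in A q, f x ∂σ) * (∫⁻ x in B q, g x ∂w)
      ≤ ∑ q ∈ I, lv (kf q + 1) *
          (lam q * σ (A q) * ∫⁻ x in B q, H (kf q, Pf q) x ∂w) := by
        refine Finset.sum_le_sum fun q hq => ?_
        calc lam q * (∫⁻ x in A q, f x ∂σ) * (∫⁻ x in B q, g x ∂w)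
            ≤ lam q * (lv (kf q + 1) * σ (A q)) * ∫⁻ x in B q, H (kf q, Pf q) x ∂w := by
              refine mul_le_mul' (mul_le_mul' le_rfl ?_) (stepA q hq)
              rw [← av_mul (hσ _ (hA q hq))]
              gcongr
              exact (hLf q hq).le _ (hA q hq) Subset.rfl
          _ = _ := by ring
    _ = ∑ t ∈ K, ∑ q ∈ I.filter (fun q => (kf q, Pf q) = t), lv (kf q + 1) *
          (lam q * σ (A q) * ∫⁻ x in B q, H (kf q, Pf q) x ∂w) := by
        rw [Finset.sum_fiberwise_of_maps_to]
        exact fun q hq => Finset.mem_image_of_mem (fun q => (kf q, Pf q)) hq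
    _ ≤ ∑ t ∈ K, lv (t.1 + 1) *
          (T * σ t.2 ^ (1 / p) * (∫⁻ x, H t x ^ p' ∂w) ^ (1 / p')) := by
        refine Finset.sum_le_sum fun t ht => ?_
        refine le_trans ?_ (mul_le_mul' le_rfl (hT t.2 (hK t ht).mem (H t) (hHm t ht)))
        rw [Finset.mul_sum]
        calc _ = ∑ q ∈ I.filter (fun q => (kf q, Pf q) = t), lv (t.1 + 1) *
              (lam q * σ (A q) * ∫⁻ x in B q, H t x ∂w) := by
              refine Finset.sum_congr rfl fun q hq => ?_
              rw [← (Finset.mem_filter.1 hq).2]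
          _ ≤ _ := by
              refine Finset.sum_le_sum_of_subset fun q hq => ?_
              have h := Finset.mem_filter.1 hq
              refine Finset.mem_filter.2 ⟨h.1, ?_⟩
              rw [← h.2]
              exact hCP q h.1
    _ = 2 * T * ∑ t ∈ K, (lv t.1 * σ t.2 ^ (1 / p)) * (∫⁻ x, H t x ^ p' ∂w) ^ (1 / p') := by
        rw [Finset.mul_sum]
        refine Finset.sum_congr rfl fun t _ => ?_
        rw [lv_succ]
        ring
    _ ≤ 2 * T * ((∑ t ∈ K, (lv t.1 * σ t.2 ^ (1 / p)) ^ p) ^ (1 / p) *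
          (∑ t ∈ K, ((∫⁻ x, H t x ^ p' ∂w) ^ (1 / p')) ^ p') ^ (1 / p')) := by
        refine mul_le_mul' le_rfl ?_
        exact ENNReal.inner_le_Lp_mul_Lq _ _ _ hpp
    _ ≤ 2 * T * ((carC p * ∫⁻ x, f x ^ p ∂σ) ^ (1 / p) *
          ((1 + 2 * (2 ^ p' * carC p')) * ∫⁻ x, g x ^ p' ∂w) ^ (1 / p')) := by
        refine mul_le_mul' le_rfl (mul_le_mul' (ENNReal.rpow_le_rpow ?_ (by positivity))
          (ENNReal.rpow_le_rpow ?_ (by positivity)))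
        · refine le_of_eq_of_le ?_ (carleson hf hp1 hN hm hσ K hK)
          refine Finset.sum_congr rfl fun t _ => ?_
          rw [ENNReal.mul_rpow_of_nonneg _ _ hp0.le, ← ENNReal.rpow_mul,
            one_div_mul_cancel hp0.ne', ENNReal.rpow_one]
        · refine le_of_eq_of_le ?_ stepB
          refine Finset.sum_congr rfl fun t _ => ?_
          rw [← ENNReal.rpow_mul, one_div_mul_cancel hp0'.ne', ENNReal.rpow_one]
    _ = _ := by
        rw [ENNReal.mul_rpow_of_nonneg _ _ (by positivity),
          ENNReal.mul_rpow_of_nonneg _ _ (by positivity), corC]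
        ring

/-! ### The upper bound over a finite nested family -/

/-- The constant of the upper bound for the form. -/
def mainC (p p' : ℝ) : ℝ≥0∞ :=
  corC p p' + corC p' p + 4 * carC p ^ (1 / p) * carC p' ^ (1 / p')

lemma mainC_ne_top {p p' : ℝ} (hp : 1 < p) (hp' : 1 < p') : mainC p p' ≠ ⊤ := by
  have e1 : 0 ≤ 1 / p := by positivity
  have e2 : 0 ≤ 1 / p' := by positivity
  exact ENNReal.add_ne_top.2 ⟨ENNReal.add_ne_top.2 ⟨corC_ne_top hp hp', corC_ne_top hp' hp⟩,
    ENNReal.mul_ne_top (ENNReal.mul_ne_top (by norm_num)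
      (ENNReal.rpow_ne_top_of_nonneg e1 (carC_ne_top hp)))
      (ENNReal.rpow_ne_top_of_nonneg e2 (carC_ne_top hp'))⟩

lemma av_ne_top {σ : Measure X} {f : X → ℝ≥0∞} (hf : Measurable f) {p p' : ℝ}
    (hpp : p.HolderConjugate p') (hF : ∫⁻ x, f x ^ p ∂σ ≠ ⊤) {R : Set X} (hR : σ R ≠ ⊤) :
    av σ f R ≠ ⊤ := by
  refine (setLAverage_lt_top ?_).ne
  have h := ENNReal.lintegral_mul_le_Lp_mul_Lq (σ.restrict R) hpp hf.aemeasurable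
    (g := fun _ => 1) aemeasurable_const
  simp only [Pi.mul_apply, mul_one, ENNReal.one_rpow, lintegral_const, one_mul,
    Measure.restrict_apply_univ] at h
  refine ne_top_of_le_ne_top (ENNReal.mul_ne_top ?_ ?_) h
  · exact ENNReal.rpow_ne_top_of_nonneg hpp.one_div_nonneg
      (ne_top_of_le_ne_top hF (setLIntegral_le_lintegral _ _))
  · exact ENNReal.rpow_ne_top_of_nonneg hpp.symm.one_div_nonneg hR

/-- Cubes `q` for which `A q` and `B q` are themselves maximal at their levels are estimated one
by one, by `U`, and summed by Hölder and the Carleson estimate. -/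
lemma diag_sum {ι : Type*} {σ w : Measure X} {f g : X → ℝ≥0∞} (hf : Measurable f)
    (hg : Measurable g) {p p' : ℝ} (hpp : p.HolderConjugate p')
    (hN : Nested 𝒬) (hm : ∀ R ∈ 𝒬, MeasurableSet R)
    (hσ : ∀ R ∈ 𝒬, σ R ≠ ⊤) (hw : ∀ R ∈ 𝒬, w R ≠ ⊤)
    (I : Finset ι) (A B : ι → Set X) (lam : ι → ℝ≥0∞) (kf kg : ι → ℤ)
    (hA : ∀ q ∈ I, A q ∈ 𝒬) (hB : ∀ q ∈ I, B q ∈ 𝒬)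
    (hAi : Set.InjOn A I) (hBi : Set.InjOn B I)
    (hLf : ∀ q ∈ I, IsLevel 𝒬 (av σ f) (A q) (kf q) (A q))
    (hLg : ∀ q ∈ I, IsLevel 𝒬 (av w g) (B q) (kg q) (B q)) (U : ℝ≥0∞)
    (hU : ∀ q ∈ I, lam q * σ (A q) ^ (1 / p') * w (B q) ^ (1 / p) ≤ U) :
    ∑ q ∈ I, lam q * (∫⁻ x in A q, f x ∂σ) * (∫⁻ x in B q, g x ∂w) ≤
      4 * carC p ^ (1 / p) * carC p' ^ (1 / p') * U *
        (∫⁻ x, f x ^ p ∂σ) ^ (1 / p) * (∫⁻ x, g x ^ p' ∂w) ^ (1 / p') := by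
  have hp0 : 0 < p := hpp.pos
  have hp0' : 0 < p' := hpp.symm.pos
  have hsum : 1 / p + 1 / p' = 1 := by simpa using hpp.inv_add_inv_eq_one
  have carl : ∀ (μ : Measure X) (u : X → ℝ≥0∞) (r : ℝ) (D : ι → Set X) (k : ι → ℤ),
      Measurable u → 1 < r → (∀ R ∈ 𝒬, μ R ≠ ⊤) → Set.InjOn D I →
      (∀ q ∈ I, IsLevel 𝒬 (av μ u) (D q) (k q) (D q)) →
      ∑ q ∈ I, (lv (k q) * μ (D q) ^ (1 / r)) ^ r ≤ carC r * ∫⁻ x, u x ^ r ∂μ := by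
    intro μ u r D k hu hr hμ hD hL
    have hr0 : 0 < r := by linarith
    refine le_of_eq_of_le ?_ (carleson hu hr hN hm hμ (I.image fun q => (k q, D q)) ?_)
    · rw [Finset.sum_image]
      · refine Finset.sum_congr rfl fun q _ => ?_
        rw [ENNReal.mul_rpow_of_nonneg _ _ hr0.le, ← ENNReal.rpow_mul,
            one_div_mul_cancel hr0.ne', ENNReal.rpow_one]
      · intro q hq q' hq' h
        exact hD hq hq' (Prod.ext_iff.1 h).2
    · intro t ht
      obtain ⟨q, hq, rfl⟩ := Finset.mem_image.1 ht
      exact (hL q hq).top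
  calc ∑ q ∈ I, lam q * (∫⁻ x in A q, f x ∂σ) * (∫⁻ x in B q, g x ∂w)
      ≤ ∑ q ∈ I, 4 * U * ((lv (kf q) * σ (A q) ^ (1 / p)) *
          (lv (kg q) * w (B q) ^ (1 / p'))) := by
        refine Finset.sum_le_sum fun q hq => ?_
        have e1 : σ (A q) = σ (A q) ^ (1 / p) * σ (A q) ^ (1 / p') := by
          rw [← ENNReal.rpow_add_of_nonneg _ _ (by positivity) (by positivity), hsum,
            ENNReal.rpow_one]
        have e2 : w (B q) = w (B q) ^ (1 / p) * w (B q) ^ (1 / p') := by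
          rw [← ENNReal.rpow_add_of_nonneg _ _ (by positivity) (by positivity), hsum,
            ENNReal.rpow_one]
        have i1 : ∫⁻ x in A q, f x ∂σ ≤ lv (kf q + 1) * σ (A q) := by
          rw [← av_mul (hσ _ (hA q hq))]
          gcongr
          exact (hLf q hq).le _ (hA q hq) Subset.rfl
        have i2 : ∫⁻ x in B q, g x ∂w ≤ lv (kg q + 1) * w (B q) := by
          rw [← av_mul (hw _ (hB q hq))]
          gcongr
          exact (hLg q hq).le _ (hB q hq) Subset.rfl
        calc lam q * (∫⁻ x in A q, f x ∂σ) * (∫⁻ x in B q, g x ∂w)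
            ≤ lam q * (lv (kf q + 1) * σ (A q)) * (lv (kg q + 1) * w (B q)) :=
              mul_le_mul' (mul_le_mul' le_rfl i1) i2
          _ = (lam q * σ (A q) ^ (1 / p') * w (B q) ^ (1 / p)) *
                (4 * ((lv (kf q) * σ (A q) ^ (1 / p)) * (lv (kg q) * w (B q) ^ (1 / p')))) := by
              rw [lv_succ, lv_succ]
              conv_lhs => rw [e1, e2]
              ring
          _ ≤ U * (4 * ((lv (kf q) * σ (A q) ^ (1 / p)) *
                (lv (kg q) * w (B q) ^ (1 / p')))) := mul_le_mul' (hU q hq) le_rfl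
          _ = _ := by ring
    _ ≤ 4 * U * ((∑ q ∈ I, (lv (kf q) * σ (A q) ^ (1 / p)) ^ p) ^ (1 / p) *
          (∑ q ∈ I, (lv (kg q) * w (B q) ^ (1 / p')) ^ p') ^ (1 / p')) := by
        rw [← Finset.mul_sum]
        exact mul_le_mul' le_rfl (ENNReal.inner_le_Lp_mul_Lq _ _ _ hpp)
    _ ≤ 4 * U * ((carC p * ∫⁻ x, f x ^ p ∂σ) ^ (1 / p) *
          (carC p' * ∫⁻ x, g x ^ p' ∂w) ^ (1 / p')) := by
        refine mul_le_mul' le_rfl (mul_le_mul' (ENNReal.rpow_le_rpow ?_ (by positivity))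
          (ENNReal.rpow_le_rpow ?_ (by positivity)))
        · exact carl σ f p A kf hf hpp.lt hσ hAi hLf
        · exact carl w g p' B kg hg hpp.symm.lt hw hBi hLg
    _ = _ := by
        rw [ENNReal.mul_rpow_of_nonneg _ _ (by positivity),
          ENNReal.mul_rpow_of_nonneg _ _ (by positivity)]
        ring

/-- The upper bound for a finite part of the form, over an abstract nested family. Here `A q`,
`B q`, `C q` stand for `Q₊`, `Q₋`, `Q`. A cube of `𝒬` containing `A q` either equals it or contains
`C q`, and likewise for `B q`, so each `q` falls under `corona_sum`, its mirror image, or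
`diag_sum`. -/
lemma finite_bound {ι : Type*} {σ w : Measure X} {f g : X → ℝ≥0∞} (hf : Measurable f)
    (hg : Measurable g) {p p' : ℝ} (hpp : p.HolderConjugate p')
    (hF : ∫⁻ x, f x ^ p ∂σ ≠ ⊤) (hG : ∫⁻ x, g x ^ p' ∂w ≠ ⊤)
    (hN : Nested 𝒬) (hm : ∀ R ∈ 𝒬, MeasurableSet R) (hne : ∀ R ∈ 𝒬, R.Nonempty)
    (hσ : ∀ R ∈ 𝒬, σ R ≠ ⊤) (hw : ∀ R ∈ 𝒬, w R ≠ ⊤)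
    (S : Finset ι) (A B C : ι → Set X) (lam : ι → ℝ≥0∞)
    (hA : ∀ q ∈ S, A q ∈ 𝒬) (hB : ∀ q ∈ S, B q ∈ 𝒬)
    (hAi : Set.InjOn A S) (hBi : Set.InjOn B S)
    (hAC : ∀ q ∈ S, A q ⊂ C q) (hBC : ∀ q ∈ S, B q ⊂ C q)
    (hAR : ∀ q ∈ S, ∀ R ∈ 𝒬, A q ⊂ R → C q ⊆ R)
    (hBR : ∀ q ∈ S, ∀ R ∈ 𝒬, B q ⊂ R → C q ⊆ R) (U T T' : ℝ≥0∞)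
    (hU : ∀ q ∈ S, lam q * σ (A q) ^ (1 / p') * w (B q) ^ (1 / p) ≤ U)
    (hT : ∀ P ∈ 𝒬, ∀ h : X → ℝ≥0∞, Measurable h →
      ∑ q ∈ S.filter (fun q => C q ⊆ P), lam q * σ (A q) * ∫⁻ x in B q, h x ∂w ≤
        T * σ P ^ (1 / p) * (∫⁻ x, h x ^ p' ∂w) ^ (1 / p'))
    (hT' : ∀ P ∈ 𝒬, ∀ h : X → ℝ≥0∞, Measurable h →
      ∑ q ∈ S.filter (fun q => C q ⊆ P), lam q * w (B q) * ∫⁻ x in A q, h x ∂σ ≤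
        T' * w P ^ (1 / p') * (∫⁻ x, h x ^ p ∂σ) ^ (1 / p)) :
    ∑ q ∈ S, lam q * (∫⁻ x in A q, f x ∂σ) * (∫⁻ x in B q, g x ∂w) ≤
      mainC p p' * (U + T + T') *
        (∫⁻ x, f x ^ p ∂σ) ^ (1 / p) * (∫⁻ x, g x ^ p' ∂w) ^ (1 / p') := by
  have havf : ∀ R ∈ 𝒬, av σ f R ≠ ⊤ := fun R hR => av_ne_top hf hpp hF (hσ R hR)
  have havg : ∀ R ∈ 𝒬, av w g R ≠ ⊤ := fun R hR => av_ne_top hg hpp.symm hG (hw R hR)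
  set S' := S.filter fun q => av σ f (A q) ≠ 0 ∧ av w g (B q) ≠ 0 with hS'
  have hS'S : ∀ q ∈ S', q ∈ S := fun q hq => (Finset.mem_filter.1 hq).1
  set V : ι → ℝ≥0∞ := fun q => lam q * (∫⁻ x in A q, f x ∂σ) * (∫⁻ x in B q, g x ∂w) with hV
  have hred : ∑ q ∈ S, V q = ∑ q ∈ S', V q := by
    rw [hS', Finset.sum_filter_of_ne]
    intro q hq hne0
    constructor
    · intro h
      apply hne0
      simp only [hV]
      rw [← av_mul (hσ _ (hA q hq)), h]
      simp
    · intro h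
      apply hne0
      simp only [hV]
      rw [← av_mul (hw _ (hB q hq)), h]
      simp
  have hexf : ∀ q, ∃ k P, q ∈ S' → IsLevel 𝒬 (av σ f) (A q) k P := by
    intro q
    by_cases h : q ∈ S'
    · obtain ⟨k, P, hkP⟩ := exists_isLevel (hA q (hS'S q h)) (Finset.mem_filter.1 h).2.1 havf
      exact ⟨k, P, fun _ => hkP⟩
    · exact ⟨0, ∅, fun h' => absurd h' h⟩
  have hexg : ∀ q, ∃ k P, q ∈ S' → IsLevel 𝒬 (av w g) (B q) k P := by
    intro q
    by_cases h : q ∈ S'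
    · obtain ⟨k, P, hkP⟩ := exists_isLevel (hB q (hS'S q h)) (Finset.mem_filter.1 h).2.2 havg
      exact ⟨k, P, fun _ => hkP⟩
    · exact ⟨0, ∅, fun h' => absurd h' h⟩
  choose kf Pf hLf using hexf
  choose kg Pg hLg using hexg
  set I1 := S'.filter fun q => C q ⊆ Pf q ∧ Pg q ⊆ Pf q with hI1
  set I2 := S'.filter fun q => C q ⊆ Pg q ∧ Pf q ⊆ Pg q with hI2
  set I3 := S'.filter fun q => Pf q = A q ∧ Pg q = B q with hI3
  have m1 : ∀ q ∈ I1, q ∈ S' := fun q hq => (Finset.mem_filter.1 hq).1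
  have m2 : ∀ q ∈ I2, q ∈ S' := fun q hq => (Finset.mem_filter.1 hq).1
  have m3 : ∀ q ∈ I3, q ∈ S' := fun q hq => (Finset.mem_filter.1 hq).1
  have hcases : ∀ q ∈ S', (C q ⊆ Pf q ∧ Pg q ⊆ Pf q) ∨ (C q ⊆ Pg q ∧ Pf q ⊆ Pg q) ∨
      (Pf q = A q ∧ Pg q = B q) := by
    intro q hq
    have hqS := hS'S q hq
    have lf := hLf q hq
    have lg := hLg q hq
    have hf' : Pf q = A q ∨ C q ⊆ Pf q := by
      by_cases h : Pf q ⊆ A q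
      · exact Or.inl (Subset.antisymm h lf.sub)
      · exact Or.inr (hAR q hqS _ lf.top.mem ⟨lf.sub, h⟩)
    have hg' : Pg q = B q ∨ C q ⊆ Pg q := by
      by_cases h : Pg q ⊆ B q
      · exact Or.inl (Subset.antisymm h lg.sub)
      · exact Or.inr (hBR q hqS _ lg.top.mem ⟨lg.sub, h⟩)
    rcases hf' with h1 | h1 <;> rcases hg' with h2 | h2
    · exact Or.inr (Or.inr ⟨h1, h2⟩)
    · exact Or.inr (Or.inl ⟨h2, h1 ▸ (hAC q hqS).1.trans h2⟩)
    · exact Or.inl ⟨h1, h2 ▸ (hBC q hqS).1.trans h1⟩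
    · obtain ⟨x, hx⟩ := hne _ (hA q hqS)
      rcases hN _ lf.top.mem _ lg.top.mem
        ⟨x, h1 ((hAC q hqS).1 hx), h2 ((hAC q hqS).1 hx)⟩ with h | h
      · exact Or.inr (Or.inl ⟨h2, h⟩)
      · exact Or.inl ⟨h1, h⟩
  have hsplit : ∑ q ∈ S', V q ≤ ∑ q ∈ I1, V q + ∑ q ∈ I2, V q + ∑ q ∈ I3, V q := by
    clear_value S'
    rw [hI1, hI2, hI3, Finset.sum_filter, Finset.sum_filter, Finset.sum_filter,
      ← Finset.sum_add_distrib, ← Finset.sum_add_distrib]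
    refine Finset.sum_le_sum fun q hq => ?_
    rcases hcases q hq with h | h | h
    · rw [if_pos h, add_assoc]
      exact le_self_add
    · rw [if_pos h, add_right_comm]
      exact le_add_self
    · rw [if_pos h]
      exact le_add_self
  have hmono : ∀ (I : Finset ι) (P : Set X), (∀ q ∈ I, q ∈ S') →
      I.filter (fun q => C q ⊆ P) ⊆ S.filter fun q => C q ⊆ P := fun I P h =>
    Finset.filter_subset_filter _ fun q hq => hS'S q (h q hq)
  have b1 := corona_sum hf hg hpp hN hm hne hσ hw havg I1 A B C lam kf kg Pf Pg
    (fun q hq => hA q (hS'S q (m1 q hq))) (fun q hq => hB q (hS'S q (m1 q hq)))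
    (fun q hq => (hAC q (hS'S q (m1 q hq))).1) (fun q hq => hBC q (hS'S q (m1 q hq)))
    (fun q hq => hBR q (hS'S q (m1 q hq))) (fun q hq => hLf q (m1 q hq))
    (fun q hq => hLg q (m1 q hq)) (fun q hq => (Finset.mem_filter.1 hq).2.1)
    (fun q hq => (Finset.mem_filter.1 hq).2.2) T
    (fun P hP h hh => (Finset.sum_le_sum_of_subset (hmono I1 P m1)).trans (hT P hP h hh))
  have b2 := corona_sum hg hf hpp.symm hN hm hne hw hσ havf I2 B A C lam kg kf Pg Pf
    (fun q hq => hB q (hS'S q (m2 q hq))) (fun q hq => hA q (hS'S q (m2 q hq)))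
    (fun q hq => (hBC q (hS'S q (m2 q hq))).1) (fun q hq => hAC q (hS'S q (m2 q hq)))
    (fun q hq => hAR q (hS'S q (m2 q hq))) (fun q hq => hLg q (m2 q hq))
    (fun q hq => hLf q (m2 q hq)) (fun q hq => (Finset.mem_filter.1 hq).2.1)
    (fun q hq => (Finset.mem_filter.1 hq).2.2) T'
    (fun P hP h hh => (Finset.sum_le_sum_of_subset (hmono I2 P m2)).trans (hT' P hP h hh))
  have b3 := diag_sum hf hg hpp hN hm hσ hw I3 A B lam kf kg
    (fun q hq => hA q (hS'S q (m3 q hq))) (fun q hq => hB q (hS'S q (m3 q hq)))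
    (hAi.mono fun q hq => hS'S q (m3 q hq)) (hBi.mono fun q hq => hS'S q (m3 q hq))
    (fun q hq => by
      have := hLf q (m3 q hq)
      rwa [(Finset.mem_filter.1 hq).2.1] at this)
    (fun q hq => by
      have := hLg q (m3 q hq)
      rwa [(Finset.mem_filter.1 hq).2.2] at this) U
    (fun q hq => hU q (hS'S q (m3 q hq)))
  have b2' : ∑ q ∈ I2, V q ≤ corC p' p * T' *
      (∫⁻ x, f x ^ p ∂σ) ^ (1 / p) * (∫⁻ x, g x ^ p' ∂w) ^ (1 / p') := by
    refine le_of_eq_of_le ?_ (b2.trans_eq (by ring))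
    exact Finset.sum_congr rfl fun q _ => by simp only [hV]; ring
  set F := (∫⁻ x, f x ^ p ∂σ) ^ (1 / p)
  set G := (∫⁻ x, g x ^ p' ∂w) ^ (1 / p')
  set c1 := corC p p'
  set c2 := corC p' p
  set c3 := 4 * carC p ^ (1 / p) * carC p' ^ (1 / p')
  calc ∑ q ∈ S, V q ≤ ∑ q ∈ I1, V q + ∑ q ∈ I2, V q + ∑ q ∈ I3, V q := hred.trans_le hsplit
    _ ≤ c1 * T * F * G + c2 * T' * F * G + c3 * U * F * G := add_le_add (add_le_add b1 b2') b3
    _ = (c1 * T + c2 * T' + c3 * U) * F * G := by ring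
    _ ≤ (mainC p p' * (U + T + T')) * F * G := by
        refine mul_le_mul' (mul_le_mul' ?_ le_rfl) le_rfl
        have hM : mainC p p' = c1 + c2 + c3 := rfl
        have i1 : c1 ≤ mainC p p' := by rw [hM, add_assoc]; exact le_self_add
        have i2 : c2 ≤ mainC p p' := by rw [hM, add_right_comm]; exact le_add_self
        have i3 : c3 ≤ mainC p p' := by rw [hM]; exact le_add_self
        calc c1 * T + c2 * T' + c3 * U
            ≤ mainC p p' * T + mainC p p' * T' + mainC p p' * U := by gcongr
          _ = _ := by ring

end Abstract

/-! ### Geometry of dyadic cubes -/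

lemma mem_dCube_iff {d : ℕ} {q : DIdx d} {x : Fin d → ℝ} :
    x ∈ dCube d q ↔ ∀ i, ⌊x i / 2 ^ q.1⌋ = q.2 i := by
  have h2 : (0 : ℝ) < 2 ^ q.1 := by positivity
  simp only [dCube, Set.mem_ofPred_eq, Int.floor_eq_iff, le_div_iff₀ h2, div_lt_iff₀ h2]

/-- The lower corner of a cube. -/
def corner {d : ℕ} (q : DIdx d) : Fin d → ℝ := fun i => (q.2 i : ℝ) * 2 ^ q.1

lemma corner_mem {d : ℕ} (q : DIdx d) : corner q ∈ dCube d q := by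
  rw [mem_dCube_iff]
  intro i
  have h2 : (2 : ℝ) ^ q.1 ≠ 0 := by positivity
  rw [corner, mul_div_assoc, div_self h2, mul_one, Int.floor_intCast]

lemma floor_div_zpow (y : ℝ) (k : ℤ) (m : ℕ) :
    ⌊y / 2 ^ (k + m)⌋ = ⌊y / 2 ^ k⌋ / ((2 ^ m : ℕ) : ℤ) := by
  rw [← Int.floor_div_natCast, zpow_add₀ (by norm_num : (2 : ℝ) ≠ 0), div_div]
  push_cast
  rw [zpow_natCast]

lemma dCube_subset {d : ℕ} {q r : DIdx d} (h : q.1 ≤ r.1) {x : Fin d → ℝ}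
    (hq : x ∈ dCube d q) (hr : x ∈ dCube d r) : dCube d q ⊆ dCube d r := by
  intro y hy
  obtain ⟨m, hm⟩ := Int.le.dest h
  rw [mem_dCube_iff] at *
  intro i
  rw [← hr i, ← hm, floor_div_zpow, floor_div_zpow, hq i, hy i]

lemma dCube_index_eq {d : ℕ} {q r : DIdx d} (h : q.1 = r.1) {x : Fin d → ℝ}
    (hq : x ∈ dCube d q) (hr : x ∈ dCube d r) : q = r := by
  rw [mem_dCube_iff] at *
  refine Prod.ext h (funext fun i => ?_)
  rw [← hq i, ← hr i, h]

lemma gen_le_of_subset {d : ℕ} (hd : 0 < d) {q r : DIdx d} (h : dCube d q ⊆ dCube d r) :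
    q.1 ≤ r.1 := by
  by_contra! hlt
  have hlt2 : (2 : ℝ) ^ r.1 < 2 ^ q.1 := zpow_lt_zpow_right₀ (by norm_num) hlt
  have hpos : (0 : ℝ) < 2 ^ r.1 := by positivity
  -- two points of `q` whose coordinates differ by the side length of `r`
  have h1 := h (corner_mem q)
  have h2 : (fun i => corner q i + 2 ^ r.1) ∈ dCube d r := by
    apply h
    intro i
    simp only [corner]
    constructor <;> nlinarith
  have a1 := (h1 ⟨0, hd⟩).1
  have a2 := (h2 ⟨0, hd⟩).2
  linarith

lemma dCube_injective {d : ℕ} (hd : 0 < d) : Function.Injective (dCube d) := by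
  intro q r h
  have h1 := gen_le_of_subset hd h.subset
  have h2 := gen_le_of_subset hd h.symm.subset
  exact dCube_index_eq (le_antisymm h1 h2) (corner_mem q) (h ▸ corner_mem q)

lemma dCube_nested {d : ℕ} (q r : DIdx d) (h : (dCube d q ∩ dCube d r).Nonempty) :
    dCube d q ⊆ dCube d r ∨ dCube d r ⊆ dCube d q := by
  obtain ⟨x, hq, hr⟩ := h
  rcases le_total q.1 r.1 with h | h
  · exact Or.inl (dCube_subset h hq hr)
  · exact Or.inr (dCube_subset h hr hq)

lemma measurableSet_dCube {d : ℕ} (q : DIdx d) : MeasurableSet (dCube d q) := by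
  have : dCube d q = ⋂ i, (fun x : Fin d → ℝ => x i) ⁻¹'
      Set.Ico ((q.2 i : ℝ) * 2 ^ q.1) (((q.2 i : ℝ) + 1) * 2 ^ q.1) := by
    ext x
    simp [dCube]
  rw [this]
  exact MeasurableSet.iInter fun i => measurable_pi_apply i measurableSet_Ico

lemma dCube_measure_ne_top {d : ℕ} (μ : Measure (Fin d → ℝ)) [IsLocallyFiniteMeasure μ]
    (q : DIdx d) : μ (dCube d q) ≠ ⊤ := by
  have hs : dCube d q ⊆ Set.Icc (fun i => (q.2 i : ℝ) * 2 ^ q.1)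
      (fun i => ((q.2 i : ℝ) + 1) * 2 ^ q.1) := fun x hx =>
    ⟨fun i => (hx i).1, fun i => (hx i).2.le⟩
  exact ne_top_of_le_ne_top isCompact_Icc.measure_lt_top.ne (measure_mono hs)

lemma IsChildIdx.subset {d : ℕ} {q c : DIdx d} (h : IsChildIdx d q c) :
    dCube d c ⊆ dCube d q := by
  refine dCube_subset (by rw [h.1]; omega) (corner_mem c) ?_
  intro i
  have hpos : (0 : ℝ) < 2 ^ (q.1 - 1) := by positivity
  have h2 : (2 : ℝ) ^ q.1 = 2 * 2 ^ (q.1 - 1) := by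
    rw [zpow_sub_one₀ (by norm_num : (2 : ℝ) ≠ 0)]
    ring
  simp only [corner]
  rw [h.1, h2]
  rcases h.2 i with h3 | h3 <;> rw [h3] <;> push_cast <;> constructor <;> nlinarith

lemma IsChildIdx.ssubset {d : ℕ} (hd : 0 < d) {q c : DIdx d} (h : IsChildIdx d q c) :
    dCube d c ⊂ dCube d q := by
  refine ⟨h.subset, fun h' => ?_⟩
  have := gen_le_of_subset hd h'
  rw [h.1] at this
  omega

lemma IsChildIdx.parent_subset {d : ℕ} (hd : 0 < d) {q c r : DIdx d} (h : IsChildIdx d q c)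
    (hr : dCube d c ⊂ dCube d r) : dCube d q ⊆ dCube d r := by
  have h1 := gen_le_of_subset hd hr.1
  have h2 : c.1 ≠ r.1 := fun he =>
    hr.2 (dCube_index_eq he (corner_mem c) (hr.1 (corner_mem c)) ▸ Subset.rfl)
  refine dCube_subset ?_ (h.subset (corner_mem c)) (hr.1 (corner_mem c))
  have := h.1
  omega

lemma IsChildIdx.unique {d : ℕ} {q q' c : DIdx d} (h : IsChildIdx d q c)
    (h' : IsChildIdx d q' c) : q = q' := by
  refine Prod.ext (by have := h.1; have := h'.1; omega) (funext fun i => ?_)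
  have := h.2 i
  have := h'.2 i
  omega

/-! ### The bilinear form on the dyadic grid -/

section Dyadic

variable {d : ℕ} {σ w : Measure (Fin d → ℝ)} {lam : DIdx d → ℝ} {plusI minusI : DIdx d → DIdx d}
  {p : ℝ}

lemma holderConjugate_div (hp : 1 < p) : p.HolderConjugate (p / (p - 1)) :=
  Real.HolderConjugate.conjExponent hp

lemma one_div_conj (hp : 1 < p) : 1 / (p / (p - 1)) = 1 - 1 / p := by
  have h1 : p ≠ 0 := by linarith
  have h2 : p - 1 ≠ 0 := by linarith
  field_simp

lemma finset_sum_le_loc (r : DIdx d) (S : Finset (DIdx d)) (f g : (Fin d → ℝ) → ℝ≥0∞)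
    [DecidablePred fun q => dCube d q ⊆ dCube d r] :
    ∑ q ∈ S.filter (fun q => dCube d q ⊆ dCube d r),
      ENNReal.ofReal (lam q) * (∫⁻ x in dCube d (plusI q), f x ∂σ) *
        (∫⁻ x in dCube d (minusI q), g x ∂w) ≤ posFormLoc d σ w lam plusI minusI r f g := by
  refine le_trans (le_of_eq ?_)
    (ENNReal.sum_le_tsum (S.filter fun q => dCube d q ⊆ dCube d r))
  refine Finset.sum_congr rfl fun q hq => ?_
  rw [Set.indicator_of_mem]
  exact (Finset.mem_filter.1 hq).2

open Classical in
/-- The upper bound for functions of finite norm. -/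
lemma posForm_le_of_finite (hd : 0 < d) [IsLocallyFiniteMeasure σ] [IsLocallyFiniteMeasure w]
    (hp : 1 < p) (hplus : ∀ q, IsChildIdx d q (plusI q)) (hminus : ∀ q, IsChildIdx d q (minusI q))
    {U T T' : ℝ≥0∞}
    (hU : ∀ q, ENNReal.ofReal (lam q) * σ (dCube d (plusI q)) ^ (1 - 1 / p) *
      w (dCube d (minusI q)) ^ (1 / p) ≤ U)
    (hT : ∀ (r : DIdx d) (g : (Fin d → ℝ) → ℝ≥0∞), Measurable g →
      posFormLoc d σ w lam plusI minusI r (fun _ => 1) g ≤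
        T * σ (dCube d r) ^ (1 / p) * lpNorm d w (p / (p - 1)) g)
    (hT' : ∀ (r : DIdx d) (f : (Fin d → ℝ) → ℝ≥0∞), Measurable f →
      posFormLoc d σ w lam plusI minusI r f (fun _ => 1) ≤
        T' * w (dCube d r) ^ (1 - 1 / p) * lpNorm d σ p f)
    {f g : (Fin d → ℝ) → ℝ≥0∞} (hf : Measurable f) (hg : Measurable g)
    (hF : ∫⁻ x, f x ^ p ∂σ ≠ ⊤) (hG : ∫⁻ x, g x ^ (p / (p - 1)) ∂w ≠ ⊤) :
    posForm d σ w lam plusI minusI f g ≤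
      (mainC p (p / (p - 1)) * (U + T + T')) * lpNorm d σ p f * lpNorm d w (p / (p - 1)) g := by
  rw [posForm, ENNReal.tsum_eq_iSup_sum]
  refine iSup_le fun S => ?_
  set 𝒬 : Finset (Set (Fin d → ℝ)) :=
    S.image (fun q => dCube d (plusI q)) ∪ S.image (fun q => dCube d (minusI q)) with h𝒬
  have hcube : ∀ R ∈ 𝒬, ∃ r, R = dCube d r := by
    intro R hR
    rcases Finset.mem_union.1 hR with h | h
    · obtain ⟨q, -, rfl⟩ := Finset.mem_image.1 h
      exact ⟨_, rfl⟩
    · obtain ⟨q, -, rfl⟩ := Finset.mem_image.1 h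
      exact ⟨_, rfl⟩
  refine finite_bound (𝒬 := 𝒬) hf hg (holderConjugate_div hp) hF hG ?_ ?_ ?_ ?_ ?_ S
    (fun q => dCube d (plusI q)) (fun q => dCube d (minusI q)) (dCube d)
    (fun q => ENNReal.ofReal (lam q)) ?_ ?_ ?_ ?_ ?_ ?_ ?_ ?_ U T T' ?_ ?_ ?_
  · intro R hR R' hR' h
    obtain ⟨r, rfl⟩ := hcube R hR
    obtain ⟨r', rfl⟩ := hcube R' hR'
    exact dCube_nested r r' h
  · intro R hR
    obtain ⟨r, rfl⟩ := hcube R hR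
    exact measurableSet_dCube r
  · intro R hR
    obtain ⟨r, rfl⟩ := hcube R hR
    exact ⟨_, corner_mem r⟩
  · intro R hR
    obtain ⟨r, rfl⟩ := hcube R hR
    exact dCube_measure_ne_top σ r
  · intro R hR
    obtain ⟨r, rfl⟩ := hcube R hR
    exact dCube_measure_ne_top w r
  · intro q hq
    exact Finset.mem_union_left _ (Finset.mem_image_of_mem _ hq)
  · intro q hq
    exact Finset.mem_union_right _ (Finset.mem_image_of_mem _ hq)
  · intro q _ q' _ h
    have h' : plusI q = plusI q' := dCube_injective hd h
    exact (hplus q).unique (h' ▸ hplus q')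
  · intro q _ q' _ h
    have h' : minusI q = minusI q' := dCube_injective hd h
    exact (hminus q).unique (h' ▸ hminus q')
  · exact fun q _ => (hplus q).ssubset hd
  · exact fun q _ => (hminus q).ssubset hd
  · intro q _ R hR h
    obtain ⟨r, rfl⟩ := hcube R hR
    exact (hplus q).parent_subset hd h
  · intro q _ R hR h
    obtain ⟨r, rfl⟩ := hcube R hR
    exact (hminus q).parent_subset hd h
  · intro q _
    rw [one_div_conj hp]
    exact hU q
  · intro P hP h hh
    obtain ⟨r, rfl⟩ := hcube P hP
    refine le_trans (le_trans (le_of_eq ?_) (finset_sum_le_loc r S (fun _ => 1) h)) (hT r h hh)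
    refine Finset.sum_congr rfl fun q _ => ?_
    simp
  · intro P hP h hh
    obtain ⟨r, rfl⟩ := hcube P hP
    rw [one_div_conj hp]
    refine le_trans (le_trans (le_of_eq ?_) (finset_sum_le_loc r S h (fun _ => 1))) (hT' r h hh)
    refine Finset.sum_congr rfl fun q _ => ?_
    simp only [lintegral_const, MeasurableSet.univ, Measure.restrict_apply, Set.univ_inter, one_mul]
    ring

lemma setLIntegral_eq_zero_of_lpNorm {μ : Measure (Fin d → ℝ)} (hp : 0 < p)
    {f : (Fin d → ℝ) → ℝ≥0∞} (hf : Measurable f) (h : lpNorm d μ p f = 0)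
    (s : Set (Fin d → ℝ)) : ∫⁻ x in s, f x ∂μ = 0 := by
  have h0 : ∫⁻ x, f x ^ p ∂μ = 0 := by
    rwa [_root_.lpNorm, ENNReal.rpow_eq_zero_iff_of_pos (one_div_pos.2 hp)] at h
  have h1 : f =ᵐ[μ] 0 := by
    rw [lintegral_eq_zero_iff (hf.pow_const p)] at h0
    filter_upwards [h0] with x hx
    simpa [ENNReal.rpow_eq_zero_iff_of_pos hp] using hx
  refine le_antisymm ((setLIntegral_le_lintegral s f).trans_eq ?_) (zero_le)
  rw [lintegral_congr_ae h1]
  simp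

/-- The upper bound. When a norm is infinite, the right-hand side can only fail to be `⊤` if
`𝒰 = 0`, or the other norm vanishes; in both cases the form vanishes term by term. -/
lemma posForm_le (hd : 0 < d) [IsLocallyFiniteMeasure σ] [IsLocallyFiniteMeasure w]
    (hp : 1 < p) (hplus : ∀ q, IsChildIdx d q (plusI q)) (hminus : ∀ q, IsChildIdx d q (minusI q))
    {U T T' : ℝ≥0∞}
    (hU : ∀ q, ENNReal.ofReal (lam q) * σ (dCube d (plusI q)) ^ (1 - 1 / p) *
      w (dCube d (minusI q)) ^ (1 / p) ≤ U)
    (hT : ∀ (r : DIdx d) (g : (Fin d → ℝ) → ℝ≥0∞), Measurable g →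
      posFormLoc d σ w lam plusI minusI r (fun _ => 1) g ≤
        T * σ (dCube d r) ^ (1 / p) * lpNorm d w (p / (p - 1)) g)
    (hT' : ∀ (r : DIdx d) (f : (Fin d → ℝ) → ℝ≥0∞), Measurable f →
      posFormLoc d σ w lam plusI minusI r f (fun _ => 1) ≤
        T' * w (dCube d r) ^ (1 - 1 / p) * lpNorm d σ p f)
    {f g : (Fin d → ℝ) → ℝ≥0∞} (hf : Measurable f) (hg : Measurable g)
    {C : ℝ≥0∞} (hC0 : C ≠ 0) (hC : mainC p (p / (p - 1)) ≤ C) :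
    posForm d σ w lam plusI minusI f g ≤
      (C * (U + T + T')) * lpNorm d σ p f * lpNorm d w (p / (p - 1)) g := by
  have hpp := holderConjugate_div hp
  have hzero : (∀ q, ENNReal.ofReal (lam q) * (∫⁻ x in dCube d (plusI q), f x ∂σ) *
      (∫⁻ x in dCube d (minusI q), g x ∂w) = 0) →
      posForm d σ w lam plusI minusI f g ≤
        (C * (U + T + T')) * lpNorm d σ p f * lpNorm d w (p / (p - 1)) g := by
    intro h
    rw [posForm, ENNReal.tsum_eq_zero.2 h]
    exact zero_le
  by_cases hf0 : lpNorm d σ p f = 0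
  · exact hzero fun q => by
      rw [setLIntegral_eq_zero_of_lpNorm hpp.pos hf hf0]; simp
  by_cases hg0 : lpNorm d w (p / (p - 1)) g = 0
  · exact hzero fun q => by
      rw [setLIntegral_eq_zero_of_lpNorm hpp.symm.pos hg hg0]; simp
  by_cases hUTT : U + T + T' = 0
  · have hU0 : U = 0 := by
      simp only [add_eq_zero] at hUTT
      exact hUTT.1.1
    have e1 : 0 < 1 - 1 / p := by
      rw [← one_div_conj hp]
      exact one_div_pos.2 hpp.symm.pos
    have e2 : 0 < 1 / p := one_div_pos.2 hpp.pos
    refine hzero fun q => ?_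
    have := hU q
    rw [hU0, nonpos_iff_eq_zero, mul_eq_zero, mul_eq_zero, ENNReal.rpow_eq_zero_iff_of_pos e1,
      ENNReal.rpow_eq_zero_iff_of_pos e2] at this
    rcases this with (h | h) | h
    · rw [h]; simp
    · rw [Measure.restrict_eq_zero.2 h]; simp
    · rw [Measure.restrict_eq_zero.2 h]; simp
  have hCU : C * (U + T + T') ≠ 0 := mul_ne_zero hC0 hUTT
  by_cases hf1 : lpNorm d σ p f = ⊤
  · rw [hf1, ENNReal.mul_top hCU, ENNReal.top_mul hg0]
    exact le_top
  by_cases hg1 : lpNorm d w (p / (p - 1)) g = ⊤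
  · rw [hg1, ENNReal.mul_top (mul_ne_zero hCU hf0)]
    exact le_top
  have hF : ∫⁻ x, f x ^ p ∂σ ≠ ⊤ := fun h => hf1 (by
    rw [_root_.lpNorm, h, ENNReal.top_rpow_of_pos (one_div_pos.2 hpp.pos)])
  have hG : ∫⁻ x, g x ^ (p / (p - 1)) ∂w ≠ ⊤ := fun h => hg1 (by
    rw [_root_.lpNorm, h, ENNReal.top_rpow_of_pos (one_div_pos.2 hpp.symm.pos)])
  refine (posForm_le_of_finite hd hp hplus hminus hU hT hT' hf hg hF hG).trans ?_
  gcongr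

lemma lpNorm_indicator (μ : Measure (Fin d → ℝ)) {s : ℝ} (hs : 0 < s) (r : DIdx d) :
    lpNorm d μ s ((dCube d r).indicator fun _ => 1) = μ (dCube d r) ^ (1 / s) := by
  have : ∀ x, (dCube d r).indicator (fun _ => (1 : ℝ≥0∞)) x ^ s =
      (dCube d r).indicator (fun _ => 1) x := by
    intro x
    by_cases hx : x ∈ dCube d r
    · simp [hx]
    · simp [hx, hs]
  rw [_root_.lpNorm, lintegral_congr this, lintegral_indicator (measurableSet_dCube r)]
  simp

lemma setLIntegral_indicator_of_subset (μ : Measure (Fin d → ℝ)) {c r : DIdx d}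
    (h : dCube d c ⊆ dCube d r) :
    ∫⁻ x in dCube d c, (dCube d r).indicator (fun _ => 1) x ∂μ = ∫⁻ _ in dCube d c, 1 ∂μ :=
  setLIntegral_congr_fun (measurableSet_dCube c) fun x hx => by simp [h hx]

lemma measurable_indicator_dCube (r : DIdx d) :
    Measurable ((dCube d r).indicator fun _ => (1 : ℝ≥0∞)) :=
  measurable_const.indicator (measurableSet_dCube r)

lemma test_left (hp : 1 < p) (hplus : ∀ q, IsChildIdx d q (plusI q)) {N : ℝ≥0∞}
    (hN : ∀ f g : (Fin d → ℝ) → ℝ≥0∞, Measurable f → Measurable g →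
      posForm d σ w lam plusI minusI f g ≤ N * lpNorm d σ p f * lpNorm d w (p / (p - 1)) g)
    (r : DIdx d) (g : (Fin d → ℝ) → ℝ≥0∞) (hg : Measurable g) :
    posFormLoc d σ w lam plusI minusI r (fun _ => 1) g ≤
      N * σ (dCube d r) ^ (1 / p) * lpNorm d w (p / (p - 1)) g := by
  rw [← lpNorm_indicator σ (by linarith : 0 < p) r]
  refine le_trans (ENNReal.tsum_le_tsum fun q => ?_) (hN _ g (measurable_indicator_dCube r) hg)
  refine Set.indicator_apply_le' (fun hq => ?_) fun _ => zero_le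
  rw [setLIntegral_indicator_of_subset σ ((hplus q).subset.trans hq)]

lemma test_right (hp : 1 < p) (hminus : ∀ q, IsChildIdx d q (minusI q)) {N : ℝ≥0∞}
    (hN : ∀ f g : (Fin d → ℝ) → ℝ≥0∞, Measurable f → Measurable g →
      posForm d σ w lam plusI minusI f g ≤ N * lpNorm d σ p f * lpNorm d w (p / (p - 1)) g)
    (r : DIdx d) (f : (Fin d → ℝ) → ℝ≥0∞) (hf : Measurable f) :
    posFormLoc d σ w lam plusI minusI r f (fun _ => 1) ≤
      N * w (dCube d r) ^ (1 - 1 / p) * lpNorm d σ p f := by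
  rw [← one_div_conj hp, ← lpNorm_indicator w (holderConjugate_div hp).symm.pos r, mul_right_comm]
  refine le_trans (ENNReal.tsum_le_tsum fun q => ?_) (hN f _ hf (measurable_indicator_dCube r))
  refine Set.indicator_apply_le' (fun hq => ?_) fun _ => zero_le
  rw [setLIntegral_indicator_of_subset w ((hminus q).subset.trans hq)]

/-- Testing the form on `f = 1_{Q₊}`, `g = 1_{Q₋}` and keeping only the term of `Q`. -/
lemma test_pair [IsLocallyFiniteMeasure σ] [IsLocallyFiniteMeasure w] (hp : 1 < p) {N : ℝ≥0∞}
    (hN : ∀ f g : (Fin d → ℝ) → ℝ≥0∞, Measurable f → Measurable g →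
      posForm d σ w lam plusI minusI f g ≤ N * lpNorm d σ p f * lpNorm d w (p / (p - 1)) g)
    (q : DIdx d) :
    ENNReal.ofReal (lam q) * σ (dCube d (plusI q)) ^ (1 - 1 / p) *
      w (dCube d (minusI q)) ^ (1 / p) ≤ N := by
  have hpp := holderConjugate_div hp
  have e2 : 0 < 1 / p := one_div_pos.2 hpp.pos
  have e1 : 0 < 1 - 1 / p := by
    rw [← one_div_conj hp]
    exact one_div_pos.2 hpp.symm.pos
  have h1 := (ENNReal.le_tsum q).trans (hN _ _ (measurable_indicator_dCube (plusI q))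
    (measurable_indicator_dCube (minusI q)))
  rw [setLIntegral_indicator_of_subset σ Subset.rfl, setLIntegral_indicator_of_subset w Subset.rfl,
    lpNorm_indicator σ hpp.pos, lpNorm_indicator w hpp.symm.pos, one_div_conj hp] at h1
  simp only [lintegral_const, MeasurableSet.univ, Measure.restrict_apply, Set.univ_inter,
    one_mul] at h1
  have hs := dCube_measure_ne_top σ (plusI q)
  have ht := dCube_measure_ne_top w (minusI q)
  generalize σ (dCube d (plusI q)) = s at h1 hs ⊢
  generalize w (dCube d (minusI q)) = t at h1 ht ⊢
  generalize ENNReal.ofReal (lam q) = l at h1 ⊢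
  by_cases hs0 : s = 0
  · rw [hs0, ENNReal.zero_rpow_of_pos e1]; simp
  by_cases ht0 : t = 0
  · rw [ht0, ENNReal.zero_rpow_of_pos e2]; simp
  have es : s = s ^ (1 - 1 / p) * s ^ (1 / p) := by
    rw [← ENNReal.rpow_add _ _ hs0 hs, sub_add_cancel, ENNReal.rpow_one]
  have et : t = t ^ (1 / p) * t ^ (1 - 1 / p) := by
    rw [← ENNReal.rpow_add _ _ ht0 ht, add_sub_cancel, ENNReal.rpow_one]
  have hc0 : s ^ (1 / p) * t ^ (1 - 1 / p) ≠ 0 :=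
    mul_ne_zero (by simp [hs0, hs]) (by simp [ht0, ht])
  have hct : s ^ (1 / p) * t ^ (1 - 1 / p) ≠ ⊤ :=
    ENNReal.mul_ne_top (ENNReal.rpow_ne_top_of_nonneg e2.le hs)
      (ENNReal.rpow_ne_top_of_nonneg e1.le ht)
  rw [← ENNReal.mul_le_mul_iff_left hc0 hct]
  calc l * s ^ (1 - 1 / p) * t ^ (1 / p) * (s ^ (1 / p) * t ^ (1 - 1 / p))
      = l * (s ^ (1 - 1 / p) * s ^ (1 / p)) * (t ^ (1 / p) * t ^ (1 - 1 / p)) := by ring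
    _ = l * s * t := by rw [← es, ← et]
    _ ≤ _ := h1
    _ = _ := by ring

end Dyadic

theorem statement19 (p : ℝ) (hp : 1 < p) :
    ∃ C : ℝ≥0∞, 0 < C ∧ C ≠ ⊤ ∧
      ∀ (d : ℕ), 0 < d →
      ∀ (σ w : Measure (Fin d → ℝ))
        [IsLocallyFiniteMeasure σ] [IsLocallyFiniteMeasure w]
        (lam : DIdx d → ℝ), (∀ q, 0 ≤ lam q) →
      ∀ plusI minusI : DIdx d → DIdx d,
        (∀ q, IsChildIdx d q (plusI q)) →
        (∀ q, IsChildIdx d q (minusI q)) →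
        (∀ q, plusI q ≠ minusI q) →
        -- `‖Λ‖ < ∞` iff `𝒰, 𝒯, 𝒯*` are all finite:
        (((∃ N : ℝ≥0∞, N ≠ ⊤ ∧ ∀ f g : (Fin d → ℝ) → ℝ≥0∞, Measurable f → Measurable g →
            posForm d σ w lam plusI minusI f g ≤
              N * lpNorm d σ p f * lpNorm d w (p / (p - 1)) g) ↔
          (∃ U T T' : ℝ≥0∞, U ≠ ⊤ ∧ T ≠ ⊤ ∧ T' ≠ ⊤ ∧
            (∀ q, ENNReal.ofReal (lam q) * σ (dCube d (plusI q)) ^ (1 - 1 / p) *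
              w (dCube d (minusI q)) ^ (1 / p) ≤ U) ∧
            (∀ (r : DIdx d) (g : (Fin d → ℝ) → ℝ≥0∞), Measurable g →
              posFormLoc d σ w lam plusI minusI r (fun _ => 1) g ≤
                T * σ (dCube d r) ^ (1 / p) * lpNorm d w (p / (p - 1)) g) ∧
            (∀ (r : DIdx d) (f : (Fin d → ℝ) → ℝ≥0∞), Measurable f →
              posFormLoc d σ w lam plusI minusI r f (fun _ => 1) ≤
                T' * w (dCube d r) ^ (1 - 1 / p) * lpNorm d σ p f))) ∧
        -- `𝒰 + 𝒯 + 𝒯* ≲_p ‖Λ‖`: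
        (∀ N : ℝ≥0∞,
          (∀ f g : (Fin d → ℝ) → ℝ≥0∞, Measurable f → Measurable g →
            posForm d σ w lam plusI minusI f g ≤
              N * lpNorm d σ p f * lpNorm d w (p / (p - 1)) g) →
          ∃ U T T' : ℝ≥0∞,
            (∀ q, ENNReal.ofReal (lam q) * σ (dCube d (plusI q)) ^ (1 - 1 / p) *
              w (dCube d (minusI q)) ^ (1 / p) ≤ U) ∧
            (∀ (r : DIdx d) (g : (Fin d → ℝ) → ℝ≥0∞), Measurable g →
              posFormLoc d σ w lam plusI minusI r (fun _ => 1) g ≤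
                T * σ (dCube d r) ^ (1 / p) * lpNorm d w (p / (p - 1)) g) ∧
            (∀ (r : DIdx d) (f : (Fin d → ℝ) → ℝ≥0∞), Measurable f →
              posFormLoc d σ w lam plusI minusI r f (fun _ => 1) ≤
                T' * w (dCube d r) ^ (1 - 1 / p) * lpNorm d σ p f) ∧
            U + T + T' ≤ C * N) ∧
        -- `‖Λ‖ ≲_p 𝒰 + 𝒯 + 𝒯*`:
        (∀ U T T' : ℝ≥0∞,
          (∀ q, ENNReal.ofReal (lam q) * σ (dCube d (plusI q)) ^ (1 - 1 / p) *
            w (dCube d (minusI q)) ^ (1 / p) ≤ U) →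
          (∀ (r : DIdx d) (g : (Fin d → ℝ) → ℝ≥0∞), Measurable g →
            posFormLoc d σ w lam plusI minusI r (fun _ => 1) g ≤
              T * σ (dCube d r) ^ (1 / p) * lpNorm d w (p / (p - 1)) g) →
          (∀ (r : DIdx d) (f : (Fin d → ℝ) → ℝ≥0∞), Measurable f →
            posFormLoc d σ w lam plusI minusI r f (fun _ => 1) ≤
              T' * w (dCube d r) ^ (1 - 1 / p) * lpNorm d σ p f) →
          ∀ f g : (Fin d → ℝ) → ℝ≥0∞, Measurable f → Measurable g →
            posForm d σ w lam plusI minusI f g ≤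
              (C * (U + T + T')) * lpNorm d σ p f * lpNorm d w (p / (p - 1)) g)) := by
  have hpp := holderConjugate_div hp
  refine ⟨mainC p (p / (p - 1)) + 3, by positivity,
    ENNReal.add_ne_top.2 ⟨mainC_ne_top hpp.lt hpp.symm.lt, by simp⟩, ?_⟩
  intro d hd σ w _ _ lam _ plusI minusI hplus hminus _
  have hC0 : mainC p (p / (p - 1)) + 3 ≠ 0 := by simp
  have hCt : mainC p (p / (p - 1)) + 3 ≠ ⊤ :=
    ENNReal.add_ne_top.2 ⟨mainC_ne_top hpp.lt hpp.symm.lt, by simp⟩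
  refine ⟨⟨?_, ?_⟩, ?_, ?_⟩
  · rintro ⟨N, hNt, hN⟩
    exact ⟨N, N, N, hNt, hNt, hNt, test_pair hp hN, test_left hp hplus hN, test_right hp hminus hN⟩
  · rintro ⟨U, T, T', hUt, hTt, hTt', hU, hT, hT'⟩
    exact ⟨(mainC p (p / (p - 1)) + 3) * (U + T + T'),
      ENNReal.mul_ne_top hCt (ENNReal.add_ne_top.2 ⟨ENNReal.add_ne_top.2 ⟨hUt, hTt⟩, hTt'⟩),
      fun f g hf hg => posForm_le hd hp hplus hminus hU hT hT' hf hg hC0 le_self_add⟩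
  · intro N hN
    refine ⟨N, N, N, test_pair hp hN, test_left hp hplus hN, test_right hp hminus hN, ?_⟩
    calc N + N + N = 3 * N := by ring
      _ ≤ _ := by gcongr; exact le_add_self
  · intro U T T' hU hT hT' f g hf hg
    exact posForm_le hd hp hplus hminus hU hT hT' hf hg hC0 le_self_add
end
end
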